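/- Suppose that for every measure ν ∈ 𝒫_V(ℝ^d) there exist numbers δ ∈ (0,1), C > 0, Λ > 0 and, for every ball U ⊂ ℝ^d, a positive function α ↦ N(α,U) (depending also on ν), such that for all α > 0 and all μ ∈ ℳ_α(V) satisfying ∫h dμ = ∫h dν for every h ∈ ℋ, one has L_μV(x) ≤ (1−δ)C + Λ(δα − V(x)) for all x and sup_{x∈U}|b(x,μ)| ≤ N(α,U). Suppose also that for all α > 0 and all μ_n, μ ∈ ℳ_α(V), convergence ‖μ_n − μ‖_W → 0 implies that b(·,μ_n) converges to b(·,μ) uniformly on every ball. Then for every ν ∈ 𝒫_V(ℝ^d) there exists a solution μ ∈ 𝒫_V(ℝ^d) of the nonlinear stationary equation L_μ^*μ = 0 such that ∫h dμ = ∫h dν for every h ∈ ℋ. -/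

import Mathlib

open MeasureTheory Real Set Filter Metric
open scoped Topology RealInnerProductSpace NNReal ENNReal

noncomputable section

abbrev Ed (d : ℕ) : Type := EuclideanSpace ℝ (Fin d)

variable {d : ℕ}

/-- Second-order partial derivative `∂_i ∂_j φ (x)`. -/
def hess2 (φ : Ed d → ℝ) (x : Ed d) (i j : Fin d) : ℝ :=
  iteratedFDeriv ℝ 2 φ x ![EuclideanSpace.single i 1, EuclideanSpace.single j 1]

/-- The Kolmogorov operator `L φ = trace (A D²φ) + ⟨B, ∇φ⟩`. -/
def Lop (A : Ed d → Matrix (Fin d) (Fin d) ℝ) (B : Ed d → Ed d)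
    (φ : Ed d → ℝ) (x : Ed d) : ℝ :=
  (∑ i, ∑ j, A x i j * hess2 φ x i j) + ⟪B x, gradient φ x⟫

/-- Membership in `𝒫_V(ℝ^d)`. -/
def memPV (V : Ed d → ℝ) (μ : Measure (Ed d)) : Prop :=
  IsProbabilityMeasure μ ∧ Integrable V μ

/-- `C_0^∞` test functions. -/
def IsTestFun (φ : Ed d → ℝ) : Prop :=
  ContDiff ℝ (⊤ : ℕ∞) φ ∧ HasCompactSupport φ

/-- Weighted total-variation distance `‖W·(μ - ν)‖_{TV}` expressed by duality. -/
def wDist (W : Ed d → ℝ) (μ ν : Measure (Ed d)) : ℝ :=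
  ⨆ f : {f : Ed d → ℝ // Measurable f ∧ ∀ x, |f x| ≤ W x},
    (∫ x, f.1 x ∂μ - ∫ x, f.1 x ∂ν)

/-- Growth bound defining the class of admissible `ψ`. -/
def GrowthW (W ψ : Ed d → ℝ) : Prop :=
  ∃ M : ℝ, ∀ x, |ψ x| + ‖gradient ψ x‖ + ‖iteratedFDeriv ℝ 2 ψ x‖ ≤ M * W x

/-- Stationary solution of `L_μ^*μ = 0`. -/
def IsStationarySol (A : Ed d → Matrix (Fin d) (Fin d) ℝ) (B : Ed d → Ed d)
    (μ : Measure (Ed d)) : Prop :=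
  ∀ φ : Ed d → ℝ, IsTestFun φ → ∫ x, Lop A B φ x ∂μ = 0

/-- The class `I_0^W`. -/
def I0W (A : Ed d → Matrix (Fin d) (Fin d) ℝ)
    (b : Ed d → Measure (Ed d) → Ed d) (V W : Ed d → ℝ) (ψ : Ed d → ℝ) : Prop :=
  ContDiff ℝ 2 ψ ∧ GrowthW W ψ ∧
    ∀ μ : Measure (Ed d), memPV V μ →
      ∫ x, Lop A (fun y => b y μ) ψ x ∂μ = 0

/-- The class `ℋ` of functions `h` such that `L_σψ = C₁(σ)h + C₂(σ)` with
`C₁(σ) ≠ 0` for some `ψ ∈ I_0^W` and all `σ ∈ 𝒫_V`. -/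
def memH (A : Ed d → Matrix (Fin d) (Fin d) ℝ)
    (b : Ed d → Measure (Ed d) → Ed d) (V W : Ed d → ℝ) (h : Ed d → ℝ) : Prop :=
  Continuous h ∧ (∃ M : ℝ, ∀ x, |h x| ≤ M * W x) ∧
    ∃ ψ : Ed d → ℝ, I0W A b V W ψ ∧
      ∀ σ : Measure (Ed d), memPV V σ →
        ∃ C₁ C₂ : ℝ, C₁ ≠ 0 ∧
          ∀ x, Lop A (fun y => b y σ) ψ x = C₁ * h x + C₂

/-- `μ|_ℋ = ν|_ℋ`. -/
def AgreeH (A : Ed d → Matrix (Fin d) (Fin d) ℝ)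
    (b : Ed d → Measure (Ed d) → Ed d) (V W : Ed d → ℝ)
    (μ ν : Measure (Ed d)) : Prop :=
  ∀ h, memH A b V W h → ∫ x, h x ∂μ = ∫ x, h x ∂ν

section Brouwer

/-- Polynomials in `t` of degree at most `n` are recovered at `1` from finitely many values at
arbitrarily small positive parameters. -/
theorem exists_interpolation_weights (n : ℕ) {t₀ : ℝ} (ht₀ : 0 < t₀) :
    ∃ (t w : Fin (n + 1) → ℝ), (∀ i, 0 < t i ∧ t i ≤ t₀) ∧ ∑ i, w i = 1 ∧
      ∀ p : Polynomial ℝ, p.natDegree ≤ n → p.eval 1 = ∑ i, w i * p.eval (t i) := by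
  let t : Fin (n + 1) → ℝ := fun i => t₀ / (i + 1)
  have htinj : Set.InjOn t (Finset.univ : Finset (Fin (n + 1))) := by
    intro i _ j _ hij
    simp only [t] at hij
    have hi : (0 : ℝ) < (i : ℝ) + 1 := by positivity
    have hj : (0 : ℝ) < (j : ℝ) + 1 := by positivity
    rw [div_eq_div_iff hi.ne' hj.ne'] at hij
    have := mul_left_cancel₀ ht₀.ne' hij
    have h2 : (i : ℝ) = j := by linarith
    exact Fin.ext (by exact_mod_cast h2)
  let w : Fin (n + 1) → ℝ := fun i => (Lagrange.basis Finset.univ t i).eval 1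
  have key : ∀ p : Polynomial ℝ, p.natDegree ≤ n → p.eval 1 = ∑ i, w i * p.eval (t i) := by
    intro p hp
    have hdeg : p.degree < (Finset.univ : Finset (Fin (n + 1))).card := by
      rw [Finset.card_univ, Fintype.card_fin]
      exact lt_of_le_of_lt Polynomial.degree_le_natDegree (by exact_mod_cast Nat.lt_succ_of_le hp)
    have h := Lagrange.eq_interpolate htinj hdeg
    conv_lhs => rw [h, Lagrange.interpolate_apply]
    rw [Polynomial.eval_finsetSum]
    refine Finset.sum_congr rfl fun i _ => ?_
    simp [w, mul_comm]
  refine ⟨t, w, fun i => ⟨by positivity, ?_⟩, ?_, key⟩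
  · exact div_le_self ht₀.le (by simp)
  · have := key 1 (by simp)
    simpa using this.symm

variable {E : Type*} [NormedAddCommGroup E] [InnerProductSpace ℝ E] [FiniteDimensional ℝ E]

theorem exists_polynomial_det_one_add_smul (M : E →L[ℝ] E) :
    ∃ p : Polynomial ℝ, p.natDegree ≤ Module.finrank ℝ E ∧
      ∀ t : ℝ, p.eval t = (ContinuousLinearMap.id ℝ E + t • M).det := by
  let v := Module.finBasis ℝ E
  let N := LinearMap.toMatrix v v (M : E →ₗ[ℝ] E)
  refine ⟨((Polynomial.X : Polynomial ℝ) • N.map Polynomial.C +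
    (1 : Matrix (Fin (Module.finrank ℝ E)) (Fin (Module.finrank ℝ E)) ℝ).map Polynomial.C).det,
    ?_, ?_⟩
  · simpa using Polynomial.natDegree_det_X_add_C_le N 1
  · intro t
    have h : (ContinuousLinearMap.id ℝ E + t • M).det
        = (LinearMap.toMatrix v v ((ContinuousLinearMap.id ℝ E + t • M : E →L[ℝ] E) :
            E →ₗ[ℝ] E)).det := by
      rw [LinearMap.det_toMatrix]
    rw [h, ← Polynomial.coe_evalRingHom, RingHom.map_det]
    congr 1
    have : ((ContinuousLinearMap.id ℝ E + t • M : E →L[ℝ] E) : E →ₗ[ℝ] E)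
        = LinearMap.id + t • (M : E →ₗ[ℝ] E) := by ext; simp
    have h2 : LinearMap.toMatrix v v (LinearMap.id + t • (M : E →ₗ[ℝ] E)) = 1 + t • N := by
      rw [map_add, map_smul, LinearMap.toMatrix_id]
    rw [this, h2]
    ext i j
    simp [N, Matrix.map_apply, Matrix.one_apply, add_comm]
    split_ifs <;> simp [mul_comm]

theorem det_id_add_pos_of_norm_lt_one (M : E →L[ℝ] E) (hM : ‖M‖ < 1) :
    0 < (ContinuousLinearMap.id ℝ E + M).det := by
  have hne : ∀ s ∈ Icc (0 : ℝ) 1, (ContinuousLinearMap.id ℝ E + s • M).det ≠ 0 := by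
    intro s hs h0
    have hb := LinearMap.bot_lt_ker_of_det_eq_zero (f := ((ContinuousLinearMap.id ℝ E + s • M :
      E →L[ℝ] E) : E →ₗ[ℝ] E)) h0
    obtain ⟨x, hx, hx0⟩ := (Submodule.ne_bot_iff _).1 hb.ne'
    have hx' : x + s • M x = 0 := by simpa using hx
    have : ‖x‖ ≤ ‖M‖ * ‖x‖ := by
      have h1 : x = -(s • M x) := eq_neg_of_add_eq_zero_left hx'
      calc ‖x‖ = ‖s • M x‖ := by conv_lhs => rw [h1, norm_neg]
        _ = s * ‖M x‖ := by rw [norm_smul, Real.norm_of_nonneg hs.1]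
        _ ≤ 1 * ‖M x‖ := by gcongr; exact hs.2
        _ ≤ ‖M‖ * ‖x‖ := by rw [one_mul]; exact M.le_opNorm x
    have hxp : 0 < ‖x‖ := norm_pos_iff.2 hx0
    nlinarith
  obtain ⟨p, -, hp⟩ := exists_polynomial_det_one_add_smul M
  by_contra hcon
  have h1 : p.eval 1 ≤ 0 := by rw [hp]; simpa using hcon
  have h0 : p.eval 0 = 1 := by
    rw [hp]; simp [ContinuousLinearMap.det]
  have := intermediate_value_Icc' (zero_le_one' ℝ) (f := fun t => p.eval t)
    p.continuous.continuousOn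
  have h00 : (0 : ℝ) ∈ Icc (p.eval 1) (p.eval 0) := ⟨h1, by rw [h0]; norm_num⟩
  obtain ⟨s, hs, hs0⟩ := this h00
  exact hne s hs (by rw [← hp]; exact hs0)

variable [MeasurableSpace E] [BorelSpace E]

/-- Small perturbations of the identity that fix the unit sphere map the open unit ball onto
itself, so that the determinant of their derivative integrates to the volume of the ball. -/
theorem setIntegral_det_id_add_smul_fderiv {g : E → E} {C : ℝ≥0} (hC : 0 < C)
    (hg : ∀ x ∈ closedBall (0 : E) 1, ContDiffAt ℝ 1 g x)
    (hbound : ∀ x ∈ closedBall (0 : E) 1, ‖fderiv ℝ g x‖₊ ≤ C)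
    (hball : ∀ x ∈ closedBall (0 : E) 1, ‖x + g x‖ ≤ 1)
    (hsphere : ∀ x : E, ‖x‖ = 1 → g x = 0) {t : ℝ} (ht : 0 < t) (ht' : t ≤ (2 * (C + 1) : ℝ)⁻¹) :
    ∫ x in ball (0 : E) 1, (ContinuousLinearMap.id ℝ E + t • fderiv ℝ g x).det
      = volume.real (ball (0 : E) 1) := by
  have hCpos : (0 : ℝ) < C := hC
  have htC : t * C ≤ 1 / 2 := by
    calc t * C ≤ (2 * (C + 1) : ℝ)⁻¹ * C := by gcongr
      _ ≤ 1 / 2 := by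
        rw [inv_mul_le_iff₀ (by positivity)]; linarith
  have ht1 : t ≤ 1 / 2 := by
    refine ht'.trans ?_
    rw [inv_le_comm₀ (by positivity) (by norm_num)]; linarith
  have hLip : LipschitzOnWith C g (closedBall (0 : E) 1) :=
    (convex_closedBall _ _).lipschitzOnWith_of_nnnorm_fderiv_le
      (fun x hx => (hg x hx).differentiableAt one_ne_zero) hbound
  set F : E → E := fun x => x + t • g x with hF
  have hinj : InjOn F (closedBall (0 : E) 1) := by
    intro x hx y hy hxy
    have h1 : x - y = t • (g y - g x) := by
      simp only [hF] at hxy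
      rw [smul_sub, sub_eq_sub_iff_add_eq_add, hxy, add_comm]
    have h2 : ‖x - y‖ ≤ 1 / 2 * ‖x - y‖ := by
      calc ‖x - y‖ = t * ‖g y - g x‖ := by rw [h1, norm_smul, Real.norm_of_nonneg ht.le]
        _ ≤ t * (C * ‖y - x‖) := by gcongr; exact hLip.norm_sub_le hy hx
        _ = (t * C) * ‖x - y‖ := by rw [norm_sub_rev]; ring
        _ ≤ _ := by gcongr
    have : ‖x - y‖ = 0 := by nlinarith [norm_nonneg (x - y)]
    exact sub_eq_zero.1 (norm_eq_zero.1 this)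
  have hderiv : ∀ x ∈ closedBall (0 : E) 1,
      HasStrictFDerivAt F (ContinuousLinearMap.id ℝ E + t • fderiv ℝ g x) x := by
    intro x hx
    exact (hasStrictFDerivAt_id x).add
      (((hg x hx).hasStrictFDerivAt one_ne_zero).const_smul t)
  have hdet : ∀ x ∈ closedBall (0 : E) 1,
      0 < (ContinuousLinearMap.id ℝ E + t • fderiv ℝ g x).det := by
    intro x hx
    apply det_id_add_pos_of_norm_lt_one
    rw [norm_smul, Real.norm_of_nonneg ht.le]
    have : ‖fderiv ℝ g x‖ ≤ C := hbound x hx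
    calc t * ‖fderiv ℝ g x‖ ≤ t * C := by gcongr
      _ < 1 := by linarith
  have hsub : ball (0 : E) 1 ⊆ closedBall 0 1 := ball_subset_closedBall
  have hmaps : ∀ x ∈ ball (0 : E) 1, F x ∈ ball (0 : E) 1 := by
    intro x hx
    have hx1 : ‖x‖ < 1 := by simpa using hx
    have : F x = (1 - t) • x + t • (x + g x) := by simp only [hF]; module
    rw [mem_ball_zero_iff, this]
    calc ‖(1 - t) • x + t • (x + g x)‖ ≤ ‖(1 - t) • x‖ + ‖t • (x + g x)‖ := norm_add_le _ _
      _ = (1 - t) * ‖x‖ + t * ‖x + g x‖ := by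
        rw [norm_smul, norm_smul, Real.norm_of_nonneg ht.le, Real.norm_of_nonneg (by linarith)]
      _ ≤ (1 - t) * ‖x‖ + t * 1 := by gcongr; exact hball x (hsub hx)
      _ < 1 := by nlinarith
  have hopen : IsOpen (F '' ball (0 : E) 1) := by
    rw [isOpen_iff_mem_nhds]
    rintro _ ⟨x, hx, rfl⟩
    have hsurj : ((ContinuousLinearMap.id ℝ E + t • fderiv ℝ g x : E →L[ℝ] E)).range = ⊤ := by
      apply LinearMap.range_eq_top.2
      exact (LinearMap.equivOfDetNeZero
        ((ContinuousLinearMap.id ℝ E + t • fderiv ℝ g x : E →L[ℝ] E) : E →ₗ[ℝ] E)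
        (hdet x (hsub hx)).ne').surjective
    rw [← (hderiv x (hsub hx)).map_nhds_eq_of_surj hsurj]
    exact image_mem_map (isOpen_ball.mem_nhds hx)
  have hcont : ContinuousOn F (closedBall (0 : E) 1) := fun x hx =>
    (hderiv x hx).hasFDerivAt.continuousAt.continuousWithinAt
  have himage : F '' ball (0 : E) 1 = ball 0 1 := by
    apply Subset.antisymm (by rintro _ ⟨x, hx, rfl⟩; exact hmaps x hx)
    refine (convex_ball (0 : E) 1).isPreconnected.subset_of_closure_inter_subset hopen
      ⟨F 0, hmaps 0 (by simp), mem_image_of_mem _ (by simp)⟩ ?_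
    rintro y ⟨hy, hyb⟩
    have hcl : closure (F '' ball (0 : E) 1) ⊆ F '' closedBall 0 1 :=
      closure_minimal (image_mono hsub)
        ((isCompact_closedBall (0 : E) 1).image_of_continuousOn hcont).isClosed
    obtain ⟨x, hx, rfl⟩ := hcl hy
    refine mem_image_of_mem _ ?_
    by_contra hxb
    have hx1 : ‖x‖ = 1 := by
      have h1 : ‖x‖ ≤ 1 := by simpa using hx
      have h2 : 1 ≤ ‖x‖ := by simpa using hxb
      exact le_antisymm h1 h2
    have : F x = x := by simp [hF, hsphere x hx1]
    rw [this] at hyb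
    exact hxb hyb
  have hchange := integral_image_eq_integral_abs_det_fderiv_smul (volume : Measure E)
    (measurableSet_ball (x := (0 : E)) (ε := 1))
    (fun x hx => (hderiv x (hsub hx)).hasFDerivAt.hasFDerivWithinAt)
    (hinj.mono hsub) (fun _ => (1 : ℝ))
  rw [himage] at hchange
  simp only [smul_eq_mul, mul_one, integral_const, MeasurableSet.univ, measureReal_restrict_apply,
    univ_inter] at hchange
  rw [hchange]
  refine setIntegral_congr_fun measurableSet_ball fun x hx => ?_
  exact (abs_of_pos (hdet x (hsub hx))).symm

/-- There is no `C¹` retraction of the closed unit ball onto the unit sphere. -/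
theorem not_exists_contDiff_retraction_sphere {f : E → E}
    (hf : ∀ x ∈ closedBall (0 : E) 1, ContDiffAt ℝ 1 f x)
    (hf1 : ∀ x ∈ closedBall (0 : E) 1, ‖f x‖ = 1) (hfix : ∀ x : E, ‖x‖ = 1 → f x = x) : False := by
  set g : E → E := fun x => f x - x with hgdef
  have hg : ∀ x ∈ closedBall (0 : E) 1, ContDiffAt ℝ 1 g x := fun x hx =>
    (hf x hx).sub contDiffAt_id
  have hfd : ContinuousOn (fderiv ℝ g) (closedBall (0 : E) 1) := fun x hx =>
    ((hg x hx).fderiv_right (m := 0) (by norm_num)).continuousAt.continuousWithinAt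
  obtain ⟨C₀, hC₀⟩ := (isCompact_closedBall (0 : E) 1).exists_bound_of_continuousOn hfd
  set C : ℝ≥0 := Real.toNNReal C₀ + 1 with hCdef
  have hC : 0 < C := by positivity
  have hbound : ∀ x ∈ closedBall (0 : E) 1, ‖fderiv ℝ g x‖₊ ≤ C := by
    intro x hx
    rw [← NNReal.coe_le_coe]
    push_cast [hCdef]
    have := hC₀ x hx
    have h2 := Real.le_coe_toNNReal C₀
    linarith [coe_nnnorm (fderiv ℝ g x)]
  obtain ⟨t, w, ht, hw, hinterp⟩ := exists_interpolation_weights (Module.finrank ℝ E)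
    (t₀ := (2 * (C + 1) : ℝ)⁻¹) (by positivity)
  have hI : ∀ s : ℝ, IntegrableOn
      (fun x => (ContinuousLinearMap.id ℝ E + s • fderiv ℝ g x).det) (ball (0 : E) 1) := by
    intro s
    refine IntegrableOn.mono_set ?_ ball_subset_closedBall
    refine ContinuousOn.integrableOn_compact (isCompact_closedBall _ _) ?_
    exact ContinuousLinearMap.continuous_det.comp_continuousOn
      (continuousOn_const.add (hfd.const_smul s))
  have hsmall : ∀ i, ∫ x in ball (0 : E) 1,
      (ContinuousLinearMap.id ℝ E + t i • fderiv ℝ g x).det = volume.real (ball (0 : E) 1) :=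
    fun i => setIntegral_det_id_add_smul_fderiv hC hg hbound
      (fun x hx => by simp [hgdef, hf1 x hx]) (fun x hx => by simp [hgdef, hfix x hx])
      (ht i).1 (ht i).2
  have hone : ∫ x in ball (0 : E) 1,
      (ContinuousLinearMap.id ℝ E + (1 : ℝ) • fderiv ℝ g x).det = volume.real (ball (0 : E) 1) := by
    have hpt : ∀ x, (ContinuousLinearMap.id ℝ E + (1 : ℝ) • fderiv ℝ g x).det
        = ∑ i, w i * (ContinuousLinearMap.id ℝ E + t i • fderiv ℝ g x).det := by
      intro x
      obtain ⟨p, hpd, hp⟩ := exists_polynomial_det_one_add_smul (fderiv ℝ g x)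
      simpa [hp] using hinterp p hpd
    simp_rw [hpt]
    rw [integral_finsetSum _ fun i _ => (hI (t i)).const_mul (w i)]
    simp_rw [integral_const_mul, hsmall, ← Finset.sum_mul, hw, one_mul]
  have hzero : ∀ x ∈ ball (0 : E) 1,
      (ContinuousLinearMap.id ℝ E + (1 : ℝ) • fderiv ℝ g x).det = 0 := by
    intro x hx
    have hxc := ball_subset_closedBall hx
    have hfx : HasFDerivAt f (ContinuousLinearMap.id ℝ E + (1 : ℝ) • fderiv ℝ g x) x := by
      have h1 := (hasFDerivAt_id x).add ((hg x hxc).differentiableAt one_ne_zero).hasFDerivAt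
      have h2 : f = fun y => id y + g y := by funext y; simp [hgdef]
      rw [h2, one_smul]; exact h1
    set M := ContinuousLinearMap.id ℝ E + (1 : ℝ) • fderiv ℝ g x with hM
    have hinner : ∀ v, ⟪f x, M v⟫ = 0 := by
      intro v
      have h1 : HasFDerivAt (fun y => ⟪f y, f y⟫)
          _ x := hfx.inner ℝ hfx
      have h2 : (fun y => ⟪f y, f y⟫) =ᶠ[𝓝 x] fun _ => (1 : ℝ) := by
        filter_upwards [isOpen_ball.mem_nhds hx] with y hy
        rw [real_inner_self_eq_norm_sq, hf1 y (ball_subset_closedBall hy), one_pow]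
      have h3 := (h1.congr_of_eventuallyEq h2.symm).unique (hasFDerivAt_const (1 : ℝ) x)
      have h4 := DFunLike.congr_fun h3 v
      simp [fderivInnerCLM_apply, real_inner_comm] at h4
      linarith [real_inner_comm (f x) (M v)]
    by_contra hne
    obtain ⟨v, hv⟩ := (LinearMap.equivOfDetNeZero (M : E →ₗ[ℝ] E) hne).surjective (f x)
    have hv' : M v = f x := hv
    have := hinner v
    rw [hv', real_inner_self_eq_norm_sq, hf1 x hxc] at this
    norm_num at this
  rw [setIntegral_congr_fun measurableSet_ball hzero] at hone
  simp only [integral_zero] at hone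
  have hpos : 0 < volume.real (ball (0 : E) 1) :=
    ENNReal.toReal_pos (measure_ball_pos volume (0 : E) one_pos).ne' measure_ball_lt_top.ne
  linarith

theorem exists_fixedPoint_of_contDiff {G : E → E} (hG : ContDiff ℝ 1 G)
    (hG1 : ∀ x ∈ closedBall (0 : E) 1, ‖G x‖ ≤ 1) : ∃ x ∈ closedBall (0 : E) 1, G x = x := by
  by_contra! hne
  set u : E → E := fun x => x - G x with hu
  have hu0 : ∀ x ∈ closedBall (0 : E) 1, u x ≠ 0 := fun x hx h =>
    hne x hx (sub_eq_zero.1 h).symm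
  have hucd : ContDiff ℝ 1 u := contDiff_id.sub hG
  set D : E → ℝ := fun x => ⟪x, u x⟫ ^ 2 + ‖u x‖ ^ 2 * (1 - ‖x‖ ^ 2) with hD
  have hDcd : ContDiff ℝ 1 D :=
    ((contDiff_id.inner ℝ hucd).pow 2).add
      ((hucd.norm_sq ℝ).mul (contDiff_const.sub (contDiff_id.norm_sq ℝ)))
  have hsph : ∀ x : E, ‖x‖ = 1 → 0 < ⟪x, u x⟫ := by
    intro x hx
    have hxb : x ∈ closedBall (0 : E) 1 := by simp [hx]
    have h1 : 0 < ‖u x‖ ^ 2 := by have := norm_pos_iff.2 (hu0 x hxb); positivity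
    have h2 : ‖u x‖ ^ 2 = ‖x‖ ^ 2 - 2 * ⟪x, G x⟫ + ‖G x‖ ^ 2 := by
      simp only [hu]; rw [norm_sub_sq_real]
    have h3 : ⟪x, u x⟫ = ‖x‖ ^ 2 - ⟪x, G x⟫ := by
      simp only [hu]; rw [inner_sub_right, real_inner_self_eq_norm_sq]
    have h4 : ‖G x‖ ^ 2 ≤ 1 := by
      have := hG1 x hxb
      have h0 := norm_nonneg (G x)
      nlinarith
    rw [hx] at h2 h3
    nlinarith
  have hDpos : ∀ x ∈ closedBall (0 : E) 1, 0 < D x := by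
    intro x hx
    have hx1 : ‖x‖ ≤ 1 := by simpa using hx
    rcases hx1.lt_or_eq with h | h
    · have h1 : 0 < ‖u x‖ ^ 2 := by have := norm_pos_iff.2 (hu0 x hx); positivity
      have h2 : 0 < 1 - ‖x‖ ^ 2 := by nlinarith [norm_nonneg x]
      have := mul_pos h1 h2
      simp only [hD]
      nlinarith [sq_nonneg ⟪x, u x⟫]
    · have := hsph x h
      simp only [hD, h]
      have := pow_pos this 2
      nlinarith
  set l : E → ℝ := fun x => (-⟪x, u x⟫ + √(D x)) / ‖u x‖ ^ 2 with hl
  refine not_exists_contDiff_retraction_sphere (f := fun x => x + l x • u x) ?_ ?_ ?_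
  · intro x hx
    have h1 : ‖u x‖ ^ 2 ≠ 0 := by have := norm_pos_iff.2 (hu0 x hx); positivity
    have hs : ContDiffAt ℝ 1 (fun x => √(D x)) x := hDcd.contDiffAt.sqrt (hDpos x hx).ne'
    have hlc : ContDiffAt ℝ 1 l x :=
      (((contDiff_id.inner ℝ hucd).neg.contDiffAt).add hs).div (hucd.norm_sq ℝ).contDiffAt h1
    exact contDiffAt_id.add (hlc.smul hucd.contDiffAt)
  · intro x hx
    have h1 : 0 < ‖u x‖ ^ 2 := by have := norm_pos_iff.2 (hu0 x hx); positivity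
    have hsq : √(D x) ^ 2 = D x := Real.sq_sqrt (hDpos x hx).le
    have h2 : ‖x + l x • u x‖ ^ 2 = 1 := by
      rw [norm_add_sq_real, inner_smul_right, norm_smul, mul_pow, Real.norm_eq_abs, sq_abs]
      have hll : l x * ‖u x‖ ^ 2 = -⟪x, u x⟫ + √(D x) := by
        exact div_mul_cancel₀ _ h1.ne'
      have h3 : (l x * ‖u x‖ ^ 2 + ⟪x, u x⟫) ^ 2 = D x := by
        rw [hll, neg_add_cancel_comm, hsq]
      have h4 : ‖u x‖ ^ 2 * (‖x‖ ^ 2 + 2 * (l x * ⟪x, u x⟫) + l x ^ 2 * ‖u x‖ ^ 2)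
          = ‖u x‖ ^ 2 * 1 := by
        simp only [hD] at h3
        linear_combination h3
      exact mul_left_cancel₀ h1.ne' h4
    have h0 := norm_nonneg (x + l x • u x)
    nlinarith
  · intro x hx
    have hxb : x ∈ closedBall (0 : E) 1 := by simp [hx]
    have : √(D x) = ⟪x, u x⟫ := by
      simp only [hD, hx]
      rw [one_pow, sub_self, mul_zero, add_zero, Real.sqrt_sq (hsph x hx).le]
    simp [hl, this]

/-- **Brouwer's fixed point theorem** for maps into the closed unit ball. -/
theorem exists_fixedPoint_of_continuous {G : E → E} (hG : Continuous G)
    (hG1 : ∀ x, ‖G x‖ ≤ 1) : ∃ x, G x = x := by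
  by_contra! hne
  have hpos : ∃ m > 0, ∀ x ∈ closedBall (0 : E) 1, m ≤ ‖G x - x‖ := by
    obtain ⟨x₀, hx₀, hmin⟩ := (isCompact_closedBall (0 : E) 1).exists_isMinOn ⟨0, by simp⟩
      (f := fun x => ‖G x - x‖) (by fun_prop)
    exact ⟨‖G x₀ - x₀‖, norm_pos_iff.2 (sub_ne_zero.2 (hne x₀)), fun x hx => hmin hx⟩
  obtain ⟨m, hm, hmin⟩ := hpos
  set ε : ℝ := m / 4 with hε
  have hεpos : 0 < ε := by positivity
  obtain ⟨H, hH, hHG, -⟩ := hG.exists_contDiff_approx 1 (ε := fun _ => ε) continuous_const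
    (fun _ => hεpos)
  have hHn : ∀ x, ‖H x‖ ≤ 1 + ε := by
    intro x
    have h1 : ‖H x - G x‖ < ε := by simpa [dist_eq_norm] using hHG x
    have h2 := norm_le_norm_add_norm_sub' (H x) (G x)
    linarith [hG1 x]
  obtain ⟨x, hx, hfx⟩ := exists_fixedPoint_of_contDiff (G := fun x => (1 + ε)⁻¹ • H x)
    (contDiff_const.smul (by exact_mod_cast hH)) (by
      intro x _
      rw [norm_smul, Real.norm_of_nonneg (by positivity), inv_mul_le_iff₀ (by positivity)]
      simpa using hHn x)
  have h1 : ‖H x - G x‖ < ε := by simpa [dist_eq_norm] using hHG x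
  have h2 : H x = (1 + ε) • x := by
    rw [inv_smul_eq_iff₀ (by positivity)] at hfx
    exact hfx
  have h3 : G x - x = -(H x - G x) + ε • x := by rw [h2]; module
  have hx1 : ‖x‖ ≤ 1 := by simpa using hx
  have h4 : ‖G x - x‖ ≤ ε + ε * 1 := by
    rw [h3]
    refine (norm_add_le _ _).trans ?_
    rw [norm_neg, norm_smul, Real.norm_of_nonneg hεpos.le]
    gcongr
  have := hmin x hx
  linarith

end Brouwer

/-- **Brouwer's fixed point theorem** on a standard simplex. -/
theorem exists_fixedPoint_stdSimplex {ι : Type*} [Fintype ι] [Nonempty ι]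
    {T : (ι → ℝ) → ι → ℝ} (hT : ContinuousOn T (stdSimplex ℝ ι))
    (hmaps : ∀ p ∈ stdSimplex ℝ ι, T p ∈ stdSimplex ℝ ι) :
    ∃ p ∈ stdSimplex ℝ ι, T p = p := by
  set s : (ι → ℝ) → ℝ := fun x => ∑ i, max (x i) 0 with hs
  have hscont : Continuous s := by fun_prop
  set r : (ι → ℝ) → ι → ℝ := fun x i =>
    max (x i) 0 / max 1 (s x) + max 0 (1 - s x) / Fintype.card ι with hr
  have hcard : (0 : ℝ) < Fintype.card ι := by exact_mod_cast Fintype.card_pos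
  have hrcont : Continuous r := by
    refine continuous_pi fun i => ?_
    refine Continuous.add (Continuous.div (by fun_prop) (by fun_prop) fun x => ?_) (by fun_prop)
    exact (lt_of_lt_of_le one_pos (le_max_left _ _)).ne'
  have hs0 : ∀ x, 0 ≤ s x := fun x => Finset.sum_nonneg fun i _ => le_max_right _ _
  have hrmem : ∀ x, r x ∈ stdSimplex ℝ ι := by
    intro x
    refine ⟨fun i => by simp only [hr]; positivity, ?_⟩
    simp only [hr, Finset.sum_add_distrib, ← Finset.sum_div, Finset.sum_const, Finset.card_univ,
      nsmul_eq_mul]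
    have : (∑ i, max (x i) 0) = s x := rfl
    rw [this, mul_div_cancel_left₀ _ hcard.ne']
    rcases le_total (s x) 1 with h | h
    · rw [max_eq_left h, max_eq_right (by linarith)]; ring
    · rw [max_eq_right h, max_eq_left (by linarith), div_self (by linarith)]; ring
  have hrfix : ∀ p ∈ stdSimplex ℝ ι, r p = p := by
    intro p hp
    have h1 : s p = 1 := by
      simp only [hs]; rw [← hp.2]; exact Finset.sum_congr rfl fun i _ => max_eq_left (hp.1 i)
    funext i
    simp [hr, h1, max_eq_left (hp.1 i)]
  have hTr : Continuous fun x => T (r x) :=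
    hT.comp_continuous hrcont hrmem
  have hnorm : ∀ p ∈ stdSimplex ℝ ι, ‖WithLp.toLp 2 p‖ ≤ 1 := by
    intro p hp
    rw [EuclideanSpace.norm_eq, Real.sqrt_le_one]
    calc ∑ i, ‖p i‖ ^ 2 ≤ ∑ i, p i := by
          refine Finset.sum_le_sum fun i _ => ?_
          have h0 := hp.1 i
          have h1 : p i ≤ 1 := by
            rw [← hp.2]; exact Finset.single_le_sum (fun j _ => hp.1 j) (Finset.mem_univ i)
          rw [Real.norm_of_nonneg h0]; nlinarith
      _ = 1 := hp.2
  obtain ⟨x, hx⟩ := exists_fixedPoint_of_continuous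
    (G := fun x : EuclideanSpace ℝ ι => WithLp.toLp 2 (T (r (WithLp.ofLp x))))
    ((PiLp.continuous_toLp 2 _).comp (hTr.comp (PiLp.continuous_ofLp 2 _)))
    (fun x => hnorm _ (hmaps _ (hrmem _)))
  have hxr : T (r (WithLp.ofLp x)) = WithLp.ofLp x := by
    conv_rhs => rw [← hx]
  have hmem : WithLp.ofLp x ∈ stdSimplex ℝ ι := by
    rw [← hxr]; exact hmaps _ (hrmem _)
  refine ⟨WithLp.ofLp x, hmem, ?_⟩
  rw [hrfix _ hmem] at hxr
  exact hxr

/-- Approximate form of Kakutani's fixed point theorem: an arbitrary self-map `Φ` of a compact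
convex set has points that are convex combinations of values of `Φ` at nearby points. -/
theorem exists_mem_convexHull_image_ball {F : Type*} [NormedAddCommGroup F] [NormedSpace ℝ F]
    {K : Set F} (hK : IsCompact K) (hconv : Convex ℝ K) (hne : K.Nonempty) {Φ : F → F}
    (hΦ : MapsTo Φ K K) {ε : ℝ} (hε : 0 < ε) :
    ∃ x ∈ K, x ∈ convexHull ℝ (Φ '' (K ∩ ball x ε)) := by
  obtain ⟨t, htK, htfin, hcover⟩ := hK.finite_cover_balls hε
  have : Fintype t := htfin.fintype
  have : Nonempty t := by
    obtain ⟨x, hx⟩ := hne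
    obtain ⟨y, hy, -⟩ := mem_iUnion₂.1 (hcover hx)
    exact ⟨⟨y, hy⟩⟩
  set X : (t → ℝ) → F := fun p => ∑ i, p i • Φ (i : F) with hX
  have hXcont : Continuous X := by fun_prop
  have hXK : ∀ p ∈ stdSimplex ℝ t, X p ∈ K := fun p hp =>
    hconv.sum_mem (fun i _ => hp.1 i) hp.2 fun i _ => hΦ (htK i.2)
  set m : F → t → ℝ := fun x i => max 0 (ε - dist x i) with hm
  have hm0 : ∀ x i, 0 ≤ m x i := fun x i => le_max_left _ _
  have hmsum : ∀ x ∈ K, 0 < ∑ i, m x i := by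
    intro x hx
    obtain ⟨y, hy, hxy⟩ := mem_iUnion₂.1 (hcover hx)
    refine Finset.sum_pos' (fun i _ => hm0 x i) ⟨⟨y, hy⟩, Finset.mem_univ _, ?_⟩
    simp only [hm]
    exact lt_max_of_lt_right (by simpa using hxy)
  set T : (t → ℝ) → t → ℝ := fun p i => m (X p) i / ∑ j, m (X p) j with hT
  have hTmaps : ∀ p ∈ stdSimplex ℝ t, T p ∈ stdSimplex ℝ t := by
    intro p hp
    refine ⟨fun i => div_nonneg (hm0 _ _) (hmsum _ (hXK p hp)).le, ?_⟩
    simp only [hT]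
    rw [← Finset.sum_div, div_self (hmsum _ (hXK p hp)).ne']
  have hTcont : ContinuousOn T (stdSimplex ℝ t) := by
    refine continuousOn_pi.2 fun i => ContinuousOn.div ?_ ?_ fun p hp => (hmsum _ (hXK p hp)).ne'
    · exact Continuous.continuousOn (by simp only [hm]; fun_prop)
    · exact Continuous.continuousOn (by simp only [hm]; fun_prop)
  obtain ⟨p, hp, hfix⟩ := exists_fixedPoint_stdSimplex hTcont hTmaps
  refine ⟨X p, hXK p hp, ?_⟩
  have hsupp : ∀ i, p i ≠ 0 → dist (i : F) (X p) < ε := by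
    intro i hi
    by_contra hcon
    apply hi
    rw [← hfix]
    simp only [hT, hm]
    rw [max_eq_left (by rw [dist_comm]; linarith), zero_div]
  have hsum : ∑ i ∈ Finset.univ.filter (fun i => p i ≠ 0), p i = 1 := by
    rw [Finset.sum_filter_ne_zero]; exact hp.2
  have hXeq : X p = ∑ i ∈ Finset.univ.filter (fun i => p i ≠ 0), p i • Φ (i : F) := by
    simp only [hX]
    rw [Finset.sum_filter]
    refine Finset.sum_congr rfl fun i _ => ?_
    split_ifs with h
    · rfl
    · rw [not_not.1 h, zero_smul]
  rw [hXeq]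
  refine (convex_convexHull ℝ _).sum_mem (fun i _ => hp.1 i) hsum fun i hi => ?_
  refine subset_convexHull ℝ _ (mem_image_of_mem _ ⟨htK i.2, ?_⟩)
  rw [← hXeq]
  exact hsupp i (Finset.mem_filter.1 hi).2

open scoped MatrixOrder Matrix.Norms.L2Operator in
theorem posSemidef_exists_eq_transpose_mul_self {ι : Type*} [Fintype ι] [DecidableEq ι]
    {M : Matrix ι ι ℝ} (hM : M.PosSemidef) : ∃ S : Matrix ι ι ℝ, M = S.transpose * S := by
  obtain ⟨S, hS⟩ := CStarAlgebra.nonneg_iff_eq_star_mul_self.1 hM.nonneg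
  exact ⟨S, by rw [hS, Matrix.star_eq_conjTranspose, Matrix.conjTranspose_eq_transpose_of_trivial]⟩


section Calculus

theorem hess2_eq (φ : Ed d → ℝ) (x : Ed d) (i j : Fin d) :
    hess2 φ x i j =
      fderiv ℝ (fderiv ℝ φ) x (EuclideanSpace.single i 1) (EuclideanSpace.single j 1) := by
  simp [hess2, iteratedFDeriv_two_apply]

theorem inner_gradient_eq (φ : Ed d → ℝ) (x v : Ed d) : ⟪v, gradient φ x⟫ = fderiv ℝ φ x v := by
  rw [real_inner_comm]
  simp [gradient]

theorem abs_hess2_le (φ : Ed d → ℝ) (x : Ed d) (i j : Fin d) :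
    |hess2 φ x i j| ≤ ‖iteratedFDeriv ℝ 2 φ x‖ := by
  have h := (iteratedFDeriv ℝ 2 φ x).le_opNorm
    ![EuclideanSpace.single i 1, EuclideanSpace.single j 1]
  simpa [hess2, Fin.prod_univ_two] using h

theorem norm_gradient_eq (φ : Ed d → ℝ) (x : Ed d) : ‖gradient φ x‖ = ‖fderiv ℝ φ x‖ := by
  simp [gradient]

theorem ContDiff.continuous_hess2 {φ : Ed d → ℝ} (hφ : ContDiff ℝ 2 φ) (i j : Fin d) :
    Continuous fun x => hess2 φ x i j :=
  (hφ.continuous_iteratedFDeriv (m := 2) le_rfl).eval_const _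

theorem ContDiff.continuous_gradient {φ : Ed d → ℝ} (hφ : ContDiff ℝ 2 φ) :
    Continuous (gradient φ) :=
  (InnerProductSpace.toDual ℝ (Ed d)).symm.continuous.comp (hφ.continuous_fderiv (by norm_num))

theorem abs_Lop_le {A : Ed d → Matrix (Fin d) (Fin d) ℝ} {B : Ed d → Ed d} {K : ℝ}
    {x : Ed d} (hA : ∀ i j, |A x i j| ≤ K) (φ : Ed d → ℝ) :
    |Lop A B φ x| ≤ d ^ 2 * K * ‖iteratedFDeriv ℝ 2 φ x‖ + ‖B x‖ * ‖gradient φ x‖ := by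
  have h1 : |∑ i, ∑ j, A x i j * hess2 φ x i j| ≤ d ^ 2 * K * ‖iteratedFDeriv ℝ 2 φ x‖ := by
    calc |∑ i, ∑ j, A x i j * hess2 φ x i j|
        ≤ ∑ i : Fin d, ∑ j : Fin d, K * ‖iteratedFDeriv ℝ 2 φ x‖ := by
          refine (Finset.abs_sum_le_sum_abs _ _).trans (Finset.sum_le_sum fun i _ => ?_)
          refine (Finset.abs_sum_le_sum_abs _ _).trans (Finset.sum_le_sum fun j _ => ?_)
          rw [abs_mul]
          exact mul_le_mul (hA i j) (abs_hess2_le φ x i j) (abs_nonneg _)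
            ((abs_nonneg _).trans (hA i j))
      _ = _ := by simp; ring
  exact (abs_add_le _ _).trans (add_le_add h1 (abs_real_inner_le_norm _ _))

theorem Lop_add {A : Ed d → Matrix (Fin d) (Fin d) ℝ} {B : Ed d → Ed d} {f g : Ed d → ℝ}
    (hf : ContDiff ℝ 2 f) (hg : ContDiff ℝ 2 g) (x : Ed d) :
    Lop A B (fun y => f y + g y) x = Lop A B f x + Lop A B g x := by
  have hf1 : Differentiable ℝ f := hf.differentiable (by norm_num)
  have hg1 : Differentiable ℝ g := hg.differentiable (by norm_num)
  have hf2 : Differentiable ℝ (fderiv ℝ f) :=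
    (hf.fderiv_right (m := 1) (by norm_num)).differentiable (by norm_num)
  have hg2 : Differentiable ℝ (fderiv ℝ g) :=
    (hg.fderiv_right (m := 1) (by norm_num)).differentiable (by norm_num)
  have h1 : fderiv ℝ (fun y => f y + g y) = fun y => fderiv ℝ f y + fderiv ℝ g y := by
    funext y; exact fderiv_fun_add (hf1 y) (hg1 y)
  simp only [Lop, inner_gradient_eq, hess2_eq, h1, fderiv_fun_add (hf2 x) (hg2 x),
    _root_.add_apply, mul_add, Finset.sum_add_distrib]
  ring

theorem Lop_const_mul {A : Ed d → Matrix (Fin d) (Fin d) ℝ} {B : Ed d → Ed d} {f : Ed d → ℝ}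
    (hf : ContDiff ℝ 2 f) (c : ℝ) (x : Ed d) :
    Lop A B (fun y => c * f y) x = c * Lop A B f x := by
  have hf1 : Differentiable ℝ f := hf.differentiable (by norm_num)
  have hf2 : Differentiable ℝ (fderiv ℝ f) :=
    (hf.fderiv_right (m := 1) (by norm_num)).differentiable (by norm_num)
  have h1 : fderiv ℝ (fun y => c * f y) = fun y => c • fderiv ℝ f y := by
    funext y; exact fderiv_const_mul (hf1 y) c
  simp only [Lop, inner_gradient_eq, hess2_eq, h1, fderiv_fun_const_smul (hf2 x),
    _root_.smul_apply, smul_eq_mul, mul_add, Finset.mul_sum]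
  congr 1
  refine Finset.sum_congr rfl fun i _ => Finset.sum_congr rfl fun j _ => ?_
  ring

/-- Product rule for the second order operator `Lop`. -/
theorem Lop_mul {A : Ed d → Matrix (Fin d) (Fin d) ℝ} {B : Ed d → Ed d} {f g : Ed d → ℝ}
    {x : Ed d} (hA : (A x).IsSymm) (hf : ContDiff ℝ 2 f) (hg : ContDiff ℝ 2 g) :
    Lop A B (fun y => f y * g y) x = f x * Lop A B g x + g x * Lop A B f x
      + 2 * ∑ i, ∑ j, A x i j * (fderiv ℝ f x (EuclideanSpace.single i 1)
        * fderiv ℝ g x (EuclideanSpace.single j 1)) := by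
  have hf1 : Differentiable ℝ f := hf.differentiable (by norm_num)
  have hg1 : Differentiable ℝ g := hg.differentiable (by norm_num)
  have hf2 : Differentiable ℝ (fderiv ℝ f) :=
    (hf.fderiv_right (m := 1) (by norm_num)).differentiable (by norm_num)
  have hg2 : Differentiable ℝ (fderiv ℝ g) :=
    (hg.fderiv_right (m := 1) (by norm_num)).differentiable (by norm_num)
  have h1 : fderiv ℝ (fun y => f y * g y) = fun y => f y • fderiv ℝ g y + g y • fderiv ℝ f y := by
    funext y; exact fderiv_fun_mul (hf1 y) (hg1 y)
  have h2 : fderiv ℝ (fun y => f y • fderiv ℝ g y + g y • fderiv ℝ f y) x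
      = (f x • fderiv ℝ (fderiv ℝ g) x + (fderiv ℝ f x).smulRight (fderiv ℝ g x))
        + (g x • fderiv ℝ (fderiv ℝ f) x + (fderiv ℝ g x).smulRight (fderiv ℝ f x)) := by
    rw [fderiv_fun_add ((hf1 x).fun_smul (hg2 x)) ((hg1 x).fun_smul (hf2 x)),
      fderiv_fun_smul (hf1 x) (hg2 x), fderiv_fun_smul (hg1 x) (hf2 x)]
  have hswap : ∑ i, ∑ j, A x i j * (fderiv ℝ g x (EuclideanSpace.single i 1)
        * fderiv ℝ f x (EuclideanSpace.single j 1))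
      = ∑ i, ∑ j, A x i j * (fderiv ℝ f x (EuclideanSpace.single i 1)
        * fderiv ℝ g x (EuclideanSpace.single j 1)) := by
    rw [Finset.sum_comm]
    refine Finset.sum_congr rfl fun i _ => Finset.sum_congr rfl fun j _ => ?_
    rw [hA.apply i j]; ring
  simp only [Lop, inner_gradient_eq, hess2_eq, h1, h2]
  simp only [_root_.add_apply, _root_.smul_apply,
    ContinuousLinearMap.smulRight_apply, smul_eq_mul, mul_add, Finset.sum_add_distrib]
  have e1 : ∀ (c : ℝ) (φ : Ed d → ℝ), ∑ i, ∑ j, A x i j * (c *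
      fderiv ℝ (fderiv ℝ φ) x (EuclideanSpace.single i 1) (EuclideanSpace.single j 1))
      = c * ∑ i, ∑ j, A x i j *
      fderiv ℝ (fderiv ℝ φ) x (EuclideanSpace.single i 1) (EuclideanSpace.single j 1) := by
    intro c φ
    simp only [Finset.mul_sum]
    refine Finset.sum_congr rfl fun i _ => Finset.sum_congr rfl fun j _ => ?_
    ring
  rw [e1, e1, hswap]
  ring

/-- Second order necessary condition at a local minimum. -/
theorem IsLocalMin.fderiv_fderiv_nonneg {φ : Ed d → ℝ} (hφ : ContDiff ℝ 2 φ) {x : Ed d}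
    (hx : IsLocalMin φ x) (v : Ed d) : 0 ≤ fderiv ℝ (fderiv ℝ φ) x v v := by
  have hf1 : Differentiable ℝ φ := hφ.differentiable (by norm_num)
  have hf2 : Differentiable ℝ (fderiv ℝ φ) :=
    (hφ.fderiv_right (m := 1) (by norm_num)).differentiable (by norm_num)
  set g : ℝ → ℝ := fun s => φ (x + s • v) with hg
  have hline : ∀ s : ℝ, HasDerivAt (fun s : ℝ => x + s • v) v s := fun s => by
    simpa using ((hasDerivAt_id s).smul_const v).const_add x
  have hd1 : ∀ s, HasDerivAt g (fderiv ℝ φ (x + s • v) v) s := fun s =>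
    (hf1 _).hasFDerivAt.comp_hasDerivAt s (hline s)
  have hderiv : deriv g = fun s => fderiv ℝ φ (x + s • v) v := funext fun s => (hd1 s).deriv
  have hd2 : HasDerivAt (deriv g) (fderiv ℝ (fderiv ℝ φ) x v v) 0 := by
    rw [hderiv]
    have h0 : x + (0 : ℝ) • v = x := by simp
    have h : HasFDerivAt (fun y => fderiv ℝ φ y v)
        ((ContinuousLinearMap.apply ℝ ℝ v).comp (fderiv ℝ (fderiv ℝ φ) (x + (0 : ℝ) • v)))
        (x + (0 : ℝ) • v) :=
      (ContinuousLinearMap.apply ℝ ℝ v).hasFDerivAt.comp _ (hf2 _).hasFDerivAt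
    have h2 := h.comp_hasDerivAt (0 : ℝ) (hline 0)
    rw [h0] at h2
    exact h2
  have hmin : IsLocalMin g 0 := by
    have hc : ContinuousAt (fun s : ℝ => x + s • v) 0 := by fun_prop
    have h0 : x + (0 : ℝ) • v = x := by simp
    have := hc.tendsto
    rw [h0] at this
    filter_upwards [this.eventually hx] with s hs
    simpa [hg] using hs
  by_contra! hneg
  have hmax : IsLocalMax g 0 := isLocalMax_of_deriv_deriv_neg (by rwa [hd2.deriv])
    (hmin.deriv_eq_zero) (hd1 0).continuousAt
  have hconst : g =ᶠ[𝓝 0] fun _ => g 0 := by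
    filter_upwards [hmin, hmax] with s h1 h2 using le_antisymm h2 h1
  have h2 : deriv (deriv g) 0 = 0 := by
    rw [hconst.deriv.deriv_eq]; simp
  rw [hd2.deriv] at h2
  exact hneg.ne h2

/-- The weak minimum principle for `Lop`. -/
theorem Lop_nonneg_of_isLocalMin {A : Ed d → Matrix (Fin d) (Fin d) ℝ} {B : Ed d → Ed d}
    {φ : Ed d → ℝ} (hφ : ContDiff ℝ 2 φ) {x : Ed d} (hA : (A x).PosSemidef)
    (hx : IsLocalMin φ x) : 0 ≤ Lop A B φ x := by
  have hgrad : ⟪B x, gradient φ x⟫ = 0 := by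
    rw [inner_gradient_eq, hx.fderiv_eq_zero]; simp
  obtain ⟨S, hS⟩ := posSemidef_exists_eq_transpose_mul_self hA
  rw [Lop, hgrad, add_zero]
  set H := fderiv ℝ (fderiv ℝ φ) x with hH
  have hsum : ∑ i, ∑ j, A x i j * hess2 φ x i j
      = ∑ k, H (WithLp.toLp 2 (S k)) (WithLp.toLp 2 (S k)) := by
    have hexp : ∀ k, WithLp.toLp 2 (S k)
        = ∑ i, S k i • (EuclideanSpace.single i 1 : Ed d) := by
      intro k
      ext j
      simp [Finset.sum_apply, Pi.single_apply]
    have hk : ∀ k, H (WithLp.toLp 2 (S k)) (WithLp.toLp 2 (S k))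
        = ∑ i, ∑ j, S k i * S k j * hess2 φ x i j := by
      intro k
      rw [hexp]
      simp only [map_sum, map_smul, _root_.sum_apply, _root_.smul_apply,
        smul_eq_mul, hess2_eq, ← hH, Finset.mul_sum]
      rw [Finset.sum_comm]
      refine Finset.sum_congr rfl fun i _ => Finset.sum_congr rfl fun j _ => ?_
      ring
    simp_rw [hk]
    symm
    rw [Finset.sum_comm]
    refine Finset.sum_congr rfl fun i _ => ?_
    rw [Finset.sum_comm]
    refine Finset.sum_congr rfl fun j _ => ?_
    rw [hS, Matrix.mul_apply, Finset.sum_mul]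
    simp
  rw [hsum]
  exact Finset.sum_nonneg fun k _ => hx.fderiv_fderiv_nonneg hφ _

theorem Lop_eq_zero_of_notMem_tsupport (A : Ed d → Matrix (Fin d) (Fin d) ℝ) (B : Ed d → Ed d)
    {φ : Ed d → ℝ} {x : Ed d} (hx : x ∉ tsupport φ) : Lop A B φ x = 0 := by
  have h0 : φ =ᶠ[𝓝 x] fun _ => 0 := notMem_tsupport_iff_eventuallyEq.1 hx
  have h1 : fderiv ℝ φ =ᶠ[𝓝 x] fun _ => 0 := by
    filter_upwards [h0.fderiv (𝕜 := ℝ)] with y hy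
    rw [hy]; simp
  have h2 : fderiv ℝ (fderiv ℝ φ) x = 0 := by
    rw [h1.fderiv_eq]; simp
  simp [Lop, hess2_eq, h2, h1.eq_of_nhds]

theorem measurable_Lop {A : Ed d → Matrix (Fin d) (Fin d) ℝ} {B : Ed d → Ed d}
    (hA : ∀ i j, Continuous fun x => A x i j) (hB : Measurable B) {φ : Ed d → ℝ}
    (hφ : ContDiff ℝ 2 φ) : Measurable (Lop A B φ) := by
  refine Measurable.add ?_ (hB.inner hφ.continuous_gradient.measurable)
  refine Finset.measurable_fun_sum _ fun i _ => Finset.measurable_fun_sum _ fun j _ => ?_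
  exact ((hA i j).mul (hφ.continuous_hess2 i j)).measurable

theorem continuous_Lop {A : Ed d → Matrix (Fin d) (Fin d) ℝ} {B : Ed d → Ed d}
    (hA : ∀ i j, Continuous fun x => A x i j) (hB : Continuous B) {φ : Ed d → ℝ}
    (hφ : ContDiff ℝ 2 φ) : Continuous (Lop A B φ) := by
  refine Continuous.add ?_ (hB.inner hφ.continuous_gradient)
  refine continuous_finsetSum _ fun i _ => continuous_finsetSum _ fun j _ => ?_
  exact (hA i j).mul (hφ.continuous_hess2 i j)

end Calculus

section InverseForm

/-- The inverse of the coefficient matrix at `y`, as an operator on Euclidean space. -/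
def invOp (A : Ed d → Matrix (Fin d) (Fin d) ℝ) (y : Ed d) : Ed d →L[ℝ] Ed d :=
  Matrix.toEuclideanCLM (n := Fin d) (𝕜 := ℝ) (A y)⁻¹

theorem inner_toEuclideanCLM (M : Matrix (Fin d) (Fin d) ℝ) (v w : Ed d) :
    ⟪Matrix.toEuclideanCLM (n := Fin d) (𝕜 := ℝ) M v, w⟫ = ∑ i, ∑ j, M i j * w i * v j := by
  simp only [PiLp.inner_apply, Matrix.ofLp_toEuclideanCLM, Matrix.mulVec, dotProduct,
    RCLike.inner_apply, conj_trivial, Finset.mul_sum]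
  refine Finset.sum_congr rfl fun i _ => Finset.sum_congr rfl fun j _ => ?_
  ring

/-- Symmetry, ellipticity and Lipschitz continuity of the diffusion matrix. -/
structure IsElliptic (A : Ed d → Matrix (Fin d) (Fin d) ℝ) (K₁ K₂ : ℝ) : Prop where
  pos : 0 < K₁
  pos' : 0 < K₂
  symm : ∀ x, (A x).IsSymm
  low : ∀ x (v : Ed d), K₁⁻¹ * ‖v‖ ^ 2 ≤ ∑ i, ∑ j, A x i j * v i * v j
  up : ∀ x (v : Ed d), ∑ i, ∑ j, A x i j * v i * v j ≤ K₁ * ‖v‖ ^ 2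
  lip : ∀ x y i j, |A x i j - A y i j| ≤ K₂ * ‖x - y‖

namespace IsElliptic

variable {A : Ed d → Matrix (Fin d) (Fin d) ℝ} {K₁ K₂ : ℝ}

theorem posDef (hA : IsElliptic A K₁ K₂) (x : Ed d) : (A x).PosDef := by
  refine Matrix.PosDef.of_dotProduct_mulVec_pos ?_ fun v hv => ?_
  · rw [Matrix.IsHermitian, Matrix.conjTranspose_eq_transpose_of_trivial]
    exact hA.symm x
  · have h := hA.low x (WithLp.toLp 2 v)
    have h0 : 0 < ‖(WithLp.toLp 2 v : Ed d)‖ := by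
      rw [norm_pos_iff]; simpa using hv
    have h1 : 0 < K₁⁻¹ * ‖(WithLp.toLp 2 v : Ed d)‖ ^ 2 :=
      mul_pos (inv_pos.2 hA.pos) (by positivity)
    refine (h1.trans_le h).trans_eq ?_
    simp only [dotProduct, Matrix.mulVec, Finset.mul_sum, Pi.star_apply, star_trivial]
    refine Finset.sum_congr rfl fun i _ => Finset.sum_congr rfl fun j _ => ?_
    ring

theorem isUnit_det (hA : IsElliptic A K₁ K₂) (x : Ed d) : IsUnit (A x).det :=
  (hA.posDef x).det_pos.ne'.isUnit

theorem continuous_apply (hA : IsElliptic A K₁ K₂) (i j : Fin d) :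
    Continuous fun x => A x i j := by
  have : LipschitzWith (Real.toNNReal K₂) fun x => A x i j :=
    LipschitzWith.of_dist_le_mul fun x y => by
      rw [Real.dist_eq, dist_eq_norm, Real.coe_toNNReal _ hA.pos'.le]
      exact hA.lip x y i j
  exact this.continuous

theorem abs_apply_le (hA : IsElliptic A K₁ K₂) (x : Ed d) (i j : Fin d) :
    |A x i j| ≤ 2 * K₁ := by
  set T := Matrix.toEuclideanCLM (n := Fin d) (𝕜 := ℝ) (A x) with hT
  have hq : ∀ v : Ed d, ∑ i, ∑ j, A x i j * v i * v j = ⟪T v, v⟫ := fun v => by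
    rw [hT, inner_toEuclideanCLM]
  have hij : ∀ i j, A x i j = ⟪T (EuclideanSpace.single j 1), EuclideanSpace.single i 1⟫ := by
    intro i j
    rw [hT, inner_toEuclideanCLM]
    simp
  have hsym : A x i j = A x j i := (hA.symm x).apply j i
  set u : Ed d := EuclideanSpace.single i 1
  set w : Ed d := EuclideanSpace.single j 1
  have hu : ‖u‖ = 1 := by simp [u]
  have hw : ‖w‖ = 1 := by simp [w]
  have h0 : ∀ v : Ed d, 0 ≤ ⟪T v, v⟫ := fun v => by
    rw [← hq]
    exact (mul_nonneg (inv_nonneg.2 hA.pos.le) (sq_nonneg _)).trans (hA.low x v)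
  have h1 : ∀ v : Ed d, ⟪T v, v⟫ ≤ K₁ * ‖v‖ ^ 2 := fun v => by rw [← hq]; exact hA.up x v
  have e1 : ⟪T (u + w), u + w⟫ = ⟪T u, u⟫ + ⟪T w, w⟫ + 2 * A x i j := by
    rw [map_add, inner_add_left, inner_add_right, inner_add_right, two_mul]
    nth_rw 2 [hsym]
    rw [hij i j, hij j i]; ring
  have e2 : ⟪T (u - w), u - w⟫ = ⟪T u, u⟫ + ⟪T w, w⟫ - 2 * A x i j := by
    rw [map_sub, inner_sub_left, inner_sub_right, inner_sub_right, two_mul]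
    nth_rw 2 [hsym]
    rw [hij i j, hij j i]; ring
  have a1 := h0 (u + w)
  have a2 := h0 (u - w)
  have b1 := h1 u
  have b2 := h1 w
  rw [hu] at b1
  rw [hw] at b2
  rw [abs_le]
  constructor <;> linarith [hA.pos]

theorem inner_invOp_comm (hA : IsElliptic A K₁ K₂) (y v w : Ed d) :
    ⟪invOp A y v, w⟫ = ⟪v, invOp A y w⟫ := by
  rw [real_inner_comm (invOp A y w) v, invOp, inner_toEuclideanCLM, inner_toEuclideanCLM,
    Finset.sum_comm]
  refine Finset.sum_congr rfl fun i _ => Finset.sum_congr rfl fun j _ => ?_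
  have : (A y)⁻¹ j i = (A y)⁻¹ i j := ((hA.symm y).inv).apply i j
  rw [this]; ring

theorem apply_invOp (hA : IsElliptic A K₁ K₂) (y z : Ed d) :
    Matrix.toEuclideanCLM (n := Fin d) (𝕜 := ℝ) (A y) (invOp A y z) = z := by
  rw [invOp, ← mul_apply_eq_comp, ← map_mul, Matrix.mul_nonsing_inv _ (hA.isUnit_det y),
    map_one]
  rfl

theorem sum_mul_inner_invOp (hA : IsElliptic A K₁ K₂) (y z : Ed d) :
    ∑ i, ∑ j, A y i j * (⟪invOp A y z, EuclideanSpace.single i 1⟫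
      * ⟪invOp A y z, EuclideanSpace.single j 1⟫) = ⟪invOp A y z, z⟫ := by
  conv_rhs => rw [real_inner_comm, ← hA.apply_invOp y z, inner_toEuclideanCLM]
  refine Finset.sum_congr rfl fun i _ => Finset.sum_congr rfl fun j _ => ?_
  simp [EuclideanSpace.inner_single_right, hA.apply_invOp]
  ring

theorem sum_mul_inner_invOp_single (hA : IsElliptic A K₁ K₂) (y : Ed d) :
    ∑ i, ∑ j, A y i j * ⟪invOp A y (EuclideanSpace.single i 1), EuclideanSpace.single j 1⟫ = d := by
  have h : ∀ i j, ⟪invOp A y (EuclideanSpace.single i 1), EuclideanSpace.single j 1⟫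
      = (A y)⁻¹ j i := by
    intro i j
    rw [invOp, inner_toEuclideanCLM]
    simp
  simp_rw [h]
  have h2 : ∀ i, ∑ j, A y i j * (A y)⁻¹ j i = 1 := by
    intro i
    rw [← Matrix.mul_apply, Matrix.mul_nonsing_inv _ (hA.isUnit_det y), Matrix.one_apply_eq]
  simp [h2]

theorem norm_invOp_le (hA : IsElliptic A K₁ K₂) (y z : Ed d) : ‖invOp A y z‖ ≤ K₁ * ‖z‖ := by
  set w := invOp A y z with hw
  have h1 := hA.low y w
  rw [← inner_toEuclideanCLM, hw, hA.apply_invOp, ← hw] at h1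
  have h2 := real_inner_le_norm z w
  have h3 : K₁⁻¹ * ‖w‖ ^ 2 ≤ ‖z‖ * ‖w‖ := h1.trans h2
  rcases (norm_nonneg w).eq_or_lt with h | h
  · rw [← h]; exact mul_nonneg hA.pos.le (norm_nonneg _)
  · rw [inv_mul_le_iff₀ hA.pos] at h3
    nlinarith

theorem le_inner_invOp (hA : IsElliptic A K₁ K₂) (y z : Ed d) :
    K₁⁻¹ * ‖z‖ ^ 2 ≤ ⟪invOp A y z, z⟫ := by
  set w := invOp A y z with hw
  set T := Matrix.toEuclideanCLM (n := Fin d) (𝕜 := ℝ) (A y) with hT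
  have hTw : T w = z := hA.apply_invOp y z
  have hTs : ⟪T z, w⟫ = ‖z‖ ^ 2 := by
    rw [hT, inner_toEuclideanCLM, ← real_inner_self_eq_norm_sq]
    nth_rw 3 [← hTw]
    rw [real_inner_comm, hT, inner_toEuclideanCLM, Finset.sum_comm]
    refine Finset.sum_congr rfl fun i _ => Finset.sum_congr rfl fun j _ => ?_
    rw [(hA.symm y).apply i j]; ring
  have h0 := (mul_nonneg (inv_nonneg.2 hA.pos.le) (sq_nonneg _)).trans (hA.low y (w - K₁⁻¹ • z))
  rw [← inner_toEuclideanCLM, ← hT] at h0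
  have h1 := hA.up y z
  rw [← inner_toEuclideanCLM, ← hT] at h1
  rw [map_sub, map_smul, hTw, inner_sub_left, inner_sub_right, inner_sub_right, inner_smul_left,
    inner_smul_right, inner_smul_left, inner_smul_right, hTs, real_inner_self_eq_norm_sq,
    real_inner_comm] at h0
  simp only [conj_trivial] at h0
  have h2 : K₁⁻¹ * (K₁⁻¹ * ⟪T z, z⟫) ≤ K₁⁻¹ * ‖z‖ ^ 2 := by
    refine mul_le_mul_of_nonneg_left ?_ (inv_nonneg.2 hA.pos.le)
    rw [inv_mul_le_iff₀ hA.pos]; exact h1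
  linarith

theorem continuous_invOp (hA : IsElliptic A K₁ K₂) : Continuous (invOp A) := by
  have hc : Continuous A := continuous_matrix fun i j => hA.continuous_apply i j
  have h1 : Continuous fun y => (A y)⁻¹ := by
    simp only [Matrix.inv_def, Ring.inverse_eq_inv']
    exact (hc.matrix_det.inv₀ fun y => (hA.posDef y).det_pos.ne').smul hc.matrix_adjugate
  let e : Matrix (Fin d) (Fin d) ℝ →ₗ[ℝ] (Ed d →L[ℝ] Ed d) :=
    { toFun := Matrix.toEuclideanCLM (n := Fin d) (𝕜 := ℝ)
      map_add' := map_add _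
      map_smul' := fun c M => map_smul _ c M }
  exact e.continuous_of_finiteDimensional.comp h1

end IsElliptic
end InverseForm

section Parametrix

/-- The Gaussian kernel with coefficients frozen at `y`, up to a normalising factor. -/
def parametrix (A : Ed d → Matrix (Fin d) (Fin d) ℝ) (t : ℝ) (x y : Ed d) : ℝ :=
  t ^ (-(d : ℝ) / 2) * exp (-(4 * t)⁻¹ * ⟪invOp A y (x - y), x - y⟫)

/-- The time derivative of `parametrix`. -/
def parametrixDeriv (A : Ed d → Matrix (Fin d) (Fin d) ℝ) (t : ℝ) (x y : Ed d) : ℝ :=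
  (⟪invOp A y (x - y), x - y⟫ / (4 * t ^ 2) - d / (2 * t)) * parametrix A t x y

variable {A : Ed d → Matrix (Fin d) (Fin d) ℝ} {K₁ K₂ : ℝ}

theorem hasDerivAt_parametrix (A : Ed d → Matrix (Fin d) (Fin d) ℝ) {t : ℝ} (ht : 0 < t)
    (x y : Ed d) :
    HasDerivAt (fun s => parametrix A s x y) (parametrixDeriv A t x y) t := by
  have h1 : HasDerivAt (fun s : ℝ => s ^ (-(d : ℝ) / 2))
      (-(d : ℝ) / 2 * t ^ (-(d : ℝ) / 2 - 1)) t :=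
    Real.hasDerivAt_rpow_const (Or.inl ht.ne')
  have h2 : HasDerivAt (fun s : ℝ => -(4 * s)⁻¹ * ⟪invOp A y (x - y), x - y⟫)
      (⟪invOp A y (x - y), x - y⟫ / (4 * t ^ 2)) t := by
    have h3 : HasDerivAt (fun s : ℝ => 4 * s) 4 t := by simpa using (hasDerivAt_id t).const_mul 4
    have h4 := ((h3.fun_inv (by positivity)).neg).mul_const ⟪invOp A y (x - y), x - y⟫
    refine h4.congr_deriv ?_
    field_simp
  refine (h1.mul h2.exp).congr_deriv ?_
  rw [parametrixDeriv, parametrix, Real.rpow_sub_one ht.ne']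
  field_simp
  ring

theorem contDiff_parametrix (A : Ed d → Matrix (Fin d) (Fin d) ℝ) (t : ℝ) (y : Ed d) {n} :
    ContDiff ℝ n fun x => parametrix A t x y := by
  unfold parametrix
  have h : ContDiff ℝ n fun x : Ed d => x - y := contDiff_id.sub contDiff_const
  exact contDiff_const.mul ((contDiff_const.mul (((invOp A y).contDiff.comp h).inner ℝ h)).exp)

theorem fderiv_parametrix (hA : IsElliptic A K₁ K₂) (t : ℝ) (x y : Ed d) :
    fderiv ℝ (fun x => parametrix A t x y) x
      = (-(2 * t)⁻¹ * parametrix A t x y) • innerSL ℝ (invOp A y (x - y)) := by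
  have h : HasFDerivAt (fun x : Ed d => x - y) (ContinuousLinearMap.id ℝ (Ed d)) x :=
    (hasFDerivAt_id x).sub_const y
  have h1 := ((invOp A y).hasFDerivAt.comp x h).inner ℝ h
  have h2 := ((h1.const_mul (-(4 * t)⁻¹)).exp).const_mul (t ^ (-(d : ℝ) / 2))
  refine (HasFDerivAt.fderiv h2).trans ?_
  ext v
  have hs : ⟪x - y, invOp A y v⟫ = ⟪invOp A y (x - y), v⟫ := (hA.inner_invOp_comm y _ _).symm
  simp [parametrix, fderivInnerCLM_apply, hs, real_inner_comm, -map_sub]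
  ring

theorem fderiv_fderiv_parametrix (hA : IsElliptic A K₁ K₂) (t : ℝ) (x y v w : Ed d) :
    fderiv ℝ (fderiv ℝ (fun x => parametrix A t x y)) x v w
      = ((4 * t ^ 2)⁻¹ * (⟪invOp A y (x - y), v⟫ * ⟪invOp A y (x - y), w⟫)
        - (2 * t)⁻¹ * ⟪invOp A y v, w⟫) * parametrix A t x y := by
  have h0 : fderiv ℝ (fun x => parametrix A t x y)
      = fun x => (-(2 * t)⁻¹ * parametrix A t x y) • innerSL ℝ (invOp A y (x - y)) :=
    funext fun x => fderiv_parametrix hA t x y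
  have h : HasFDerivAt (fun x : Ed d => x - y) (ContinuousLinearMap.id ℝ (Ed d)) x :=
    (hasFDerivAt_id x).sub_const y
  have h1 : HasFDerivAt (fun x => innerSL ℝ (invOp A y (x - y)))
      ((innerSL ℝ).comp ((invOp A y).comp (ContinuousLinearMap.id ℝ (Ed d)))) x :=
    (innerSL ℝ).hasFDerivAt.comp x ((invOp A y).hasFDerivAt.comp x h)
  have h2 : HasFDerivAt (fun x => parametrix A t x y)
      ((-(2 * t)⁻¹ * parametrix A t x y) • innerSL ℝ (invOp A y (x - y))) x := by
    rw [← fderiv_parametrix hA]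
    exact ((contDiff_parametrix A t y (n := 1)).differentiable (by norm_num) x).hasFDerivAt
  have h3 := (h2.const_mul (-(2 * t)⁻¹)).smul h1
  have h4 := h3.fderiv
  rw [h0]
  refine (congrArg (fun T => T v w) h4).trans ?_
  simp [-map_sub]
  ring

theorem sum_mul_hess2_parametrix (hA : IsElliptic A K₁ K₂) (t : ℝ) (x y : Ed d) :
    ∑ i, ∑ j, A y i j * hess2 (fun x => parametrix A t x y) x i j = parametrixDeriv A t x y := by
  simp only [hess2_eq, fderiv_fderiv_parametrix hA, ← mul_assoc, ← Finset.sum_mul]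
  rw [parametrixDeriv]
  congr 1
  have h1 := hA.sum_mul_inner_invOp y (x - y)
  have h2 := hA.sum_mul_inner_invOp_single y
  rw [div_eq_inv_mul, div_eq_inv_mul, ← h1, ← h2]
  simp only [Finset.mul_sum, ← Finset.sum_sub_distrib]
  refine Finset.sum_congr rfl fun i _ => Finset.sum_congr rfl fun j _ => ?_
  ring

theorem parametrix_nonneg (A : Ed d → Matrix (Fin d) (Fin d) ℝ) {t : ℝ} (ht : 0 < t) (x y : Ed d) :
    0 ≤ parametrix A t x y := by
  unfold parametrix; positivity

theorem parametrix_le (hA : IsElliptic A K₁ K₂) {t : ℝ} (ht : 0 < t) (x y : Ed d) :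
    parametrix A t x y ≤ t ^ (-(d : ℝ) / 2) * exp (-(4 * K₁ * t)⁻¹ * ‖x - y‖ ^ 2) := by
  unfold parametrix
  refine mul_le_mul_of_nonneg_left (exp_le_exp.2 ?_) (by positivity)
  have h := mul_le_mul_of_nonneg_left (hA.le_inner_invOp y (x - y))
    (inv_nonneg.2 (by positivity : (0 : ℝ) ≤ 4 * t))
  have h2 : (4 * K₁ * t)⁻¹ = (4 * t)⁻¹ * K₁⁻¹ := by rw [← mul_inv]; ring_nf
  rw [h2]
  linarith

theorem continuous_parametrix (hA : IsElliptic A K₁ K₂) (t : ℝ) :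
    Continuous fun p : Ed d × Ed d => parametrix A t p.1 p.2 := by
  unfold parametrix
  have h : Continuous fun p : Ed d × Ed d => p.1 - p.2 := by fun_prop
  have h1 : Continuous fun p : Ed d × Ed d => invOp A p.2 (p.1 - p.2) :=
    (hA.continuous_invOp.comp continuous_snd).clm_apply h
  exact continuous_const.mul ((continuous_const.mul (h1.inner h)).rexp)

theorem continuous_parametrixDeriv (hA : IsElliptic A K₁ K₂) (t : ℝ) :
    Continuous fun p : Ed d × Ed d => parametrixDeriv A t p.1 p.2 := by
  unfold parametrixDeriv
  have h : Continuous fun p : Ed d × Ed d => p.1 - p.2 := by fun_prop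
  have h1 : Continuous fun p : Ed d × Ed d => invOp A p.2 (p.1 - p.2) :=
    (hA.continuous_invOp.comp continuous_snd).clm_apply h
  exact (((h1.inner h).div_const _).sub continuous_const).mul (continuous_parametrix hA t)

theorem cube_add_self_add_one_le_exp {K s : ℝ} (hK : 0 < K) (hs : 0 ≤ s) :
    s ^ 3 + s + 1 ≤ 3 * (1 + 128 * K ^ 2) * exp ((8 * K)⁻¹ * s ^ 2) := by
  set u := (8 * K)⁻¹ * s ^ 2 with hu
  have hu0 : 0 ≤ u := by positivity
  have hs2 : s ^ 2 = 8 * K * u := by rw [hu]; field_simp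
  have he := Real.quadratic_le_exp_of_nonneg hu0
  have h4 : s ^ 4 = 64 * K ^ 2 * u ^ 2 := by
    have : s ^ 4 = (s ^ 2) ^ 2 := by ring
    rw [this, hs2]; ring
  have h5 : s ^ 3 + s + 1 ≤ 3 * (1 + s ^ 4) := by
    rcases le_total s 1 with h | h
    · have : s ^ 3 ≤ 1 := pow_le_one₀ hs h
      nlinarith [pow_nonneg hs 4]
    · have h3 : s ^ 3 ≤ s ^ 4 := pow_le_pow_right₀ h (by norm_num)
      have h1 : s ^ 1 ≤ s ^ 4 := pow_le_pow_right₀ h (by norm_num)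
      nlinarith
  have h6 : s ^ 4 ≤ 128 * K ^ 2 * exp u := by
    rw [h4]
    have : u ^ 2 ≤ 2 * exp u := by nlinarith
    nlinarith [sq_nonneg K]
  have h7 : 1 ≤ exp u := Real.one_le_exp hu0
  nlinarith

end Parametrix

section ParametrixRemainder

variable {A : Ed d → Matrix (Fin d) (Fin d) ℝ} {K₁ K₂ : ℝ}

theorem abs_sum_sum_le {f : Fin d → Fin d → ℝ} {c : ℝ} (h : ∀ i j, |f i j| ≤ c) :
    |∑ i, ∑ j, f i j| ≤ d ^ 2 * c := by
  calc |∑ i, ∑ j, f i j| ≤ ∑ _i : Fin d, ∑ _j : Fin d, c := by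
        refine (Finset.abs_sum_le_sum_abs _ _).trans (Finset.sum_le_sum fun i _ => ?_)
        exact (Finset.abs_sum_le_sum_abs _ _).trans (Finset.sum_le_sum fun j _ => h i j)
    _ = _ := by simp; ring

/-- The error made when the time derivative of the cut-off parametrix is replaced by the
action of the operator `Lop A B`. -/
def parametrixRem (A : Ed d → Matrix (Fin d) (Fin d) ℝ) (B : Ed d → Ed d) (η : Ed d → ℝ) (t : ℝ)
    (x y : Ed d) : ℝ :=
  η x * parametrixDeriv A t x y - Lop A B (fun x' => η x' * parametrix A t x' y) x

theorem parametrixRem_eq (hA : IsElliptic A K₁ K₂) {B : Ed d → Ed d} {η : Ed d → ℝ}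
    (hη : ContDiff ℝ 2 η) (t : ℝ) (x y : Ed d) :
    parametrixRem A B η t x y =
      η x * (∑ i, ∑ j, (A y i j - A x i j) * hess2 (fun x => parametrix A t x y) x i j)
      - η x * (-(2 * t)⁻¹ * parametrix A t x y * ⟪invOp A y (x - y), B x⟫)
      - parametrix A t x y * Lop A B η x
      - 2 * ∑ i, ∑ j, A x i j * (fderiv ℝ η x (EuclideanSpace.single i 1)
        * (-(2 * t)⁻¹ * parametrix A t x y
          * ⟪invOp A y (x - y), EuclideanSpace.single j 1⟫)) := by
  have hg : ∀ v, fderiv ℝ (fun x => parametrix A t x y) x v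
      = -(2 * t)⁻¹ * parametrix A t x y * ⟪invOp A y (x - y), v⟫ := fun v => by
    rw [fderiv_parametrix hA]; simp [-map_sub]
  rw [parametrixRem, Lop_mul (hA.symm x) hη (contDiff_parametrix A t y),
    ← sum_mul_hess2_parametrix hA]
  simp only [sub_mul, Finset.sum_sub_distrib, hg]
  nth_rw 1 [Lop]
  rw [inner_gradient_eq, hg]
  ring

theorem add_linear_cubic_le {c₁ c₂ c₃ c₄ c₅ s : ℝ} (h₁ : 0 ≤ c₁) (h₂ : 0 ≤ c₂) (h₃ : 0 ≤ c₃)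
    (h₄ : 0 ≤ c₄) (h₅ : 0 ≤ c₅) (hs : 0 ≤ s) :
    c₁ * s ^ 3 + c₂ * s + c₃ * s + c₄ + c₅ * s ≤ (c₁ + c₂ + c₃ + c₄ + c₅) * (s ^ 3 + s + 1) := by
  have h : 0 ≤ c₁ * (s + 1) + (c₂ + c₃ + c₅) * (s ^ 3 + 1) + c₄ * (s ^ 3 + s) := by positivity
  linarith

set_option maxHeartbeats 1000000 in
/-- The Lipschitz continuity of the coefficients makes the parametrix error integrable in time. -/
theorem exists_abs_parametrixRem_le (hA : IsElliptic A K₁ K₂) {η : Ed d → ℝ} {N G H : ℝ}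
    (hN : 0 ≤ N) (hη : ContDiff ℝ 2 η) (hη1 : ∀ x, |η x| ≤ 1) (hG : ∀ x, ‖gradient η x‖ ≤ G)
    (hH : ∀ x, ‖iteratedFDeriv ℝ 2 η x‖ ≤ H) :
    ∃ D, 0 ≤ D ∧ ∀ B : Ed d → Ed d, (∀ x ∈ tsupport η, ‖B x‖ ≤ N) → ∀ t ∈ Ioc (0 : ℝ) 1,
      ∀ x y, |parametrixRem A B η t x y| ≤
        D * (√t)⁻¹ * (t ^ (-(d : ℝ) / 2) * exp (-(8 * K₁ * t)⁻¹ * ‖x - y‖ ^ 2)) := by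
  have hK := hA.pos
  have hK' := hA.pos'
  have hG0 : 0 ≤ G := (norm_nonneg _).trans (hG 0)
  have hH0 : 0 ≤ H := (norm_nonneg _).trans (hH 0)
  set c₁ : ℝ := d ^ 2 * (K₂ * K₁ ^ 2) with hc₁
  set c₂ : ℝ := d ^ 2 * (K₂ * K₁) with hc₂
  set c₃ : ℝ := K₁ * N with hc₃
  set c₄ : ℝ := d ^ 2 * (2 * K₁) * H + N * G with hc₄
  set c₅ : ℝ := 2 * (d ^ 2 * (2 * K₁ * (G * K₁))) with hc₅
  have h₁ : 0 ≤ c₁ := by positivity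
  have h₂ : 0 ≤ c₂ := by positivity
  have h₃ : 0 ≤ c₃ := by positivity
  have h₄ : 0 ≤ c₄ := by positivity
  have h₅ : 0 ≤ c₅ := by positivity
  set c := c₁ + c₂ + c₃ + c₄ + c₅ with hc
  refine ⟨c * (3 * (1 + 128 * K₁ ^ 2)), by positivity, fun B hB t ht x y => ?_⟩
  have ht0 := ht.1
  by_cases hx : x ∈ tsupport η
  swap
  · have hx' : x ∉ tsupport fun x' => η x' * parametrix A t x' y := fun h =>
      hx (tsupport_mul_subset_left h)
    rw [parametrixRem, Lop_eq_zero_of_notMem_tsupport A B hx', image_eq_zero_of_notMem_tsupport hx]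
    simp only [zero_mul, sub_zero, abs_zero]
    positivity
  set r := √t with hr
  have hr0 : 0 < r := Real.sqrt_pos.2 ht0
  have hr1 : r ≤ 1 := by rw [hr]; exact Real.sqrt_le_one.2 ht.2
  have htr : t = r ^ 2 := (Real.sq_sqrt ht0.le).symm
  set z := x - y with hz
  set s := ‖z‖ / r with hs
  have hs0 : 0 ≤ s := by positivity
  have hzs : ‖z‖ = s * r := by rw [hs]; field_simp
  set p := parametrix A t x y with hp
  have hp0 : 0 ≤ p := parametrix_nonneg A ht0 x y
  have hTz : ‖invOp A y z‖ ≤ K₁ * (s * r) := by rw [← hzs]; exact hA.norm_invOp_le y z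
  have hTe : ∀ v, ‖v‖ ≤ 1 → |⟪invOp A y z, v⟫| ≤ K₁ * (s * r) := fun v hv =>
    (abs_real_inner_le_norm _ _).trans
      ((mul_le_of_le_one_right (norm_nonneg _) hv).trans hTz)
  have he : ∀ i : Fin d, ‖(EuclideanSpace.single i 1 : Ed d)‖ ≤ 1 := fun i => by simp
  have b1 : |∑ i, ∑ j, (A y i j - A x i j) * hess2 (fun x => parametrix A t x y) x i j|
      ≤ (c₁ * s ^ 3 + c₂ * s) * (r⁻¹ * p) := by
    have : ∀ i j, |(A y i j - A x i j) * hess2 (fun x => parametrix A t x y) x i j|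
        ≤ (K₂ * (s * r)) * (((4 * t ^ 2)⁻¹ * ((K₁ * (s * r)) * (K₁ * (s * r)))
          + (2 * t)⁻¹ * K₁) * p) := by
      intro i j
      rw [abs_mul]
      refine mul_le_mul ?_ ?_ (abs_nonneg _) (by positivity)
      · rw [← hzs, hz, norm_sub_rev]; exact hA.lip y x i j
      · rw [hess2_eq, fderiv_fderiv_parametrix hA, abs_mul, abs_of_nonneg hp0]
        refine mul_le_mul_of_nonneg_right ?_ hp0
        refine (abs_sub _ _).trans (add_le_add ?_ ?_)
        · rw [abs_mul, abs_mul, abs_of_nonneg (by positivity : (0 : ℝ) ≤ (4 * t ^ 2)⁻¹)]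
          refine mul_le_mul_of_nonneg_left ?_ (by positivity)
          exact mul_le_mul (hTe _ (he i)) (hTe _ (he j)) (abs_nonneg _) (by positivity)
        · rw [abs_mul, abs_of_nonneg (by positivity : (0 : ℝ) ≤ (2 * t)⁻¹)]
          refine mul_le_mul_of_nonneg_left ?_ (by positivity)
          refine (abs_real_inner_le_norm _ _).trans
            ((mul_le_of_le_one_right (norm_nonneg _) (he j)).trans ?_)
          exact (hA.norm_invOp_le y _).trans (mul_le_of_le_one_right hK.le (he i))
    refine (abs_sum_sum_le this).trans ?_
    have e : (d : ℝ) ^ 2 * (K₂ * (s * r) * (((4 * t ^ 2)⁻¹ * (K₁ * (s * r) * (K₁ * (s * r)))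
        + (2 * t)⁻¹ * K₁) * p)) = (c₁ / 4 * s ^ 3 + c₂ / 2 * s) * (r⁻¹ * p) := by
      rw [htr, hc₁, hc₂]; field_simp
    rw [e]
    refine mul_le_mul_of_nonneg_right ?_ (by positivity)
    nlinarith [mul_nonneg h₁ (pow_nonneg hs0 3), mul_nonneg h₂ hs0]
  have b2 : |-(2 * t)⁻¹ * p * ⟪invOp A y z, B x⟫| ≤ c₃ * s * (r⁻¹ * p) := by
    rw [abs_mul, abs_mul, abs_of_nonneg hp0, abs_neg,
      abs_of_nonneg (by positivity : (0 : ℝ) ≤ (2 * t)⁻¹)]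
    have : |⟪invOp A y z, B x⟫| ≤ K₁ * (s * r) * N :=
      (abs_real_inner_le_norm _ _).trans (mul_le_mul hTz (hB x hx) (norm_nonneg _) (by positivity))
    refine (mul_le_mul_of_nonneg_left this (by positivity)).trans ?_
    have e : (2 * t)⁻¹ * p * (K₁ * (s * r) * N) = c₃ / 2 * s * (r⁻¹ * p) := by
      rw [htr, hc₃]; field_simp
    rw [e]
    refine mul_le_mul_of_nonneg_right ?_ (by positivity)
    nlinarith [mul_nonneg h₃ hs0]
  have hrp : p ≤ r⁻¹ * p := le_mul_of_one_le_left hp0 ((one_le_inv₀ hr0).2 hr1)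
  have b3 : |p * Lop A B η x| ≤ c₄ * (r⁻¹ * p) := by
    rw [abs_mul, abs_of_nonneg hp0, mul_comm]
    refine mul_le_mul ?_ hrp hp0 h₄
    refine (abs_Lop_le (fun i j => hA.abs_apply_le x i j) η).trans ?_
    refine add_le_add (mul_le_mul_of_nonneg_left (hH x) (by positivity)) ?_
    exact mul_le_mul (hB x hx) (hG x) (norm_nonneg _) hN
  have b4 : |2 * ∑ i, ∑ j, A x i j * (fderiv ℝ η x (EuclideanSpace.single i 1)
        * (-(2 * t)⁻¹ * p * ⟪invOp A y z, EuclideanSpace.single j 1⟫))| ≤ c₅ * s * (r⁻¹ * p) := by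
    have : ∀ i j, |A x i j * (fderiv ℝ η x (EuclideanSpace.single i 1)
        * (-(2 * t)⁻¹ * p * ⟪invOp A y z, EuclideanSpace.single j 1⟫))|
        ≤ 2 * K₁ * (G * ((2 * t)⁻¹ * p * (K₁ * (s * r)))) := by
      intro i j
      rw [abs_mul]
      refine mul_le_mul (hA.abs_apply_le x i j) ?_ (abs_nonneg _) (by positivity)
      rw [abs_mul]
      refine mul_le_mul ?_ ?_ (abs_nonneg _) hG0
      · have := (fderiv ℝ η x).le_opNorm (EuclideanSpace.single i 1)
        rw [← norm_gradient_eq] at this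
        exact this.trans ((mul_le_of_le_one_right (norm_nonneg _) (he i)).trans (hG x))
      · rw [abs_mul, abs_mul, abs_of_nonneg hp0, abs_neg,
          abs_of_nonneg (by positivity : (0 : ℝ) ≤ (2 * t)⁻¹)]
        exact mul_le_mul_of_nonneg_left (hTe _ (he j)) (by positivity)
    rw [abs_mul, abs_two]
    refine (mul_le_mul_of_nonneg_left (abs_sum_sum_le this) (by norm_num)).trans ?_
    have e : 2 * ((d : ℝ) ^ 2 * (2 * K₁ * (G * ((2 * t)⁻¹ * p * (K₁ * (s * r))))))
        = c₅ / 2 * s * (r⁻¹ * p) := by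
      rw [htr, hc₅]; field_simp
    rw [e]
    refine mul_le_mul_of_nonneg_right ?_ (by positivity)
    nlinarith [mul_nonneg h₅ hs0]
  have hηx : ∀ u : ℝ, |η x * u| ≤ |u| := fun u => by
    rw [abs_mul]; exact mul_le_of_le_one_left (abs_nonneg _) (hη1 x)
  have htot : |parametrixRem A B η t x y| ≤ c * (s ^ 3 + s + 1) * (r⁻¹ * p) := by
    rw [parametrixRem_eq hA hη, ← hp, ← hz]
    refine (abs_sub _ _).trans ?_
    refine (add_le_add ((abs_sub _ _).trans (add_le_add ((abs_sub _ _).trans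
      (add_le_add ((hηx _).trans b1) ((hηx _).trans b2))) b3)) b4).trans ?_
    have e : (c₁ * s ^ 3 + c₂ * s) * (r⁻¹ * p) + c₃ * s * (r⁻¹ * p) + c₄ * (r⁻¹ * p)
        + c₅ * s * (r⁻¹ * p)
        = (c₁ * s ^ 3 + c₂ * s + c₃ * s + c₄ + c₅ * s) * (r⁻¹ * p) := by ring
    rw [e]
    refine mul_le_mul_of_nonneg_right ?_ (by positivity)
    exact add_linear_cubic_le h₁ h₂ h₃ h₄ h₅ hs0
  refine htot.trans ?_
  have hexp := cube_add_self_add_one_le_exp hK hs0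
  have hple := parametrix_le hA ht0 x y
  rw [← hp, ← hz] at hple
  have e1 : (8 * K₁)⁻¹ * s ^ 2 + -(4 * K₁ * t)⁻¹ * ‖z‖ ^ 2 = -(8 * K₁ * t)⁻¹ * ‖z‖ ^ 2 := by
    rw [hzs, htr]; field_simp; ring
  calc c * (s ^ 3 + s + 1) * (r⁻¹ * p)
      ≤ c * (3 * (1 + 128 * K₁ ^ 2) * exp ((8 * K₁)⁻¹ * s ^ 2)) *
        (r⁻¹ * (t ^ (-(d : ℝ) / 2) * exp (-(4 * K₁ * t)⁻¹ * ‖z‖ ^ 2))) := by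
        gcongr
    _ = c * (3 * (1 + 128 * K₁ ^ 2)) * r⁻¹ * (t ^ (-(d : ℝ) / 2) *
        (exp ((8 * K₁)⁻¹ * s ^ 2) * exp (-(4 * K₁ * t)⁻¹ * ‖z‖ ^ 2))) := by ring
    _ = _ := by rw [← Real.exp_add, e1]

theorem integral_gaussian_sub (K : ℝ) (hK : 0 < K) {t : ℝ} (ht : 0 < t) (x : Ed d) :
    ∫ y, t ^ (-(d : ℝ) / 2) * exp (-(K * t)⁻¹ * ‖x - y‖ ^ 2) = (π * K) ^ ((d : ℝ) / 2) := by
  have h := GaussianFourier.integral_rexp_neg_mul_sq_norm (V := Ed d) (b := (K * t)⁻¹)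
    (by positivity)
  have h2 := integral_sub_left_eq_self (fun z : Ed d => exp (-(K * t)⁻¹ * ‖z‖ ^ 2)) volume x
  rw [integral_const_mul, h2, h, finrank_euclideanSpace_fin]
  have e : π / (K * t)⁻¹ = π * K * t := by field_simp
  rw [e, Real.mul_rpow (by positivity) ht.le, mul_comm, mul_assoc, ← Real.rpow_add ht]
  simp [neg_div]

theorem integrable_gaussian (K : ℝ) (hK : 0 < K) {t : ℝ} (ht : 0 < t) :
    Integrable fun z : Ed d => exp (-(K * t)⁻¹ * ‖z‖ ^ 2) := by
  have h := GaussianFourier.integrable_cexp_neg_mul_sq_norm_add (V := Ed d)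
    (b := (((K * t)⁻¹ : ℝ) : ℂ)) (by rw [Complex.ofReal_re]; positivity) 0 0
  have h2 := h.norm
  refine h2.congr (Eventually.of_forall fun z => ?_)
  simp only [zero_mul, add_zero, inner_zero_left, Complex.ofReal_zero]
  rw [← Complex.ofReal_neg, ← Complex.ofReal_pow, ← Complex.ofReal_mul, ← Complex.ofReal_exp,
    Complex.norm_real, Real.norm_eq_abs, abs_of_pos (exp_pos _)]

end ParametrixRemainder

section ParametrixEstimate

variable {A : Ed d → Matrix (Fin d) (Fin d) ℝ} {K₁ K₂ : ℝ}

/-- The total mass of the parametrix kernel in the limit of small times. -/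
def gaussMass (A : Ed d → Matrix (Fin d) (Fin d) ℝ) (x : Ed d) : ℝ :=
  ∫ z, exp (-4⁻¹ * ⟪invOp A x z, z⟫)

theorem exp_invOp_le (hA : IsElliptic A K₁ K₂) (x z : Ed d) :
    exp (-4⁻¹ * ⟪invOp A x z, z⟫) ≤ exp (-(4 * K₁ * 1)⁻¹ * ‖z‖ ^ 2) := by
  refine exp_le_exp.2 ?_
  have h := hA.le_inner_invOp x z
  have e : (4 * K₁ * 1)⁻¹ = 4⁻¹ * K₁⁻¹ := by rw [mul_one, mul_inv]
  rw [e]; linarith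

theorem continuous_exp_invOp (hA : IsElliptic A K₁ K₂) {X : Type*} [TopologicalSpace X]
    {f g : X → Ed d} (hf : Continuous f) (hg : Continuous g) :
    Continuous fun a => exp (-4⁻¹ * ⟪invOp A (f a) (g a), g a⟫) :=
  (continuous_const.mul (((hA.continuous_invOp.comp hf).clm_apply hg).inner hg)).rexp

theorem continuous_gaussMass (hA : IsElliptic A K₁ K₂) : Continuous (gaussMass A) := by
  refine continuous_of_dominated (bound := fun z : Ed d => exp (-(4 * K₁ * 1)⁻¹ * ‖z‖ ^ 2))
    (fun x => ?_) (fun x => Eventually.of_forall fun z => ?_)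
    (integrable_gaussian (4 * K₁) (by linarith [hA.pos]) one_pos)
    (Eventually.of_forall fun z => ?_)
  · exact (continuous_exp_invOp hA continuous_const continuous_id).aestronglyMeasurable
  · rw [Real.norm_eq_abs, abs_of_pos (exp_pos _)]; exact exp_invOp_le hA x z
  · exact continuous_exp_invOp hA continuous_id continuous_const

theorem le_gaussMass (hA : IsElliptic A K₁ K₂) (x : Ed d) :
    (π * (4 / K₁)) ^ ((d : ℝ) / 2) ≤ gaussMass A x := by
  have hK := hA.pos
  have h := integral_gaussian_sub (d := d) (4 / K₁) (by positivity) one_pos 0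
  simp only [one_rpow, one_mul, zero_sub, norm_neg] at h
  rw [← h, gaussMass]
  refine integral_mono (integrable_gaussian (4 / K₁) (by positivity) one_pos) ?_ fun z => ?_
  · refine (integrable_gaussian (4 * K₁) (by positivity) one_pos).mono'
      (continuous_exp_invOp hA continuous_const continuous_id).aestronglyMeasurable
      (Eventually.of_forall fun z => ?_)
    rw [Real.norm_eq_abs, abs_of_pos (exp_pos _)]; exact exp_invOp_le hA x z
  · refine exp_le_exp.2 ?_
    have h1 : ⟪invOp A x z, z⟫ ≤ K₁ * ‖z‖ ^ 2 := by
      have := (real_inner_le_norm _ _).trans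
        (mul_le_mul_of_nonneg_right (hA.norm_invOp_le x z) (norm_nonneg z))
      nlinarith
    have e : (4 / K₁ * 1)⁻¹ = 4⁻¹ * K₁ := by field_simp
    rw [e]; linarith

theorem gaussMass_pos (hA : IsElliptic A K₁ K₂) (x : Ed d) : 0 < gaussMass A x := by
  have hK := hA.pos
  exact (by positivity : 0 < (π * (4 / K₁)) ^ ((d : ℝ) / 2)).trans_le (le_gaussMass hA x)

theorem integral_mul_parametrix_eq (A : Ed d → Matrix (Fin d) (Fin d) ℝ) (h : Ed d → ℝ) {t : ℝ}
    (ht : 0 < t) (x : Ed d) :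
    ∫ y, h y * parametrix A t x y
      = ∫ z, h (x - √t • z) * exp (-4⁻¹ * ⟪invOp A (x - √t • z) z, z⟫) := by
  have hr : 0 < √t := Real.sqrt_pos.2 ht
  have h1 := (integral_sub_left_eq_self (fun y => h y * parametrix A t x y) volume x).symm
  have h2 := Measure.integral_comp_smul (volume : Measure (Ed d))
    (fun z => h (x - z) * parametrix A t x (x - z)) (√t)
  have e : |(√t ^ d)⁻¹| = t ^ (-(d : ℝ) / 2) := by
    rw [abs_of_pos (by positivity), neg_div, Real.rpow_neg ht.le, Real.sqrt_eq_rpow,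
      ← Real.rpow_natCast, ← Real.rpow_mul ht.le]
    congr 2; ring
  rw [finrank_euclideanSpace_fin, e, smul_eq_mul, ← h1] at h2
  have h3 : ∫ y, h y * parametrix A t x y = (t ^ (-(d : ℝ) / 2))⁻¹ *
      ∫ z, h (x - √t • z) * parametrix A t x (x - √t • z) := by
    rw [h2]
    field_simp
  rw [h3, ← integral_const_mul]
  refine integral_congr_ae (Eventually.of_forall fun z => ?_)
  simp only [parametrix, sub_sub_cancel, map_smul, inner_smul_left, inner_smul_right, conj_trivial]
  have e2 : -(4 * t)⁻¹ * (√t * (√t * ⟪invOp A (x - √t • z) z, z⟫))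
      = -4⁻¹ * ⟪invOp A (x - √t • z) z, z⟫ := by
    rw [← mul_assoc √t, Real.mul_self_sqrt ht.le]; field_simp
  rw [e2]
  field_simp

theorem tendsto_integral_mul_parametrix (hA : IsElliptic A K₁ K₂) {h : Ed d → ℝ}
    (hc : Continuous h) (h1 : ∀ x, |h x| ≤ 1) (x : Ed d) :
    Tendsto (fun t => ∫ y, h y * parametrix A t x y) (𝓝[>] 0) (𝓝 (h x * gaussMass A x)) := by
  rw [gaussMass, ← integral_const_mul]
  have hlim : Tendsto (fun t => ∫ z, h (x - √t • z) * exp (-4⁻¹ * ⟪invOp A (x - √t • z) z, z⟫))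
      (𝓝[>] 0) (𝓝 (∫ z, h x * exp (-4⁻¹ * ⟪invOp A x z, z⟫))) := by
    refine tendsto_integral_filter_of_dominated_convergence
      (fun z : Ed d => exp (-(4 * K₁ * 1)⁻¹ * ‖z‖ ^ 2)) (Eventually.of_forall fun t => ?_)
      (Eventually.of_forall fun t => Eventually.of_forall fun z => ?_)
      (integrable_gaussian (4 * K₁) (by linarith [hA.pos]) one_pos)
      (Eventually.of_forall fun z => ?_)
    · have hl : Continuous fun z : Ed d => x - √t • z := by fun_prop
      exact ((hc.comp hl).mul (continuous_exp_invOp hA hl continuous_id)).aestronglyMeasurable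
    · rw [norm_mul, Real.norm_eq_abs, Real.norm_eq_abs, abs_of_pos (exp_pos _)]
      exact (mul_le_of_le_one_left (exp_pos _).le (h1 _)).trans (exp_invOp_le hA _ z)
    · have hl : Continuous fun t : ℝ => x - √t • z := by fun_prop
      have hcont : Continuous fun t : ℝ =>
          h (x - √t • z) * exp (-4⁻¹ * ⟪invOp A (x - √t • z) z, z⟫) :=
        (hc.comp hl).mul (continuous_exp_invOp hA hl continuous_const)
      have := (hcont.tendsto 0).mono_left (nhdsWithin_le_nhds (s := Ioi (0 : ℝ)))
      simpa using this
  refine hlim.congr' ?_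
  filter_upwards [self_mem_nhdsWithin] with t ht
  exact (integral_mul_parametrix_eq A h ht x).symm

theorem abs_integral_mul_parametrix_le (hA : IsElliptic A K₁ K₂) {h : Ed d → ℝ}
    (h1 : ∀ x, |h x| ≤ 1) {t : ℝ} (ht : 0 < t) (x : Ed d) :
    |∫ y, h y * parametrix A t x y| ≤ (π * (4 * K₁)) ^ ((d : ℝ) / 2) := by
  have hK := hA.pos
  rw [← integral_gaussian_sub (4 * K₁) (by positivity) ht x, ← Real.norm_eq_abs]
  refine norm_integral_le_of_norm_le ?_ (Eventually.of_forall fun y => ?_)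
  · exact ((integrable_gaussian (4 * K₁) (by positivity) ht).comp_sub_left x).const_mul _
  · rw [norm_mul, Real.norm_eq_abs, Real.norm_eq_abs, abs_of_nonneg (parametrix_nonneg A ht x y)]
    exact (mul_le_of_le_one_left (parametrix_nonneg A ht x y) (h1 _)).trans
      (parametrix_le hA ht x y)

theorem integrable_Lop (hA : IsElliptic A K₁ K₂) {B : Ed d → Ed d} (hB : Measurable B)
    {φ : Ed d → ℝ} (hφ : ContDiff ℝ 2 φ) (hc : HasCompactSupport φ) {N : ℝ}
    (hN : ∀ x ∈ tsupport φ, ‖B x‖ ≤ N) (σ : Measure (Ed d)) [IsFiniteMeasure σ] :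
    Integrable (Lop A B φ) σ := by
  have hb : Integrable (fun x => d ^ 2 * (2 * K₁) * ‖iteratedFDeriv ℝ 2 φ x‖
      + N * ‖gradient φ x‖) σ := by
    refine Integrable.add (Integrable.const_mul ?_ _) (Integrable.const_mul ?_ _)
    · exact (hφ.continuous_iteratedFDeriv (m := 2) le_rfl).norm.integrable_of_hasCompactSupport
        ((hc.iteratedFDeriv 2).norm)
    · simp only [norm_gradient_eq]
      exact (hφ.continuous_fderiv (by norm_num)).norm.integrable_of_hasCompactSupport
        ((hc.fderiv ℝ).norm)
  refine hb.mono' (measurable_Lop hA.continuous_apply hB hφ).aestronglyMeasurable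
    (Eventually.of_forall fun x => ?_)
  rw [Real.norm_eq_abs]
  have hK := hA.pos
  by_cases hx : x ∈ tsupport φ
  · refine (abs_Lop_le (fun i j => hA.abs_apply_le x i j) φ).trans ?_
    gcongr
    exact hN x hx
  · rw [Lop_eq_zero_of_notMem_tsupport A B hx, abs_zero, norm_gradient_eq]
    have : fderiv ℝ φ x = 0 := image_eq_zero_of_notMem_tsupport
      (fun h => hx (tsupport_fderiv_subset ℝ h))
    rw [this, norm_zero, mul_zero, add_zero]
    positivity

/-- The measure `η σ` regularised by the parametrix at time `t`. -/
def smoothing (A : Ed d → Matrix (Fin d) (Fin d) ℝ) (η : Ed d → ℝ) (σ : Measure (Ed d)) (t : ℝ)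
    (y : Ed d) : ℝ :=
  ∫ x, η x * parametrix A t x y ∂σ

/-- The measure `η σ` is approximated at rate `√t` by its regularisations. -/
def ParametrixBound (A : Ed d → Matrix (Fin d) (Fin d) ℝ) (η θ : Ed d → ℝ) (D : ℝ)
    (σ : Measure (Ed d)) : Prop :=
  ∀ f : Ed d → ℝ, Continuous f → (∀ x, |f x| ≤ 1) → ∀ t ∈ Ioc (0 : ℝ) 1,
    |∫ x, η x * gaussMass A x * f x ∂σ - ∫ y, θ y * f y * smoothing A η σ t y| ≤ D * √t

theorem abs_sub_le_two_mul_sqrt {F F' : ℝ → ℝ} {C : ℝ}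
    (hF : ∀ t ∈ Ioc (0 : ℝ) 1, HasDerivAt F (F' t) t)
    (hF' : ∀ t ∈ Ioc (0 : ℝ) 1, |F' t| ≤ C * (√t)⁻¹) {l : ℝ}
    (hl : Tendsto F (𝓝[>] 0) (𝓝 l)) {t : ℝ} (ht : t ∈ Ioc (0 : ℝ) 1) :
    |l - F t| ≤ 2 * C * √t := by
  have key : ∀ ε : ℝ, |ε| = 1 → ∀ s ∈ Ioc (0 : ℝ) t,
      2 * C * √s - ε * F s ≤ 2 * C * √t - ε * F t := by
    intro ε hε s hs
    have hd : ∀ u ∈ Icc s t, HasDerivAt (fun u => 2 * C * √u - ε * F u)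
        (2 * C * (1 / (2 * √u)) - ε * F' u) u := fun u hu =>
      ((Real.hasDerivAt_sqrt (hs.1.trans_le hu.1).ne').const_mul (2 * C)).sub
        ((hF u ⟨hs.1.trans_le hu.1, hu.2.trans ht.2⟩).const_mul ε)
    have hm : MonotoneOn (fun u => 2 * C * √u - ε * F u) (Icc s t) := by
      refine monotoneOn_of_deriv_nonneg (convex_Icc s t)
        (fun u hu => (hd u hu).continuousAt.continuousWithinAt)
        (fun u hu => (hd u (interior_subset hu)).differentiableAt.differentiableWithinAt)
        fun u hu => ?_
      have hu' := interior_subset hu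
      rw [(hd u hu').deriv]
      have h1 := hF' u ⟨hs.1.trans_le hu'.1, hu'.2.trans ht.2⟩
      have h2 : ε * F' u ≤ |F' u| := (le_abs_self _).trans (by rw [abs_mul, hε, one_mul])
      have h3 : 2 * C * (1 / (2 * √u)) = C * (√u)⁻¹ := by field_simp
      rw [h3]; linarith
    exact hm ⟨le_rfl, hs.2⟩ ⟨hs.2, le_rfl⟩ hs.2
  have hlim : ∀ ε : ℝ, |ε| = 1 → -(ε * l) ≤ 2 * C * √t - ε * F t := by
    intro ε hε
    have h1 : Tendsto (fun s => 2 * C * √s - ε * F s) (𝓝[>] 0) (𝓝 (2 * C * √0 - ε * l)) :=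
      (((Real.continuous_sqrt.tendsto 0).mono_left nhdsWithin_le_nhds).const_mul (2 * C)).sub
        (hl.const_mul ε)
    rw [Real.sqrt_zero, mul_zero, zero_sub] at h1
    refine le_of_tendsto h1 ?_
    filter_upwards [Ioc_mem_nhdsGT ht.1] with s hs using key ε hε s hs
  have a := hlim 1 (by simp)
  have b := hlim (-1) (by simp)
  rw [abs_le]
  constructor <;> linarith

variable {η θ : Ed d → ℝ}

theorem integrable_cutoff_mul (σ : Measure (Ed d)) [IsFiniteMeasure σ] (hη : Continuous η)
    (hηc : HasCompactSupport η) (hθ : Continuous θ) (hθc : HasCompactSupport θ)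
    {g : Ed d × Ed d → ℝ} (hg : Continuous g) :
    Integrable (fun p : Ed d × Ed d => θ p.2 * (η p.1 * g p)) (σ.prod volume) := by
  have hc : Continuous fun p : Ed d × Ed d => θ p.2 * (η p.1 * g p) :=
    (hθ.comp continuous_snd).mul ((hη.comp continuous_fst).mul hg)
  refine hc.integrable_of_hasCompactSupport ?_
  refine HasCompactSupport.intro (hηc.isCompact.prod hθc.isCompact) fun p hp => ?_
  rw [mem_prod, not_and_or] at hp
  rcases hp with h | h
  · rw [image_eq_zero_of_notMem_tsupport h]; simp
  · rw [image_eq_zero_of_notMem_tsupport h]; simp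

theorem hasDerivAt_integral_parametrix (hA : IsElliptic A K₁ K₂) (σ : Measure (Ed d))
    [IsFiniteMeasure σ] (hη : Continuous η) (hηc : HasCompactSupport η) (hθ : Continuous θ)
    (hθc : HasCompactSupport θ) {t : ℝ} (ht : 0 < t) :
    HasDerivAt (fun s => ∫ p : Ed d × Ed d, θ p.2 * (η p.1 * parametrix A s p.1 p.2) ∂σ.prod volume)
      (∫ p : Ed d × Ed d, θ p.2 * (η p.1 * parametrixDeriv A t p.1 p.2) ∂σ.prod volume) t := by
  have hK := hA.pos
  set g : Ed d × Ed d → ℝ := fun p =>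
    (K₁ * ‖p.1 - p.2‖ ^ 2 / (4 * (t / 2) ^ 2) + d / (2 * (t / 2))) * (t / 2) ^ (-(d : ℝ) / 2)
    with hg
  have hgc : Continuous g := by fun_prop
  refine (hasDerivAt_integral_of_dominated_loc_of_deriv_le
    (bound := fun p : Ed d × Ed d => |θ p.2| * (|η p.1| * g p))
    (F' := fun s p => θ p.2 * (η p.1 * parametrixDeriv A s p.1 p.2))
    (ball_mem_nhds t (half_pos ht)) (Eventually.of_forall fun s => ?_) ?_ ?_
    (Eventually.of_forall fun p s hs => ?_) ?_ (Eventually.of_forall fun p s hs => ?_)).2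
  · exact (integrable_cutoff_mul σ hη hηc hθ hθc (continuous_parametrix hA s)).aestronglyMeasurable
  · exact integrable_cutoff_mul σ hη hηc hθ hθc (continuous_parametrix hA t)
  · exact (integrable_cutoff_mul σ hη hηc hθ hθc
      (continuous_parametrixDeriv hA t)).aestronglyMeasurable
  · have hs2 : t / 2 < s := by
      rw [mem_ball, Real.dist_eq, abs_lt] at hs; linarith
    have hs0 : 0 < s := (half_pos ht).trans hs2
    rw [norm_mul, norm_mul, Real.norm_eq_abs, Real.norm_eq_abs, Real.norm_eq_abs]
    refine mul_le_mul_of_nonneg_left (mul_le_mul_of_nonneg_left ?_ (abs_nonneg _)) (abs_nonneg _)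
    rw [parametrixDeriv, abs_mul]
    refine mul_le_mul ?_ ?_ (abs_nonneg _) (by positivity)
    · refine (abs_sub _ _).trans (add_le_add ?_ ?_)
      · rw [abs_div, abs_of_pos (by positivity : 0 < 4 * s ^ 2)]
        refine div_le_div₀ (by positivity) ?_ (by positivity) (by gcongr)
        refine (abs_real_inner_le_norm _ _).trans ?_
        refine (mul_le_mul_of_nonneg_right (hA.norm_invOp_le _ _) (norm_nonneg _)).trans_eq ?_
        ring
      · rw [abs_of_nonneg (by positivity)]
        gcongr
    · rw [abs_of_nonneg (parametrix_nonneg A hs0 _ _)]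
      refine (parametrix_le hA hs0 _ _).trans ?_
      refine (mul_le_of_le_one_right (by positivity) ?_).trans ?_
      · rw [exp_le_one_iff]
        have : 0 ≤ (4 * K₁ * s)⁻¹ * ‖p.1 - p.2‖ ^ 2 := by positivity
        linarith
      · refine Real.rpow_le_rpow_of_nonpos (half_pos ht) hs2.le ?_
        rw [neg_div]
        exact neg_nonpos.2 (by positivity)
  · exact integrable_cutoff_mul σ hη.abs hηc.norm hθ.abs hθc.norm hgc
  · have hs0 : 0 < s := by
      rw [mem_ball, Real.dist_eq, abs_lt] at hs; linarith
    exact ((hasDerivAt_parametrix A hs0 p.1 p.2).const_mul _).const_mul _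

theorem integrable_gaussian_prod (σ : Measure (Ed d)) [IsFiniteMeasure σ] {K : ℝ} (hK : 0 < K)
    {t : ℝ} (ht : 0 < t) :
    Integrable (fun p : Ed d × Ed d =>
      t ^ (-(d : ℝ) / 2) * exp (-(K * t)⁻¹ * ‖p.1 - p.2‖ ^ 2)) (σ.prod volume) := by
  have hc : Continuous fun p : Ed d × Ed d =>
      t ^ (-(d : ℝ) / 2) * exp (-(K * t)⁻¹ * ‖p.1 - p.2‖ ^ 2) := by fun_prop
  rw [integrable_prod_iff hc.aestronglyMeasurable]
  refine ⟨Eventually.of_forall fun x =>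
    ((integrable_gaussian K hK ht).comp_sub_left x).const_mul _, ?_⟩
  have : (fun x : Ed d => ∫ y, ‖t ^ (-(d : ℝ) / 2) * exp (-(K * t)⁻¹ * ‖x - y‖ ^ 2)‖)
      = fun _ => (π * K) ^ ((d : ℝ) / 2) := by
    funext x
    rw [← integral_gaussian_sub K hK ht x]
    refine integral_congr_ae (Eventually.of_forall fun y => ?_)
    exact Real.norm_of_nonneg (by positivity)
  rw [this]
  exact integrable_const _

theorem continuous_parametrixDeriv_left (hA : IsElliptic A K₁ K₂) (t : ℝ) (y : Ed d) :
    Continuous fun x => parametrixDeriv A t x y := by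
  have h : Continuous fun x : Ed d => (x, y) := by fun_prop
  change Continuous ((fun p : Ed d × Ed d => parametrixDeriv A t p.1 p.2) ∘ fun x => (x, y))
  exact (continuous_parametrixDeriv hA t).comp h

set_option maxHeartbeats 1000000 in
/-- Cut-off solutions are approximated at a uniform rate by their regularisations. -/
theorem exists_parametrixBound (hA : IsElliptic A K₁ K₂) (hη : ContDiff ℝ 2 η)
    (hηc : HasCompactSupport η) (hη1 : ∀ x, |η x| ≤ 1) (hθ : Continuous θ)
    (hθc : HasCompactSupport θ) (hθ1 : ∀ x, |θ x| ≤ 1) (hηθ : ∀ x, η x ≠ 0 → θ x = 1)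
    {N Λ : ℝ} (hN : 0 ≤ N) (hΛ : 0 ≤ Λ) :
    ∃ D, 0 ≤ D ∧ ∀ B : Ed d → Ed d, Measurable B → (∀ x ∈ tsupport η, ‖B x‖ ≤ N) →
      ∀ σ : Measure (Ed d), IsProbabilityMeasure σ → ∀ κ : ℝ, |κ| ≤ Λ →
      (∀ φ : Ed d → ℝ, ContDiff ℝ 2 φ → tsupport φ ⊆ tsupport η →
        ∫ x, Lop A B φ x ∂σ = κ * φ 0) →
      ParametrixBound A η θ D σ := by
  have hK := hA.pos
  obtain ⟨G, hG⟩ : ∃ G, ∀ x, ‖gradient η x‖ ≤ G := by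
    obtain ⟨G, hG⟩ := (hη.continuous_fderiv (by norm_num)).bounded_above_of_compact_support
      (hηc.fderiv ℝ)
    exact ⟨G, fun x => by rw [norm_gradient_eq]; exact hG x⟩
  obtain ⟨H, hH⟩ := (hη.continuous_iteratedFDeriv (m := 2) le_rfl).bounded_above_of_compact_support
      (hηc.iteratedFDeriv 2)
  obtain ⟨D, hD0, hD⟩ := exists_abs_parametrixRem_le hA hN hη hη1 hG hH
  set C := D * (π * (8 * K₁)) ^ ((d : ℝ) / 2) + Λ * (π * (4 * K₁)) ^ ((d : ℝ) / 2) with hC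
  refine ⟨2 * C, by positivity, fun B hB hBN σ hσ κ hκ hsol f hf hf1 t ht => ?_⟩
  set θ' : Ed d → ℝ := fun y => θ y * f y with hθ'
  have hθ'c : Continuous θ' := hθ.mul hf
  have hθ's : HasCompactSupport θ' := hθc.mul_right
  have hθ'1 : ∀ y, |θ' y| ≤ 1 := fun y => by
    rw [hθ', abs_mul]
    exact mul_le_one₀ (hθ1 y) (abs_nonneg _) (hf1 y)
  set F : ℝ → ℝ := fun s =>
    ∫ p : Ed d × Ed d, θ' p.2 * (η p.1 * parametrix A s p.1 p.2) ∂σ.prod volume with hF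
  have hFint : ∀ s, Integrable
      (fun p : Ed d × Ed d => θ' p.2 * (η p.1 * parametrix A s p.1 p.2)) (σ.prod volume) :=
    fun s => integrable_cutoff_mul σ hη.continuous hηc hθ'c hθ's (continuous_parametrix hA s)
  have hFy : ∀ s, F s = ∫ y, θ' y * smoothing A η σ s y := by
    intro s
    rw [hF]
    simp only
    rw [integral_prod_symm _ (hFint s)]
    simp only [smoothing, integral_const_mul]
  have hFx : ∀ s, F s = ∫ x, η x * (∫ y, θ' y * parametrix A s x y) ∂σ := by
    intro s
    rw [hF]
    simp only
    rw [integral_prod _ (hFint s)]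
    refine integral_congr_ae (Eventually.of_forall fun x => ?_)
    simp only [← integral_const_mul]
    refine integral_congr_ae (Eventually.of_forall fun y => ?_)
    simp only; ring
  have hlim : Tendsto F (𝓝[>] 0) (𝓝 (∫ x, η x * gaussMass A x * f x ∂σ)) := by
    rw [show F = fun s => ∫ x, η x * (∫ y, θ' y * parametrix A s x y) ∂σ from funext hFx]
    refine tendsto_integral_filter_of_dominated_convergence
      (fun _ => (π * (4 * K₁)) ^ ((d : ℝ) / 2)) (Eventually.of_forall fun s => ?_) ?_
      (integrable_const _) (Eventually.of_forall fun x => ?_)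
    · refine hη.continuous.aestronglyMeasurable.mul ?_
      have : Continuous fun p : Ed d × Ed d => θ' p.2 * parametrix A s p.1 p.2 :=
        (hθ'c.comp continuous_snd).mul (continuous_parametrix hA s)
      exact (this.stronglyMeasurable.integral_prod_right (ν := volume)).aestronglyMeasurable
    · filter_upwards [self_mem_nhdsWithin] with s hs
      refine Eventually.of_forall fun x => ?_
      rw [norm_mul, Real.norm_eq_abs, Real.norm_eq_abs]
      exact (mul_le_of_le_one_left (abs_nonneg _) (hη1 x)).trans
        (abs_integral_mul_parametrix_le hA hθ'1 hs x)
    · have h := (tendsto_integral_mul_parametrix hA hθ'c hθ'1 x).const_mul (η x)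
      convert h using 2
      by_cases hx : η x = 0
      · simp [hx]
      · simp only [hθ', hηθ x hx]; ring
  have hbound : ∀ s ∈ Ioc (0 : ℝ) 1,
      |∫ p : Ed d × Ed d, θ' p.2 * (η p.1 * parametrixDeriv A s p.1 p.2) ∂σ.prod volume|
        ≤ C * (√s)⁻¹ := by
    intro s hs
    have hs0 := hs.1
    have hr0 : 0 < √s := Real.sqrt_pos.2 hs0
    have hr1 : 1 ≤ (√s)⁻¹ := (one_le_inv₀ hr0).2 (Real.sqrt_le_one.2 hs.2)
    set g : ℝ → Ed d → Ed d → ℝ := fun K x y =>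
      s ^ (-(d : ℝ) / 2) * exp (-(K * s)⁻¹ * ‖x - y‖ ^ 2) with hg
    have hg0 : ∀ K x y, 0 ≤ g K x y := fun K x y => by positivity
    have hgi := integrable_gaussian_prod σ (by positivity : 0 < 8 * K₁) hs0
    have hinner : ∀ y, |∫ x, η x * parametrixDeriv A s x y ∂σ|
        ≤ D * (√s)⁻¹ * (∫ x, g (8 * K₁) x y ∂σ) + Λ * g (4 * K₁) 0 y := by
      intro y
      set φ : Ed d → ℝ := fun x => η x * parametrix A s x y with hφ
      have hφ2 : ContDiff ℝ 2 φ := hη.mul (contDiff_parametrix A s y)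
      have hφs : tsupport φ ⊆ tsupport η := tsupport_mul_subset_left
      have hφc : HasCompactSupport φ := hηc.mul_right
      have hLi : Integrable (Lop A B φ) σ :=
        integrable_Lop hA hB hφ2 hφc (fun x hx => hBN x (hφs hx)) σ
      have hdc : Continuous fun x => parametrixDeriv A s x y :=
        continuous_parametrixDeriv_left hA s y
      have hDi : Integrable (fun x => η x * parametrixDeriv A s x y) σ :=
        (hη.continuous.mul hdc).integrable_of_hasCompactSupport hηc.mul_right
      have heq : ∫ x, η x * parametrixDeriv A s x y ∂σ
          = ∫ x, parametrixRem A B η s x y ∂σ + κ * φ 0 := by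
        rw [← hsol φ hφ2 hφs]
        simp only [parametrixRem]
        rw [integral_sub hDi hLi]
        ring
      rw [heq]
      refine (abs_add_le _ _).trans (add_le_add ?_ ?_)
      · rw [← integral_const_mul, ← Real.norm_eq_abs]
        refine norm_integral_le_of_norm_le ?_ (Eventually.of_forall fun x => ?_)
        · refine Integrable.const_mul ?_ _
          have hc : Continuous fun x => g (8 * K₁) x y := by simp only [hg]; fun_prop
          refine (integrable_const (s ^ (-(d : ℝ) / 2))).mono' hc.aestronglyMeasurable
            (Eventually.of_forall fun x => ?_)
          rw [Real.norm_of_nonneg (hg0 _ _ _)]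
          refine mul_le_of_le_one_right (by positivity) ?_
          rw [exp_le_one_iff]
          have : 0 ≤ (8 * K₁ * s)⁻¹ * ‖x - y‖ ^ 2 := by positivity
          linarith
        · exact hD B hBN s hs x y
      · rw [abs_mul]
        refine mul_le_mul hκ ?_ (abs_nonneg _) hΛ
        rw [hφ, abs_mul, abs_of_nonneg (parametrix_nonneg A hs0 0 y)]
        exact (mul_le_of_le_one_left (parametrix_nonneg A hs0 0 y) (hη1 0)).trans
          (parametrix_le hA hs0 0 y)
    rw [integral_prod_symm _ (integrable_cutoff_mul σ hη.continuous hηc hθ'c hθ's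
      (continuous_parametrixDeriv hA s))]
    simp only [integral_const_mul]
    have hi1 : Integrable (fun y => ∫ x, g (8 * K₁) x y ∂σ) := hgi.integral_prod_right
    have hi2 : Integrable (fun y => g (4 * K₁) 0 y) :=
      ((integrable_gaussian (4 * K₁) (by positivity) hs0).comp_sub_left 0).const_mul _
    have hle : |∫ y, θ' y * ∫ x, η x * parametrixDeriv A s x y ∂σ|
        ≤ ∫ y, (D * (√s)⁻¹ * (∫ x, g (8 * K₁) x y ∂σ) + Λ * g (4 * K₁) 0 y) := by
      rw [← Real.norm_eq_abs]
      refine norm_integral_le_of_norm_le ((hi1.const_mul _).add (hi2.const_mul _))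
        (Eventually.of_forall fun y => ?_)
      rw [norm_mul, Real.norm_eq_abs, Real.norm_eq_abs]
      exact (mul_le_of_le_one_left (abs_nonneg _) (hθ'1 y)).trans (hinner y)
    refine hle.trans ?_
    rw [integral_add (hi1.const_mul _) (hi2.const_mul _), integral_const_mul, integral_const_mul,
      integral_gaussian_sub (4 * K₁) (by positivity) hs0]
    have hsw : ∫ y, ∫ x, g (8 * K₁) x y ∂σ = (π * (8 * K₁)) ^ ((d : ℝ) / 2) := by
      rw [← integral_integral_swap hgi]
      simp only [hg, integral_gaussian_sub (8 * K₁) (by positivity) hs0]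
      simp
    rw [hsw, hC, add_mul]
    refine add_le_add (le_of_eq (by ring)) ?_
    exact le_mul_of_one_le_right (by positivity) hr1
  have := abs_sub_le_two_mul_sqrt (F := F) (fun s hs => hasDerivAt_integral_parametrix hA σ
    hη.continuous hηc hθ'c hθ's hs.1) hbound hlim ht
  rwa [hFy t] at this

end ParametrixEstimate

section TotalVariation

variable {A : Ed d → Matrix (Fin d) (Fin d) ℝ} {K₁ K₂ : ℝ} {η θ : Ed d → ℝ}

theorem exists_continuous_abs_le_one_integral_sub_le (ρ : Measure (Ed d)) [IsFiniteMeasure ρ]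
    {f : Ed d → ℝ} (hf : Measurable f) (hf1 : ∀ x, |f x| ≤ 1) {ε : ℝ} (hε : 0 < ε) :
    ∃ g : Ed d → ℝ, Continuous g ∧ (∀ x, |g x| ≤ 1) ∧ ∫ x, |f x - g x| ∂ρ ≤ ε := by
  have hfi : Integrable f ρ := (integrable_const (1 : ℝ)).mono' hf.aestronglyMeasurable
    (Eventually.of_forall hf1)
  obtain ⟨g, hg, hgi⟩ := hfi.exists_boundedContinuous_integral_sub_le hε
  have hclip : Continuous fun x => max (-1) (min 1 (g x)) :=
    continuous_const.max (continuous_const.min g.continuous)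
  have hclip1 : ∀ x, |max (-1) (min 1 (g x))| ≤ 1 := fun x =>
    abs_le.2 ⟨le_max_left _ _, max_le (by norm_num) (min_le_left _ _)⟩
  refine ⟨fun x => max (-1) (min 1 (g x)), hclip, hclip1, ?_⟩
  refine (integral_mono ?_ (hfi.sub hgi).norm fun x => ?_).trans hg
  · refine (hfi.sub ((integrable_const (1 : ℝ)).mono' hclip.aestronglyMeasurable
      (Eventually.of_forall hclip1))).norm
  · simp only [Pi.sub_apply, Real.norm_eq_abs]
    have hx := abs_le.1 (hf1 x)
    rw [abs_le]
    rcases le_total (g x) 1 with h1 | h1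
    · rw [min_eq_right h1]
      rcases le_total (-1) (g x) with h2 | h2
      · rw [max_eq_right h2]; exact ⟨neg_abs_le _, le_abs_self _⟩
      · rw [max_eq_left h2]
        constructor <;> linarith [le_abs_self (f x - g x), abs_nonneg (f x - g x)]
    · rw [min_eq_left h1, max_eq_right (by norm_num)]
      constructor <;> linarith [neg_abs_le (f x - g x), abs_nonneg (f x - g x)]

theorem parametrix_le_rpow (hA : IsElliptic A K₁ K₂) {t : ℝ} (ht : 0 < t) (x y : Ed d) :
    parametrix A t x y ≤ t ^ (-(d : ℝ) / 2) := by
  have hK := hA.pos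
  refine (parametrix_le hA ht x y).trans (mul_le_of_le_one_right (by positivity) ?_)
  rw [exp_le_one_iff]
  have : 0 ≤ (4 * K₁ * t)⁻¹ * ‖x - y‖ ^ 2 := by positivity
  linarith

theorem abs_smoothing_le (hA : IsElliptic A K₁ K₂) (hη1 : ∀ x, |η x| ≤ 1) (σ : Measure (Ed d))
    [IsProbabilityMeasure σ] {t : ℝ} (ht : 0 < t) (y : Ed d) :
    |smoothing A η σ t y| ≤ t ^ (-(d : ℝ) / 2) := by
  have h : ∀ x, ‖η x * parametrix A t x y‖ ≤ t ^ (-(d : ℝ) / 2) := fun x => by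
    rw [norm_mul, Real.norm_eq_abs, Real.norm_eq_abs, abs_of_nonneg (parametrix_nonneg A ht x y)]
    exact (mul_le_of_le_one_left (parametrix_nonneg A ht x y) (hη1 x)).trans
      (parametrix_le_rpow hA ht x y)
  have := norm_integral_le_of_norm_le_const (μ := σ) (Eventually.of_forall h)
  simpa [smoothing] using this

theorem stronglyMeasurable_smoothing (hA : IsElliptic A K₁ K₂) (hη : Continuous η)
    (σ : Measure (Ed d)) [IsProbabilityMeasure σ] (t : ℝ) :
    StronglyMeasurable (smoothing A η σ t) := by
  have : Continuous fun p : Ed d × Ed d => η p.1 * parametrix A t p.1 p.2 :=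
    (hη.comp continuous_fst).mul (continuous_parametrix hA t)
  exact this.stronglyMeasurable.integral_prod_left (μ := σ)

theorem integrable_cutoff_mul_smoothing (hA : IsElliptic A K₁ K₂) (hη : Continuous η)
    (hη1 : ∀ x, |η x| ≤ 1) (hθ : Continuous θ) (hθc : HasCompactSupport θ)
    (σ : Measure (Ed d)) [IsProbabilityMeasure σ] {t : ℝ} (ht : 0 < t) {f : Ed d → ℝ}
    (hf : Measurable f) (hf1 : ∀ x, |f x| ≤ 1) :
    Integrable fun y => θ y * f y * smoothing A η σ t y := by
  refine ((hθ.abs.integrable_of_hasCompactSupport hθc.norm).mul_const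
    (t ^ (-(d : ℝ) / 2))).mono' ?_ (Eventually.of_forall fun y => ?_)
  · exact ((hθ.measurable.mul hf).mul
      (stronglyMeasurable_smoothing hA hη σ t).measurable).aestronglyMeasurable
  · rw [norm_mul, norm_mul, Real.norm_eq_abs, Real.norm_eq_abs, Real.norm_eq_abs]
    exact mul_le_mul (mul_le_of_le_one_right (abs_nonneg _) (hf1 y))
      (abs_smoothing_le hA hη1 σ ht y) (abs_nonneg _) (abs_nonneg _)

/-- `ParametrixBound` extends from continuous to Borel test functions. -/
theorem ParametrixBound.of_measurable (hA : IsElliptic A K₁ K₂) (hη : Continuous η)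
    (hηc : HasCompactSupport η) (hη1 : ∀ x, |η x| ≤ 1) (hθ : Continuous θ)
    (hθc : HasCompactSupport θ) (hθ1 : ∀ x, |θ x| ≤ 1) {D : ℝ} {σ : Measure (Ed d)}
    [IsProbabilityMeasure σ] (h : ParametrixBound A η θ D σ) {f : Ed d → ℝ} (hf : Measurable f)
    (hf1 : ∀ x, |f x| ≤ 1) {t : ℝ} (ht : t ∈ Ioc (0 : ℝ) 1) :
    |∫ x, η x * gaussMass A x * f x ∂σ - ∫ y, θ y * f y * smoothing A η σ t y| ≤ D * √t := by
  have ht0 := ht.1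
  have hwc : Continuous fun x => η x * gaussMass A x := hη.mul (continuous_gaussMass hA)
  obtain ⟨M, hM⟩ := hwc.bounded_above_of_compact_support hηc.mul_right
  have hM0 : 0 ≤ M := (norm_nonneg _).trans (hM 0)
  have hvol : volume (tsupport θ) ≠ ⊤ := hθc.isCompact.measure_lt_top.ne
  have : IsFiniteMeasure (volume.restrict (tsupport θ)) := isFiniteMeasure_restrict.2 hvol
  set q := t ^ (-(d : ℝ) / 2) with hq
  have hq0 : 0 ≤ q := by positivity
  refine le_of_forall_pos_le_add fun ε hε => ?_
  obtain ⟨g, hg, hg1, hfg⟩ := exists_continuous_abs_le_one_integral_sub_le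
    (σ + volume.restrict (tsupport θ)) hf hf1 (ε := ε / (M + q + 1)) (by positivity)
  have hfgm : Measurable fun x => |f x - g x| := (hf.sub hg.measurable).abs
  have hfg2 : ∀ x, ‖|f x - g x|‖ ≤ 2 := fun x => by
    rw [norm_abs_eq_norm]
    exact (norm_sub_le _ _).trans (by
      rw [Real.norm_eq_abs, Real.norm_eq_abs]; linarith [hf1 x, hg1 x])
  have hi : ∀ ρ : Measure (Ed d), IsFiniteMeasure ρ → Integrable (fun x => |f x - g x|) ρ :=
    fun ρ _ => (integrable_const (2 : ℝ)).mono' hfgm.aestronglyMeasurable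
      (Eventually.of_forall hfg2)
  rw [integral_add_measure (hi _ inferInstance) (hi _ inferInstance)] at hfg
  have hn1 : 0 ≤ ∫ x, |f x - g x| ∂σ := integral_nonneg fun x => abs_nonneg _
  have hn2 : 0 ≤ ∫ x in tsupport θ, |f x - g x| := integral_nonneg fun x => abs_nonneg _
  have hwi : ∀ f : Ed d → ℝ, Measurable f → (∀ x, |f x| ≤ 1) →
      Integrable (fun x => η x * gaussMass A x * f x) σ := fun f hf hf1 =>
    (integrable_const M).mono' (hwc.measurable.mul hf).aestronglyMeasurable
      (Eventually.of_forall fun x => by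
        rw [norm_mul]
        exact (mul_le_of_le_one_right (norm_nonneg _) (hf1 x)).trans (hM x))
  have e1 : |∫ x, η x * gaussMass A x * f x ∂σ - ∫ x, η x * gaussMass A x * g x ∂σ|
      ≤ M * ∫ x, |f x - g x| ∂σ := by
    rw [← integral_sub (hwi f hf hf1) (hwi g hg.measurable hg1), ← integral_const_mul,
      ← Real.norm_eq_abs]
    refine norm_integral_le_of_norm_le ((hi σ inferInstance).const_mul M)
      (Eventually.of_forall fun x => ?_)
    rw [← mul_sub, norm_mul, Real.norm_eq_abs (f x - g x)]
    exact mul_le_mul_of_nonneg_right (hM x) (abs_nonneg _)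
  have e2 : |(∫ y, θ y * f y * smoothing A η σ t y) - ∫ y, θ y * g y * smoothing A η σ t y|
      ≤ q * ∫ x in tsupport θ, |f x - g x| := by
    rw [← integral_sub (integrable_cutoff_mul_smoothing hA hη hη1 hθ hθc σ ht0 hf hf1)
      (integrable_cutoff_mul_smoothing hA hη hη1 hθ hθc σ ht0 hg.measurable hg1),
      ← integral_const_mul, ← Real.norm_eq_abs]
    rw [← integral_indicator hθc.isCompact.measurableSet]
    refine norm_integral_le_of_norm_le ?_ (Eventually.of_forall fun y => ?_)
    · rw [integrable_indicator_iff hθc.isCompact.measurableSet]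
      exact (hi _ inferInstance).const_mul q
    · by_cases hy : y ∈ tsupport θ
      · rw [indicator_of_mem hy, ← sub_mul, ← mul_sub, norm_mul, norm_mul, Real.norm_eq_abs,
          Real.norm_eq_abs, Real.norm_eq_abs, mul_comm]
        exact mul_le_mul (abs_smoothing_le hA hη1 σ ht0 y)
          (mul_le_of_le_one_left (abs_nonneg _) (hθ1 y)) (by positivity) hq0
      · rw [indicator_of_notMem hy, image_eq_zero_of_notMem_tsupport hy]; simp
  have e3 := h g hg hg1 t ht
  have e4 : M * (∫ x, |f x - g x| ∂σ) + q * (∫ x in tsupport θ, |f x - g x|) ≤ ε := by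
    have h5 : (M + q + 1) * (∫ x, |f x - g x| ∂σ + ∫ x in tsupport θ, |f x - g x|) ≤ ε := by
      rw [le_div_iff₀ (by positivity)] at hfg; linarith
    nlinarith
  rw [abs_le] at e1 e2 e3 ⊢
  constructor <;> linarith

theorem continuous_parametrix_left (A : Ed d → Matrix (Fin d) (Fin d) ℝ) (t : ℝ) (y : Ed d) :
    Continuous fun x => parametrix A t x y :=
  (contDiff_parametrix A t y (n := 0)).continuous

/-- Vague convergence of sequences of measures, tested against compactly supported functions. -/
def VagueTendsto (σs : ℕ → Measure (Ed d)) (σ : Measure (Ed d)) : Prop :=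
  ∀ g : Ed d → ℝ, Continuous g → HasCompactSupport g →
    Tendsto (fun m => ∫ x, g x ∂σs m) atTop (𝓝 (∫ x, g x ∂σ))

theorem VagueTendsto.smoothing (hη : Continuous η) (hηc : HasCompactSupport η)
    {σs : ℕ → Measure (Ed d)} {σ : Measure (Ed d)} (h : VagueTendsto σs σ) (t : ℝ) (y : Ed d) :
    Tendsto (fun m => smoothing A η (σs m) t y) atTop (𝓝 (smoothing A η σ t y)) :=
  h _ (hη.mul (continuous_parametrix_left A t y)) hηc.mul_right

theorem VagueTendsto.integral_abs_smoothing_sub (hA : IsElliptic A K₁ K₂) (hη : Continuous η)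
    (hηc : HasCompactSupport η) (hη1 : ∀ x, |η x| ≤ 1) (hθ : Continuous θ)
    (hθc : HasCompactSupport θ) {σs : ℕ → Measure (Ed d)} {σ : Measure (Ed d)}
    (hσs : ∀ m, IsProbabilityMeasure (σs m)) (hσ : IsProbabilityMeasure σ)
    (h : VagueTendsto σs σ) {t : ℝ} (ht : 0 < t) :
    Tendsto (fun m => ∫ y, |θ y| * |_root_.smoothing A η (σs m) t y - _root_.smoothing A η σ t y|)
      atTop (𝓝 0) := by
  have hlim : Tendsto (fun m => ∫ y, |θ y| * |_root_.smoothing A η (σs m) t y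
      - _root_.smoothing A η σ t y|) atTop (𝓝 (∫ _ : Ed d, (0 : ℝ))) := by
    refine tendsto_integral_of_dominated_convergence
      (fun y => |θ y| * (2 * t ^ (-(d : ℝ) / 2))) (fun m => ?_)
      ((hθ.abs.integrable_of_hasCompactSupport hθc.norm).mul_const _)
      (fun m => Eventually.of_forall fun y => ?_) (Eventually.of_forall fun y => ?_)
    · exact (hθ.measurable.abs.mul ((stronglyMeasurable_smoothing hA hη (σs m) t).measurable.sub
        (stronglyMeasurable_smoothing hA hη σ t).measurable).abs).aestronglyMeasurable
    · rw [norm_mul, Real.norm_eq_abs, Real.norm_eq_abs, abs_abs, abs_abs]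
      refine mul_le_mul_of_nonneg_left ((abs_sub _ _).trans ?_) (abs_nonneg _)
      linarith [abs_smoothing_le hA hη1 (σs m) ht y, abs_smoothing_le hA hη1 σ ht y]
    · have h1 := ((h.smoothing (A := A) hη hηc t y).sub_const (_root_.smoothing A η σ t y)).abs
      rw [sub_self, abs_zero] at h1
      simpa using h1.const_mul |θ y|
  simpa using hlim

theorem abs_integral_smoothing_sub_le (hA : IsElliptic A K₁ K₂) (hη : Continuous η)
    (hη1 : ∀ x, |η x| ≤ 1) (hθ : Continuous θ)
    (hθc : HasCompactSupport θ) (σ σ' : Measure (Ed d)) [IsProbabilityMeasure σ]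
    [IsProbabilityMeasure σ'] {t : ℝ} (ht : 0 < t) {f : Ed d → ℝ}
    (hf : Measurable f) (hf1 : ∀ x, |f x| ≤ 1) :
    |(∫ y, θ y * f y * smoothing A η σ t y) - ∫ y, θ y * f y * smoothing A η σ' t y|
      ≤ ∫ y, |θ y| * |smoothing A η σ t y - smoothing A η σ' t y| := by
  have i1 := integrable_cutoff_mul_smoothing hA hη hη1 hθ hθc σ ht hf hf1
  have i2 := integrable_cutoff_mul_smoothing hA hη hη1 hθ hθc σ' ht hf hf1
  have j := ((integrable_cutoff_mul_smoothing hA hη hη1 hθ hθc σ ht (f := fun _ => 1)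
    measurable_const (by simp)).sub (integrable_cutoff_mul_smoothing hA hη hη1 hθ hθc σ' ht
    (f := fun _ => 1) measurable_const (by simp))).norm
  rw [← integral_sub i1 i2, ← Real.norm_eq_abs]
  refine norm_integral_le_of_norm_le (j.congr (Eventually.of_forall fun y => ?_))
    (Eventually.of_forall fun y => ?_)
  · simp only [Pi.sub_apply, mul_one, ← mul_sub, norm_mul, Real.norm_eq_abs]
  · rw [← mul_sub, norm_mul, norm_mul, Real.norm_eq_abs, Real.norm_eq_abs, Real.norm_eq_abs]
    exact mul_le_mul_of_nonneg_right (mul_le_of_le_one_right (abs_nonneg _) (hf1 y)) (abs_nonneg _)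

theorem VagueTendsto.parametrixBound (hA : IsElliptic A K₁ K₂) (hη : Continuous η)
    (hηc : HasCompactSupport η) (hη1 : ∀ x, |η x| ≤ 1) (hθ : Continuous θ)
    (hθc : HasCompactSupport θ) {σs : ℕ → Measure (Ed d)} {σ : Measure (Ed d)}
    (hσs : ∀ m, IsProbabilityMeasure (σs m)) (hσ : IsProbabilityMeasure σ)
    (h : VagueTendsto σs σ) {D : ℝ} (hD : ∀ᶠ m in atTop, ParametrixBound A η θ D (σs m)) :
    ParametrixBound A η θ D σ := by
  intro f hf hf1 t ht
  have h1 : Tendsto (fun m => ∫ x, η x * gaussMass A x * f x ∂σs m) atTop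
      (𝓝 (∫ x, η x * gaussMass A x * f x ∂σ)) :=
    h _ ((hη.mul (continuous_gaussMass hA)).mul hf) hηc.mul_right.mul_right
  have h2 : Tendsto (fun m => ∫ y, θ y * f y * _root_.smoothing A η (σs m) t y) atTop
      (𝓝 (∫ y, θ y * f y * _root_.smoothing A η σ t y)) := by
    rw [tendsto_iff_dist_tendsto_zero]
    refine squeeze_zero (fun m => dist_nonneg) (fun m => ?_)
      (h.integral_abs_smoothing_sub hA hη hηc hη1 hθ hθc hσs hσ ht.1)
    rw [Real.dist_eq]
    exact abs_integral_smoothing_sub_le hA hη hη1 hθ hθc (σs m) σ ht.1 hf.measurable hf1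
  refine le_of_tendsto (h1.sub h2).abs ?_
  filter_upwards [hD] with m hm using hm f hf hf1 t ht

/-- Vague convergence together with a uniform `ParametrixBound` implies convergence of the
localised measures in total variation. -/
theorem VagueTendsto.eventually_abs_integral_sub_le (hA : IsElliptic A K₁ K₂) (hη : Continuous η)
    (hηc : HasCompactSupport η) (hη1 : ∀ x, |η x| ≤ 1) (hθ : Continuous θ)
    (hθc : HasCompactSupport θ) (hθ1 : ∀ x, |θ x| ≤ 1)
    {σs : ℕ → Measure (Ed d)} {σ : Measure (Ed d)}
    (hσs : ∀ m, IsProbabilityMeasure (σs m)) (hσ : IsProbabilityMeasure σ)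
    (h : VagueTendsto σs σ) {D : ℝ}
    (hD : ∀ᶠ m in atTop, ParametrixBound A η θ D (σs m))
    {ε : ℝ} (hε : 0 < ε) :
    ∀ᶠ m in atTop, ∀ f : Ed d → ℝ, Measurable f → (∀ x, |f x| ≤ 1) →
      |∫ x, η x * f x ∂σs m - ∫ x, η x * f x ∂σ| ≤ ε := by
  have hK := hA.pos
  have hσD := h.parametrixBound hA hη hηc hη1 hθ hθc hσs hσ hD
  set c := (π * (4 / K₁)) ^ ((d : ℝ) / 2) with hc
  have hc0 : 0 < c := by positivity
  obtain ⟨t, ht, htε⟩ : ∃ t ∈ Ioc (0 : ℝ) 1, 2 * D * √t ≤ c * ε / 2 := by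
    have hlim : Tendsto (fun t => 2 * D * √t) (𝓝[>] 0) (𝓝 (2 * D * √0)) :=
      ((Real.continuous_sqrt.tendsto 0).mono_left nhdsWithin_le_nhds).const_mul (2 * D)
    rw [Real.sqrt_zero, mul_zero] at hlim
    have h1 := hlim.eventually_le_const (by positivity : 0 < c * ε / 2)
    obtain ⟨t, h2, h3⟩ := (h1.and (Ioc_mem_nhdsGT (zero_lt_one' ℝ))).exists
    exact ⟨t, h3, h2⟩
  have h3 := (h.integral_abs_smoothing_sub (A := A) hA hη hηc hη1 hθ hθc hσs hσ
    ht.1).eventually_le_const (by positivity : 0 < c * ε / 2)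
  filter_upwards [hD, h3] with m hm h4 f hf hf1
  set g : Ed d → ℝ := fun x => c * f x / gaussMass A x with hg
  have hgm : Measurable g := (hf.const_mul c).div (continuous_gaussMass hA).measurable
  have hg1 : ∀ x, |g x| ≤ 1 := fun x => by
    have hp := gaussMass_pos hA x
    rw [hg, abs_div, abs_mul, abs_of_pos hc0, abs_of_pos hp, div_le_one hp]
    exact (mul_le_of_le_one_right hc0.le (hf1 x)).trans (le_gaussMass hA x)
  have hgf : ∀ ρ : Measure (Ed d), ∫ x, η x * gaussMass A x * g x ∂ρ = c * ∫ x, η x * f x ∂ρ := by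
    intro ρ
    rw [← integral_const_mul]
    refine integral_congr_ae (Eventually.of_forall fun x => ?_)
    have hp := (gaussMass_pos hA x).ne'
    simp only [hg]; field_simp
  have a1 := hm.of_measurable hA hη hηc hη1 hθ hθc hθ1 hgm hg1 ht
  have a2 := hσD.of_measurable hA hη hηc hη1 hθ hθc hθ1 hgm hg1 ht
  have a3 := (abs_integral_smoothing_sub_le hA hη hη1 hθ hθc (σs m) σ ht.1 hgm hg1).trans h4
  rw [hgf] at a1 a2
  have a4 : |c * (∫ x, η x * f x ∂σs m - ∫ x, η x * f x ∂σ)| ≤ c * ε := by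
    rw [abs_le] at a1 a2 a3 ⊢
    constructor <;> linarith
  rw [abs_mul, abs_of_pos hc0] at a4
  exact le_of_mul_le_mul_left a4 hc0

theorem ParametrixBound.measure_inter_eq_zero (hA : IsElliptic A K₁ K₂) (hη : Continuous η)
    (hηc : HasCompactSupport η) (hη1 : ∀ x, |η x| ≤ 1) (hη0 : ∀ x, 0 ≤ η x) (hθ : Continuous θ)
    (hθc : HasCompactSupport θ) (hθ1 : ∀ x, |θ x| ≤ 1) {D : ℝ} {σ : Measure (Ed d)}
    [IsProbabilityMeasure σ] (h : ParametrixBound A η θ D σ) {s : Set (Ed d)}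
    (hs : MeasurableSet s) (hs0 : volume s = 0) : σ (s ∩ {x | η x ≠ 0}) = 0 := by
  set f : Ed d → ℝ := s.indicator fun _ => 1 with hf
  have hfm : Measurable f := measurable_const.indicator hs
  have hf1 : ∀ x, |f x| ≤ 1 := fun x => by
    by_cases hx : x ∈ s <;> simp [hf, hx]
  have hzero : ∀ t, ∫ y, θ y * f y * smoothing A η σ t y = 0 := fun t => by
    refine integral_eq_zero_of_ae ?_
    have : ∀ᵐ y, y ∉ s := measure_eq_zero_iff_ae_notMem.1 hs0
    filter_upwards [this] with y hy
    simp [hf, hy]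
  have hle : ∫ x, η x * gaussMass A x * f x ∂σ = 0 := by
    have h1 : ∀ t ∈ Ioc (0 : ℝ) 1, |∫ x, η x * gaussMass A x * f x ∂σ| ≤ D * √t := fun t ht => by
      have := h.of_measurable hA hη hηc hη1 hθ hθc hθ1 hfm hf1 ht
      rwa [hzero, sub_zero] at this
    have hlim : Tendsto (fun t => D * √t) (𝓝[>] 0) (𝓝 (D * √0)) :=
      ((Real.continuous_sqrt.tendsto 0).mono_left nhdsWithin_le_nhds).const_mul D
    rw [Real.sqrt_zero, mul_zero] at hlim
    have h2 := ge_of_tendsto hlim (b := |∫ x, η x * gaussMass A x * f x ∂σ|) (by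
      filter_upwards [Ioc_mem_nhdsGT (zero_lt_one' ℝ)] with t ht using h1 t ht)
    exact abs_nonpos_iff.1 h2
  have hwc : Continuous fun x => η x * gaussMass A x := hη.mul (continuous_gaussMass hA)
  obtain ⟨M, hM⟩ := hwc.bounded_above_of_compact_support hηc.mul_right
  have hInt : Integrable (fun x => η x * gaussMass A x * f x) σ :=
    (integrable_const M).mono' (hwc.measurable.mul hfm).aestronglyMeasurable
      (Eventually.of_forall fun x => by
        rw [norm_mul]
        exact (mul_le_of_le_one_right (norm_nonneg _) (hf1 x)).trans (hM x))
  have hnn : 0 ≤ fun x => η x * gaussMass A x * f x := fun x =>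
    mul_nonneg (mul_nonneg (hη0 x) (gaussMass_pos hA x).le) (indicator_nonneg (by simp) x)
  rw [integral_eq_zero_iff_of_nonneg hnn hInt] at hle
  rw [measure_eq_zero_iff_ae_notMem]
  filter_upwards [hle] with x hx hxs
  have : f x = 1 := by simp [hf, hxs.1]
  simp only [this, mul_one, Pi.zero_apply] at hx
  exact mul_ne_zero hxs.2 (gaussMass_pos hA x).ne' hx

end TotalVariation

section Compactness

/-- A smooth cutoff equal to `1` on the ball of radius `n + 1`, supported in the ball of radius
`n + 2`. -/
def cutoffBump (d n : ℕ) : ContDiffBump (0 : Ed d) where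
  rIn := n + 1
  rOut := n + 2
  rIn_pos := by positivity
  rIn_lt_rOut := by linarith

/-- The function underlying `cutoffBump`. -/
def cutoff (n : ℕ) : Ed d → ℝ := cutoffBump d n

theorem contDiff_cutoff (n : ℕ) {k : ℕ∞} : ContDiff ℝ k (cutoff n : Ed d → ℝ) :=
  (cutoffBump d n).contDiff

theorem continuous_cutoff (n : ℕ) : Continuous (cutoff n : Ed d → ℝ) := (cutoffBump d n).continuous

theorem hasCompactSupport_cutoff (n : ℕ) : HasCompactSupport (cutoff n : Ed d → ℝ) :=
  (cutoffBump d n).hasCompactSupport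

theorem cutoff_nonneg (n : ℕ) (x : Ed d) : 0 ≤ cutoff n x := (cutoffBump d n).nonneg

theorem cutoff_le_one (n : ℕ) (x : Ed d) : cutoff n x ≤ 1 := (cutoffBump d n).le_one

theorem abs_cutoff_le_one (n : ℕ) (x : Ed d) : |cutoff n x| ≤ 1 :=
  abs_le.2 ⟨by linarith [cutoff_nonneg n x], cutoff_le_one n x⟩

theorem cutoff_eq_one {n : ℕ} {x : Ed d} (hx : ‖x‖ ≤ n + 1) : cutoff n x = 1 :=
  (cutoffBump d n).one_of_mem_closedBall (by simpa [cutoffBump] using hx)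

theorem tsupport_cutoff (n : ℕ) : tsupport (cutoff n : Ed d → ℝ) = closedBall 0 (n + 2) :=
  (cutoffBump d n).tsupport_eq

theorem cutoff_succ_eq_one {n : ℕ} {x : Ed d} (hx : cutoff n x ≠ 0) : cutoff (n + 1) x = 1 := by
  have h : x ∈ tsupport (cutoff n : Ed d → ℝ) := subset_tsupport _ hx
  rw [tsupport_cutoff, mem_closedBall_zero_iff] at h
  exact cutoff_eq_one (by push_cast; linarith)

theorem tendsto_cutoff (x : Ed d) : Tendsto (fun n => cutoff n x) atTop (𝓝 1) := by
  obtain ⟨n₀, hn₀⟩ := exists_nat_ge ‖x‖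
  refine tendsto_const_nhds.congr' ?_
  filter_upwards [eventually_ge_atTop n₀] with n hn
  have : (n₀ : ℝ) ≤ n := by exact_mod_cast hn
  exact (cutoff_eq_one (by linarith)).symm

variable {A : Ed d → Matrix (Fin d) (Fin d) ℝ} {K₁ K₂ : ℝ} {V W : Ed d → ℝ} {D : ℕ → ℝ}
  {σs : ℕ → Measure (Ed d)} {σ : Measure (Ed d)}

/-- Parametrix bounds at all the cutoff scales. -/
def LocalBounds (A : Ed d → Matrix (Fin d) (Fin d) ℝ) (D : ℕ → ℝ) (σ : Measure (Ed d)) : Prop :=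
  ∀ n, ParametrixBound A (cutoff n) (cutoff (n + 1)) (D n) σ

theorem LocalBounds.absolutelyContinuous (hA : IsElliptic A K₁ K₂) [IsProbabilityMeasure σ]
    (h : LocalBounds A D σ) : σ ≪ volume := by
  refine Measure.AbsolutelyContinuous.mk fun s hs hs0 => ?_
  have hcover : s ⊆ ⋃ n : ℕ, s ∩ {x | cutoff n x ≠ 0} := fun x hx => by
    obtain ⟨n, hn⟩ := exists_nat_ge ‖x‖
    refine mem_iUnion.2 ⟨n, hx, ?_⟩
    rw [mem_ofPred_eq, cutoff_eq_one (by linarith)]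
    exact one_ne_zero
  refine measure_mono_null hcover (measure_iUnion_null fun n => ?_)
  exact (h n).measure_inter_eq_zero hA (continuous_cutoff n) (hasCompactSupport_cutoff n)
    (abs_cutoff_le_one n) (cutoff_nonneg n) (continuous_cutoff _) (hasCompactSupport_cutoff _)
    (abs_cutoff_le_one _) hs hs0

theorem VagueTendsto.memPV (hVc : Continuous V) (hV1 : ∀ x, 1 ≤ V x) {α : ℝ}
    (hσs : ∀ m, memPV V (σs m)) (hα : ∀ m, ∫ x, V x ∂σs m ≤ α) (hσ : IsProbabilityMeasure σ)
    (h : VagueTendsto σs σ) : _root_.memPV V σ ∧ ∫ x, V x ∂σ ≤ α := by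
  have hV0 : ∀ x, 0 ≤ V x := fun x => zero_le_one.trans (hV1 x)
  have hcut : ∀ n, ∫ x, V x * cutoff n x ∂σ ≤ α := fun n => by
    refine le_of_tendsto' (h _ (hVc.mul (continuous_cutoff n))
      (hasCompactSupport_cutoff n).mul_left) fun m => le_trans ?_ (hα m)
    refine integral_mono_of_nonneg (Eventually.of_forall fun x =>
      mul_nonneg (hV0 x) (cutoff_nonneg n x)) (hσs m).2 (Eventually.of_forall fun x =>
      mul_le_of_le_one_right (hV0 x) (cutoff_le_one n x))
  have hα0 : 0 ≤ α :=
    (integral_nonneg fun x => mul_nonneg (hV0 x) (cutoff_nonneg 0 x)).trans (hcut 0)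
  have hlint : ∫⁻ x, ENNReal.ofReal (V x) ∂σ ≤ ENNReal.ofReal α := by
    have hF : ∫⁻ x, liminf (fun n => ENNReal.ofReal (V x * cutoff n x)) atTop ∂σ
        ≤ liminf (fun n => ∫⁻ x, ENNReal.ofReal (V x * cutoff n x) ∂σ) atTop :=
      lintegral_liminf_le fun n =>
        ((hVc.mul (continuous_cutoff n)).measurable).ennreal_ofReal
    have he : ∀ x, liminf (fun n => ENNReal.ofReal (V x * cutoff n x)) atTop
        = ENNReal.ofReal (V x) := fun x => by
      refine Tendsto.liminf_eq (ENNReal.tendsto_ofReal ?_)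
      simpa using (tendsto_cutoff x).const_mul (V x)
    simp only [he] at hF
    refine hF.trans (liminf_le_of_frequently_le' (Frequently.of_forall fun n => ?_))
    have hi : Integrable (fun x => V x * cutoff n x) σ := (hVc.mul (continuous_cutoff n))
      |>.integrable_of_hasCompactSupport (hasCompactSupport_cutoff n).mul_left
    rw [← ofReal_integral_eq_lintegral_ofReal hi
      (Eventually.of_forall fun x => mul_nonneg (hV0 x) (cutoff_nonneg n x))]
    exact ENNReal.ofReal_le_ofReal (hcut n)
  have hInt : Integrable V σ := by
    refine ⟨hVc.aestronglyMeasurable, ?_⟩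
    rw [hasFiniteIntegral_iff_ofReal (Eventually.of_forall hV0)]
    exact hlint.trans_lt ENNReal.ofReal_lt_top
  refine ⟨⟨hσ, hInt⟩, ?_⟩
  rw [← ofReal_integral_eq_lintegral_ofReal hInt (Eventually.of_forall hV0)] at hlint
  exact (ENNReal.ofReal_le_ofReal_iff hα0).1 hlint

theorem exists_subseq_vagueTendsto (hVinf : Tendsto V (cocompact (Ed d)) atTop)
    (hV1 : ∀ x, 1 ≤ V x) {α : ℝ} (hσs : ∀ m, memPV V (σs m))
    (hα : ∀ m, ∫ x, V x ∂σs m ≤ α) :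
    ∃ σ : Measure (Ed d), IsProbabilityMeasure σ ∧ ∃ φ : ℕ → ℕ, StrictMono φ ∧
      VagueTendsto (σs ∘ φ) σ := by
  have hV0 : ∀ x, 0 ≤ V x := fun x => zero_le_one.trans (hV1 x)
  set P : ℕ → ProbabilityMeasure (Ed d) := fun m => ⟨σs m, (hσs m).1⟩ with hP
  have htight : IsTightMeasureSet {((μ : ProbabilityMeasure (Ed d)) : Measure (Ed d)) |
      μ ∈ range P} := by
    rw [isTightMeasureSet_iff_exists_isCompact_measure_compl_le]
    intro ε hε
    obtain ⟨r, hr0, hr⟩ : ∃ r : ℝ, 0 < r ∧ ENNReal.ofReal (α / r) ≤ ε := by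
      have hl : Tendsto (fun r : ℝ => ENNReal.ofReal (α / r)) atTop (𝓝 (ENNReal.ofReal 0)) :=
        ENNReal.tendsto_ofReal (tendsto_const_nhds.div_atTop tendsto_id)
      rw [ENNReal.ofReal_zero] at hl
      obtain ⟨r, h1, h2⟩ := ((eventually_gt_atTop (0 : ℝ)).and
        (hl.eventually_le_const hε)).exists
      exact ⟨r, h1, h2⟩
    obtain ⟨K, hK, hKr⟩ := mem_cocompact.1 (hVinf (Ici_mem_atTop r))
    refine ⟨K, hK, ?_⟩
    rintro _ ⟨_, ⟨m, rfl⟩, rfl⟩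
    have := (hσs m).1
    refine le_trans ?_ hr
    change σs m Kᶜ ≤ _
    have hmark := mul_meas_ge_le_integral_of_nonneg (μ := σs m) (Eventually.of_forall hV0)
      (hσs m).2 r
    have h1 : (σs m).real Kᶜ ≤ α / r := by
      rw [le_div_iff₀ hr0, mul_comm]
      refine le_trans (mul_le_mul_of_nonneg_left ?_ hr0.le) (hmark.trans (hα m))
      exact measureReal_mono hKr
    rw [← ENNReal.ofReal_toReal (measure_ne_top (σs m) Kᶜ)]
    exact ENNReal.ofReal_le_ofReal h1
  obtain ⟨Q, -, φ, hφ, hlim⟩ := (isCompact_closure_of_isTightMeasureSet htight).tendsto_subseq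
    (x := P) fun m => subset_closure (mem_range_self m)
  refine ⟨Q, inferInstance, φ, hφ, fun g hg hgc => ?_⟩
  obtain ⟨M, hM⟩ := hg.bounded_above_of_compact_support hgc
  exact (ProbabilityMeasure.tendsto_iff_forall_integral_tendsto.1 hlim)
    (BoundedContinuousFunction.ofNormedAddCommGroup g hg M hM)

/-- `W` is of lower order than `V` at infinity. -/
def IsLowerOrder (W V : Ed d → ℝ) : Prop :=
  ∀ ε > 0, ∃ n : ℕ, ∀ x : Ed d, n + 1 ≤ ‖x‖ → W x ≤ ε * V x

theorem VagueTendsto.eventually_abs_integral_sub_le_of_weight (hA : IsElliptic A K₁ K₂)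
    (hWc : Continuous W) (hW0 : ∀ x, 0 ≤ W x) (hWV : ∀ x, W x ≤ V x)
    (hlow : IsLowerOrder W V) {α : ℝ}
    (hσs : ∀ m, _root_.memPV V (σs m)) (hα : ∀ m, ∫ x, V x ∂σs m ≤ α)
    (hσ : _root_.memPV V σ) (hασ : ∫ x, V x ∂σ ≤ α) (h : VagueTendsto σs σ)
    (hD : ∀ n, ∀ᶠ m in atTop, ParametrixBound A (cutoff n) (cutoff (n + 1)) (D n) (σs m))
    {ε : ℝ} (hε : 0 < ε) :
    ∀ᶠ m in atTop, ∀ f : Ed d → ℝ, Measurable f → (∀ x, |f x| ≤ W x) →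
      |∫ x, f x ∂σs m - ∫ x, f x ∂σ| ≤ ε := by
  have hα0 : 0 ≤ α := (integral_nonneg fun x => (hW0 x).trans (hWV x)).trans hασ
  obtain ⟨n, hn⟩ := hlow (ε / (4 * (α + 1))) (by positivity)
  obtain ⟨M, hM⟩ := (hasCompactSupport_cutoff (d := d) n).isCompact.exists_bound_of_continuousOn
    hWc.continuousOn
  set M' := max M 1 with hM'
  have hM'0 : 0 < M' := by positivity
  have htail : ∀ ρ : Measure (Ed d), _root_.memPV V ρ → ∫ x, V x ∂ρ ≤ α → ∀ f : Ed d → ℝ,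
      Measurable f → (∀ x, |f x| ≤ W x) →
      |∫ x, f x ∂ρ - ∫ x, cutoff n x * f x ∂ρ| ≤ ε / 4 := by
    intro ρ hρ hαρ f hf hfW
    have hfi : Integrable f ρ := hρ.2.mono' hf.aestronglyMeasurable
      (Eventually.of_forall fun x => (hfW x).trans (hWV x))
    have hcfi : Integrable (fun x => cutoff n x * f x) ρ :=
      hfi.norm.mono' ((continuous_cutoff n).measurable.mul hf).aestronglyMeasurable
        (Eventually.of_forall fun x => by
          rw [norm_mul]; exact mul_le_of_le_one_left (norm_nonneg _) (abs_cutoff_le_one n x))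
    rw [← integral_sub hfi hcfi, ← Real.norm_eq_abs]
    refine (norm_integral_le_of_norm_le (hρ.2.const_mul (ε / (4 * (α + 1))))
      (Eventually.of_forall fun x => ?_)).trans ?_
    · rw [← one_sub_mul, norm_mul, Real.norm_eq_abs, Real.norm_eq_abs,
        abs_of_nonneg (by linarith [cutoff_le_one n x])]
      rcases le_total ‖x‖ (n + 1) with hx | hx
      · rw [cutoff_eq_one hx, sub_self, zero_mul]
        have := (hW0 x).trans (hWV x)
        positivity
      · refine (mul_le_of_le_one_left (abs_nonneg _) ?_).trans ((hfW x).trans (hn x hx))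
        linarith [cutoff_nonneg n x]
    · rw [integral_const_mul, div_mul_eq_mul_div, div_le_iff₀ (by positivity)]
      nlinarith
  have hmain := h.eventually_abs_integral_sub_le hA (continuous_cutoff n)
    (hasCompactSupport_cutoff n) (abs_cutoff_le_one n) (continuous_cutoff (n + 1))
    (hasCompactSupport_cutoff (n + 1)) (abs_cutoff_le_one _) (fun m => (hσs m).1) hσ.1 (hD n)
    (ε := ε / (2 * M')) (by positivity)
  filter_upwards [hmain] with m hm f hf hfW
  set g : Ed d → ℝ := fun x => max (-1) (min 1 (f x / M')) with hg
  have hgm : Measurable g := measurable_const.max (measurable_const.min (hf.div_const M'))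
  have hg1 : ∀ x, |g x| ≤ 1 := fun x =>
    abs_le.2 ⟨le_max_left _ _, max_le (by norm_num) (min_le_left _ _)⟩
  have hgf : ∀ x, cutoff n x * f x = M' * (cutoff n x * g x) := fun x => by
    by_cases hx : x ∈ tsupport (cutoff n : Ed d → ℝ)
    · have hfx : |f x| ≤ M' := (hfW x).trans <|
        ((le_abs_self _).trans (hM x hx)).trans (le_max_left _ _)
      have hfx' := abs_le.1 hfx
      have h1 : f x / M' ≤ 1 := (div_le_one hM'0).2 hfx'.2
      have h2 : -1 ≤ f x / M' := by rw [le_div_iff₀ hM'0]; linarith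
      simp only [hg, min_eq_right h1, max_eq_right h2]
      field_simp
    · rw [image_eq_zero_of_notMem_tsupport hx]; simp
  have hM1 := hm g hgm hg1
  have e : |∫ x, cutoff n x * f x ∂σs m - ∫ x, cutoff n x * f x ∂σ| ≤ ε / 2 := by
    simp only [hgf, integral_const_mul]
    rw [← mul_sub, abs_mul, abs_of_pos hM'0]
    calc _ ≤ M' * (ε / (2 * M')) := mul_le_mul_of_nonneg_left hM1 hM'0.le
      _ = ε / 2 := by field_simp
  have t1 := htail _ (hσs m) (hα m) f hf hfW
  have t2 := htail _ hσ hασ f hf hfW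
  rw [abs_le] at e t1 t2 ⊢
  constructor <;> linarith

/-- Compactness of families with a common Lyapunov moment and common parametrix bounds. -/
theorem exists_subseq_weighted_limit (hA : IsElliptic A K₁ K₂) (hVc : Continuous V)
    (hV1 : ∀ x, 1 ≤ V x) (hVinf : Tendsto V (cocompact (Ed d)) atTop)
    (hWc : Continuous W) (hW0 : ∀ x, 0 ≤ W x) (hWV : ∀ x, W x ≤ V x)
    (hlow : IsLowerOrder W V) {α : ℝ} (hσs : ∀ m, memPV V (σs m))
    (hα : ∀ m, ∫ x, V x ∂σs m ≤ α)
    (hD : ∀ n, ∀ᶠ m in atTop, ParametrixBound A (cutoff n) (cutoff (n + 1)) (D n) (σs m)) :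
    ∃ σ : Measure (Ed d), memPV V σ ∧ ∫ x, V x ∂σ ≤ α ∧ LocalBounds A D σ ∧
      ∃ φ : ℕ → ℕ, StrictMono φ ∧ ∀ ε > 0, ∀ᶠ m in atTop, ∀ f : Ed d → ℝ, Measurable f →
        (∀ x, |f x| ≤ W x) → |∫ x, f x ∂σs (φ m) - ∫ x, f x ∂σ| ≤ ε := by
  obtain ⟨σ, hσ, φ, hφ, hlim⟩ := exists_subseq_vagueTendsto hVinf hV1 hσs hα
  have hD' : ∀ n, ∀ᶠ m in atTop,
      ParametrixBound A (cutoff n) (cutoff (n + 1)) (D n) ((σs ∘ φ) m) :=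
    fun n => hφ.tendsto_atTop.eventually (hD n)
  obtain ⟨hm, hma⟩ := hlim.memPV hVc hV1 (fun m => hσs _) (fun m => hα _) hσ
  refine ⟨σ, hm, hma, fun n => ?_, φ, hφ, fun ε hε => ?_⟩
  · exact hlim.parametrixBound hA (continuous_cutoff n) (hasCompactSupport_cutoff n)
      (abs_cutoff_le_one n) (continuous_cutoff _) (hasCompactSupport_cutoff _)
      (fun m => (hσs _).1) hσ (hD' n)
  · exact hlim.eventually_abs_integral_sub_le_of_weight hA hWc hW0 hWV hlow (fun m => hσs _)
      (fun m => hα _) hm hma hD' hε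

end Compactness

section Annihilating

open scoped CompactlySupported

/-- A subspace of continuous functions on a compact space none of whose elements is everywhere
negative is annihilated by a probability measure. -/
theorem exists_isProbabilityMeasure_integral_eq_zero {X : Type*} [TopologicalSpace X]
    [CompactSpace X] [T2Space X] [Nonempty X] [MeasurableSpace X] [BorelSpace X]
    (S : Submodule ℝ C(X, ℝ)) (hS : ∀ u ∈ S, ∃ x, 0 ≤ u x) :
    ∃ σ : Measure X, IsProbabilityMeasure σ ∧ ∀ u ∈ S, ∫ x, u x ∂σ = 0 := by
  set U : Set C(X, ℝ) := {u | ∀ x, u x < 0} with hU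
  have hUo : IsOpen U := by
    have : U = {u : C(X, ℝ) | MapsTo u univ (Iio 0)} := by ext u; simp [hU, MapsTo]
    rw [this]
    exact ContinuousMap.isOpen_setOfPred_mapsTo isCompact_univ isOpen_Iio
  have hUc : Convex ℝ U := by
    intro u hu v hv a b ha hb hab x
    have h1 := hu x
    have h2 := hv x
    change a * u x + b * v x < 0
    rcases ha.eq_or_lt with rfl | ha'
    · have : b = 1 := by linarith
      subst this; linarith
    · nlinarith
  have hdisj : Disjoint U (S : Set C(X, ℝ)) := by
    rw [Set.disjoint_left]
    intro u hu huS
    obtain ⟨x, hx⟩ := hS u huS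
    exact absurd (hu x) (not_lt.2 hx)
  obtain ⟨f, a, hfU, hfS⟩ := geometric_hahn_banach_open hUc hUo S.convex hdisj
  have ha0 : a ≤ 0 := by simpa using hfS 0 S.zero_mem
  have hf1 : 0 < f 1 := by
    have h : (-1 : C(X, ℝ)) ∈ U := fun x => by simp
    have := hfU _ h
    rw [map_neg] at this
    linarith
  have hpos : ∀ g : C(X, ℝ), 0 ≤ g → 0 ≤ f g := by
    intro g hg
    by_contra! hneg
    have h : (-(g + (-(f g) / (2 * f 1)) • (1 : C(X, ℝ)))) ∈ U := fun x => by
      have hgx : 0 ≤ g x := hg x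
      have : 0 < -(f g) / (2 * f 1) := by apply div_pos <;> linarith
      simp only [ContinuousMap.neg_apply, ContinuousMap.add_apply, ContinuousMap.smul_apply,
        ContinuousMap.one_apply, smul_eq_mul, mul_one]
      linarith
    have := hfU _ h
    rw [map_neg, map_add, map_smul, smul_eq_mul] at this
    have e : -(f g) / (2 * f 1) * f 1 = -(f g) / 2 := by field_simp
    rw [e] at this
    linarith
  have hfS0 : ∀ u ∈ S, f u = 0 := by
    intro u hu
    by_contra hne
    have := hfS _ (S.smul_mem ((a - 1) / f u) hu)
    rw [map_smul, smul_eq_mul, div_mul_cancel₀ _ hne] at this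
    linarith
  let Λ : C_c(X, ℝ) →ₗ[ℝ] ℝ :=
    { toFun := fun g => (f 1)⁻¹ * f (g : C(X, ℝ))
      map_add' := fun g h => by
        rw [← mul_add, ← map_add]; rfl
      map_smul' := fun c g => by
        rw [RingHom.id_apply, smul_eq_mul, mul_left_comm, ← smul_eq_mul c, ← map_smul]; rfl }
  let Λ' : C_c(X, ℝ) →ₚ[ℝ] ℝ := PositiveLinearMap.mk₀ Λ fun g hg =>
    mul_nonneg (inv_nonneg.2 hf1.le) (hpos _ fun x => hg x)
  have hInt : ∀ g : C(X, ℝ), ∫ x, g x ∂(RealRMK.rieszMeasure Λ') = (f 1)⁻¹ * f g := fun g =>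
    RealRMK.integral_rieszMeasure Λ' (CompactlySupportedContinuousMap.continuousMapEquiv g)
  refine ⟨RealRMK.rieszMeasure Λ', ?_, fun u hu => by rw [hInt, hfS0 u hu, mul_zero]⟩
  have h1 := hInt 1
  rw [inv_mul_cancel₀ hf1.ne'] at h1
  simp only [ContinuousMap.one_apply, integral_const, smul_eq_mul, mul_one] at h1
  constructor
  rw [measureReal_def] at h1
  exact (ENNReal.toReal_eq_one_iff _).1 h1

theorem IsCompact.exists_isProbabilityMeasure_integral_eq_zero {K : Set (Ed d)} (hK : IsCompact K)
    (hne : K.Nonempty) (S : Submodule ℝ (Ed d → ℝ)) (hSc : ∀ u ∈ S, Continuous u)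
    (hS : ∀ u ∈ S, ∃ x ∈ K, 0 ≤ u x) :
    ∃ σ : Measure (Ed d), IsProbabilityMeasure σ ∧ (∀ᵐ x ∂σ, x ∈ K) ∧
      ∀ u ∈ S, ∫ x, u x ∂σ = 0 := by
  have : CompactSpace K := isCompact_iff_compactSpace.1 hK
  have : Nonempty K := hne.to_subtype
  let S' : Submodule ℝ C(K, ℝ) :=
    { carrier := {v | ∃ u ∈ S, ∀ x : K, v x = u x}
      add_mem' := by
        rintro v w ⟨u, hu, h⟩ ⟨u', hu', h'⟩
        exact ⟨u + u', S.add_mem hu hu', fun x => by simp [h, h']⟩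
      zero_mem' := ⟨0, S.zero_mem, by simp⟩
      smul_mem' := by
        rintro c v ⟨u, hu, h⟩
        exact ⟨c • u, S.smul_mem c hu, fun x => by simp [h]⟩ }
  obtain ⟨σ, hσ, h⟩ := _root_.exists_isProbabilityMeasure_integral_eq_zero S' (by
    rintro v ⟨u, hu, h⟩
    obtain ⟨x, hx, hux⟩ := hS u hu
    exact ⟨⟨x, hx⟩, by rw [h]; exact hux⟩)
  refine ⟨σ.map Subtype.val, Measure.isProbabilityMeasure_map measurable_subtype_coe.aemeasurable,
    ?_, fun u hu => ?_⟩
  · exact (ae_map_iff (p := fun x => x ∈ K) measurable_subtype_coe.aemeasurable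
      hK.measurableSet).2 (Eventually.of_forall fun x => x.2)
  · rw [integral_map measurable_subtype_coe.aemeasurable (hSc u hu).aestronglyMeasurable]
    exact h ⟨fun x => u x, (hSc u hu).comp continuous_subtype_val⟩ ⟨u, hu, fun x => rfl⟩

end Annihilating

section Regular

variable {A : Ed d → Matrix (Fin d) (Fin d) ℝ} {K₁ K₂ : ℝ} {V : Ed d → ℝ}

/-- The operator cut off outside a ball, with jumps back to the origin. -/
def jumpOp (A : Ed d → Matrix (Fin d) (Fin d) ℝ) (B : Ed d → Ed d) (m : ℕ) (Λ : ℝ)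
    (φ : Ed d → ℝ) (x : Ed d) : ℝ :=
  cutoff m x * Lop A B φ x + Λ * (1 - cutoff m x) * (φ 0 - φ x)

theorem continuous_jumpOp (hA : IsElliptic A K₁ K₂) {B : Ed d → Ed d} (hB : Continuous B) (m : ℕ)
    (Λ : ℝ) {φ : Ed d → ℝ} (hφ : ContDiff ℝ 2 φ) : Continuous (jumpOp A B m Λ φ) :=
  ((continuous_cutoff m).mul (continuous_Lop hA.continuous_apply hB hφ)).add
    ((continuous_const.mul (continuous_const.sub (continuous_cutoff m))).mul
      (continuous_const.sub hφ.continuous))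

theorem exists_jumpOp_nonneg (hA : IsElliptic A K₁ K₂) (B : Ed d → Ed d) (m : ℕ)
    {Λ : ℝ} (hΛ : 0 ≤ Λ) {φ : Ed d → ℝ} (hφ : ContDiff ℝ 2 φ) :
    ∃ x ∈ closedBall (0 : Ed d) (m + 2), 0 ≤ jumpOp A B m Λ φ x := by
  have h0 : (0 : Ed d) ∈ closedBall (0 : Ed d) (m + 2) := mem_closedBall_self (by positivity)
  obtain ⟨x, hx, hmin⟩ := (isCompact_closedBall (0 : Ed d) ((m : ℝ) + 2)).exists_isMinOn ⟨0, h0⟩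
    hφ.continuous.continuousOn
  refine ⟨x, hx, add_nonneg ?_ (mul_nonneg (mul_nonneg hΛ ?_) (sub_nonneg.2 (hmin h0)))⟩
  · by_cases hc : cutoff m x = 0
    · rw [hc, zero_mul]
    · have hxb : x ∈ ball (0 : Ed d) (m + 2) := by
        have : x ∈ Function.support (cutoffBump d m) := hc
        rwa [ContDiffBump.support_eq] at this
      refine mul_nonneg (cutoff_nonneg m x)
        (Lop_nonneg_of_isLocalMin hφ (hA.posDef x).posSemidef ?_)
      filter_upwards [isOpen_ball.mem_nhds hxb] with y hy using hmin (ball_subset_closedBall hy)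
  · linarith [cutoff_le_one m x]

/-- Approximate stationary measures for a continuous drift. -/
theorem exists_jump_stationary (hA : IsElliptic A K₁ K₂) {B : Ed d → Ed d} (hB : Continuous B)
    (hV : ContDiff ℝ 2 V) (m : ℕ) {Λ c : ℝ} (hΛ : 0 < Λ)
    (hL : ∀ x ∈ closedBall (0 : Ed d) (m + 2), Lop A B V x ≤ c - Λ * V x)
    (hV0 : Λ * V 0 ≤ c) :
    ∃ σ : Measure (Ed d), memPV V σ ∧ Λ * ∫ x, V x ∂σ ≤ c ∧
      ∀ φ : Ed d → ℝ, ContDiff ℝ 2 φ → tsupport φ ⊆ closedBall 0 (m + 1) →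
        ∫ x, Lop A B φ x ∂σ = -(Λ * ∫ x, (1 - cutoff m x) ∂σ) * φ 0 := by
  let S : Submodule ℝ (Ed d → ℝ) :=
    { carrier := {u | ∃ φ : Ed d → ℝ, ContDiff ℝ 2 φ ∧ u = jumpOp A B m Λ φ}
      add_mem' := by
        rintro _ _ ⟨φ, hφ, rfl⟩ ⟨ψ, hψ, rfl⟩
        refine ⟨fun y => φ y + ψ y, hφ.add hψ, funext fun x => ?_⟩
        simp only [Pi.add_apply, jumpOp, Lop_add hφ hψ]
        ring
      zero_mem' := by
        refine ⟨fun y => 0 * V y, contDiff_const.mul hV, funext fun x => ?_⟩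
        simp only [jumpOp, Lop_const_mul hV]
        simp
      smul_mem' := by
        rintro k _ ⟨φ, hφ, rfl⟩
        refine ⟨fun y => k * φ y, contDiff_const.mul hφ, funext fun x => ?_⟩
        simp only [Pi.smul_apply, smul_eq_mul, jumpOp, Lop_const_mul hφ]
        ring }
  have hK := isCompact_closedBall (0 : Ed d) ((m : ℝ) + 2)
  obtain ⟨σ, hσ, hσK, hσS⟩ := hK.exists_isProbabilityMeasure_integral_eq_zero
    ⟨0, mem_closedBall_self (by positivity)⟩ S
    (by rintro _ ⟨φ, hφ, rfl⟩; exact continuous_jumpOp hA hB m Λ hφ)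
    (by rintro _ ⟨φ, hφ, rfl⟩; exact exists_jumpOp_nonneg hA B m hΛ.le hφ)
  have hInt : ∀ u : Ed d → ℝ, Continuous u → Integrable u σ := fun u hu => by
    have := hu.continuousOn.integrableOn_compact (μ := σ) hK
    rwa [IntegrableOn, Measure.restrict_eq_self_of_ae_mem hσK] at this
  have hVi := hInt V hV.continuous
  refine ⟨σ, ⟨hσ, hVi⟩, ?_, fun φ hφ hsupp => ?_⟩
  · have h0 : ∫ x, jumpOp A B m Λ V x ∂σ = 0 := hσS _ ⟨V, hV, rfl⟩
    have hle : ∫ x, jumpOp A B m Λ V x ∂σ ≤ ∫ x, (c - Λ * V x) ∂σ := by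
      refine integral_mono_ae (hInt _ (continuous_jumpOp hA hB m Λ hV))
        ((integrable_const c).sub (hVi.const_mul Λ)) ?_
      filter_upwards [hσK] with x hx
      have h1 := mul_le_mul_of_nonneg_left (hL x hx) (cutoff_nonneg m x)
      have h2 : (1 - cutoff m x) * (Λ * V 0) ≤ (1 - cutoff m x) * c :=
        mul_le_mul_of_nonneg_left hV0 (by linarith [cutoff_le_one m x])
      simp only [jumpOp]
      linarith
    rw [h0, integral_sub (integrable_const c) (hVi.const_mul Λ), integral_const_mul] at hle
    simp at hle
    linarith
  · have h0 : ∫ x, jumpOp A B m Λ φ x ∂σ = 0 := hσS _ ⟨φ, hφ, rfl⟩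
    have he : ∀ x, jumpOp A B m Λ φ x = Lop A B φ x + Λ * φ 0 * (1 - cutoff m x) := fun x => by
      rw [jumpOp]
      by_cases hx : x ∈ tsupport φ
      · rw [cutoff_eq_one (mem_closedBall_zero_iff.1 (hsupp hx))]; ring
      · rw [Lop_eq_zero_of_notMem_tsupport A B hx, image_eq_zero_of_notMem_tsupport hx]; ring
    have hci : Integrable (fun x => Λ * φ 0 * (1 - cutoff m x)) σ :=
      (hInt _ (continuous_const.sub (continuous_cutoff m))).const_mul _
    simp only [he] at h0
    rw [integral_add (hInt _ (continuous_Lop hA.continuous_apply hB hφ)) hci,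
      integral_const_mul] at h0
    linarith

end Regular

section Mollification

open scoped Convolution

/-- A bump supported in the ball of radius `(m + 1)⁻¹`. -/
def mollifierBump (d m : ℕ) : ContDiffBump (0 : Ed d) where
  rIn := ((m : ℝ) + 1)⁻¹ / 2
  rOut := ((m : ℝ) + 1)⁻¹
  rIn_pos := by positivity
  rIn_lt_rOut := half_lt_self (by positivity)

/-- Mollification of a vector field. -/
def mollify (B : Ed d → Ed d) (m : ℕ) : Ed d → Ed d :=
  (mollifierBump d m).normed volume ⋆[ContinuousLinearMap.lsmul ℝ ℝ, volume] B

variable {B : Ed d → Ed d}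

theorem continuous_mollify (hB : LocallyIntegrable B) (m : ℕ) : Continuous (mollify B m) :=
  (mollifierBump d m).hasCompactSupport_normed.continuous_convolution_left _
    (mollifierBump d m).continuous_normed hB

theorem ae_tendsto_mollify (hB : LocallyIntegrable B) :
    ∀ᵐ x, Tendsto (fun m => mollify B m x) atTop (𝓝 (B x)) := by
  refine ContDiffBump.ae_convolution_tendsto_right_of_locallyIntegrable (K := 2) ?_ ?_ hB
  · exact tendsto_inv_atTop_zero.comp
      (tendsto_atTop_add_const_right _ 1 tendsto_natCast_atTop_atTop)
  · refine Eventually.of_forall fun m => ?_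
    simp only [mollifierBump]
    linarith

theorem inner_mollify_le (hB : LocallyIntegrable B) {m : ℕ} {x v : Ed d} {a : ℝ}
    (h : ∀ z, ‖z - x‖ ≤ ((m : ℝ) + 1)⁻¹ → ⟪B z, v⟫ ≤ a) : ⟪mollify B m x, v⟫ ≤ a := by
  set k := (mollifierBump d m).normed volume with hk
  have hki : Integrable k := (mollifierBump d m).integrable_normed
  have hi : Integrable fun t => k t • B (x - t) :=
    (mollifierBump d m).hasCompactSupport_normed.convolutionExists_left
      (ContinuousLinearMap.lsmul ℝ ℝ) (mollifierBump d m).continuous_normed hB x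
  have he : ⟪mollify B m x, v⟫ = ∫ t, k t * ⟪B (x - t), v⟫ := by
    rw [real_inner_comm]
    have h1 := integral_inner (𝕜 := ℝ) hi v
    simp only [real_inner_smul_right] at h1
    simp only [real_inner_comm v]
    exact h1.symm
  have hi' : Integrable fun t => k t * ⟪B (x - t), v⟫ := by
    have h1 := hi.inner_const (𝕜 := ℝ) v
    simpa only [real_inner_smul_left] using h1
  calc ⟪mollify B m x, v⟫ = ∫ t, k t * ⟪B (x - t), v⟫ := he
    _ ≤ ∫ t, k t * a := by
      refine integral_mono hi' (hki.mul_const a) fun t => ?_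
      by_cases ht : t ∈ Function.support k
      · refine mul_le_mul_of_nonneg_left (h _ ?_) ((mollifierBump d m).nonneg_normed t)
        rw [hk, ContDiffBump.support_normed_eq, mem_ball_zero_iff] at ht
        simpa using (show ‖t‖ < ((m : ℝ) + 1)⁻¹ from ht).le
      · rw [Function.notMem_support.1 ht]; simp
    _ = a := by rw [integral_mul_const, (mollifierBump d m).integral_normed, one_mul]

theorem norm_mollify_le (hB : LocallyIntegrable B) {m : ℕ} {x : Ed d} {N : ℝ} (hN0 : 0 ≤ N)
    (h : ∀ z, ‖z - x‖ ≤ 1 → ‖B z‖ ≤ N) : ‖mollify B m x‖ ≤ N := by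
  have h1 : ⟪mollify B m x, mollify B m x⟫ ≤ N * ‖mollify B m x‖ := by
    refine inner_mollify_le hB fun z hz => (real_inner_le_norm _ _).trans
      (mul_le_mul_of_nonneg_right (h z (hz.trans ?_)) (norm_nonneg _))
    exact inv_le_one_of_one_le₀ (by linarith [(Nat.cast_nonneg m : (0 : ℝ) ≤ m)])
  rw [real_inner_self_eq_norm_sq, sq] at h1
  rcases (norm_nonneg (mollify B m x)).eq_or_lt with h0 | h0
  · rwa [← h0]
  · exact le_of_mul_le_mul_right h1 h0

end Mollification

section LinearExistence

variable {A : Ed d → Matrix (Fin d) (Fin d) ℝ} {K₁ K₂ : ℝ} {V : Ed d → ℝ} {B : Ed d → Ed d}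
  {N : ℝ → ℝ}

theorem Lop_eq_add_inner (A : Ed d → Matrix (Fin d) (Fin d) ℝ) (B : Ed d → Ed d) (φ : Ed d → ℝ)
    (x : Ed d) : Lop A B φ x = Lop A (fun _ => 0) φ x + ⟪B x, gradient φ x⟫ := by
  simp [Lop]

theorem locallyIntegrable_of_norm_le (hB : Measurable B)
    (hN : ∀ R > 0, ∀ x, ‖x‖ ≤ R → ‖B x‖ ≤ N R) : LocallyIntegrable B := by
  rw [locallyIntegrable_iff]
  intro k hk
  obtain ⟨R, hR0, hR⟩ := hk.isBounded.exists_pos_norm_le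
  exact Measure.integrableOn_of_bounded hk.measure_lt_top.ne hB.aestronglyMeasurable
    (M := N R) ((ae_restrict_iff' hk.measurableSet).2 (Eventually.of_forall fun x hx =>
      hN R hR0 x (hR x hx)))

theorem exists_Lop_mollify_le (hA : IsElliptic A K₁ K₂) (hV : ContDiff ℝ 2 V) (hB : Measurable B)
    (hN : ∀ R > 0, ∀ x, ‖x‖ ≤ R → ‖B x‖ ≤ N R) {Λ c : ℝ} (hΛ : 0 < Λ)
    (hL : ∀ x, Lop A B V x ≤ c - Λ * V x) (m : ℕ) :
    ∃ k, m ≤ k ∧ ∀ x ∈ closedBall (0 : Ed d) (m + 2),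
      Lop A (mollify B k) V x ≤ c + Λ - Λ * V x := by
  have hBl := locallyIntegrable_of_norm_le hB hN
  set G : Ed d → ℝ := fun x => c - Λ * V x - Lop A (fun _ => 0) V x with hG
  have hGc : Continuous G := (continuous_const.sub (continuous_const.mul hV.continuous)).sub
    (continuous_Lop hA.continuous_apply continuous_const hV)
  set N' := N (m + 3) with hN'
  have hN0 : 0 ≤ N' := (norm_nonneg _).trans (hN (m + 3) (by positivity) 0 (by
    rw [norm_zero]; positivity))
  have huc := (isCompact_closedBall (0 : Ed d) ((m : ℝ) + 3)).uniformContinuousOn_of_continuous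
    (hGc.prodMk hV.continuous_gradient).continuousOn
  rw [Metric.uniformContinuousOn_iff] at huc
  obtain ⟨ρ, hρ, hρ'⟩ := huc (min (Λ / 2) (Λ / (2 * (N' + 1)))) (by positivity)
  obtain ⟨k₀, hk₀⟩ := exists_nat_one_div_lt hρ
  refine ⟨max m k₀, le_max_left _ _, fun x hx => ?_⟩
  rw [mem_closedBall_zero_iff] at hx
  set k := max m k₀ with hk
  have hkinv : ((k : ℝ) + 1)⁻¹ < ρ := by
    refine lt_of_le_of_lt ?_ hk₀
    rw [← one_div]
    refine one_div_le_one_div_of_le (by positivity) ?_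
    have : (k₀ : ℝ) ≤ k := by exact_mod_cast le_max_right m k₀
    linarith
  have hkinv1 : ((k : ℝ) + 1)⁻¹ ≤ 1 :=
    inv_le_one_of_one_le₀ (by linarith [(Nat.cast_nonneg k : (0 : ℝ) ≤ k)])
  have hkey : ⟪mollify B k x, gradient V x⟫ ≤ G x + Λ := by
    refine inner_mollify_le hBl fun z hz => ?_
    have hzn : ‖z‖ ≤ m + 3 := by
      have : ‖z‖ ≤ ‖z - x‖ + ‖x‖ := by simpa using norm_add_le (z - x) x
      linarith
    have hd := hρ' z (mem_closedBall_zero_iff.2 hzn) x (mem_closedBall_zero_iff.2 (by linarith))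
      (by rw [dist_eq_norm]; exact hz.trans_lt hkinv)
    rw [Prod.dist_eq, max_lt_iff, lt_min_iff, lt_min_iff, Real.dist_eq, dist_eq_norm] at hd
    have h1 : ⟪B z, gradient V z⟫ ≤ G z := by
      have := hL z
      rw [Lop_eq_add_inner] at this
      simp only [hG]; linarith
    have h2 : ⟪B z, gradient V x - gradient V z⟫ ≤ Λ / 2 := by
      refine (real_inner_le_norm _ _).trans ?_
      rw [norm_sub_rev]
      calc ‖B z‖ * ‖gradient V z - gradient V x‖ ≤ N' * (Λ / (2 * (N' + 1))) :=
            mul_le_mul (hN _ (by positivity) z hzn) hd.2.2.le (norm_nonneg _) hN0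
        _ ≤ Λ / 2 := by
            rw [← mul_div_assoc, div_le_div_iff₀ (by positivity) (by positivity)]
            nlinarith
    rw [inner_sub_right] at h2
    have h3 := (abs_lt.1 hd.1.1).2
    linarith
  rw [Lop_eq_add_inner]
  simp only [hG] at hkey
  linarith

theorem isLowerOrder_one (hVinf : Tendsto V (cocompact (Ed d)) atTop) :
    IsLowerOrder (fun _ => 1) V := by
  intro ε hε
  obtain ⟨K, hK, hKr⟩ := mem_cocompact.1 (hVinf (Ici_mem_atTop (1 / ε)))
  obtain ⟨R, hR⟩ := hK.isBounded.exists_norm_le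
  obtain ⟨n, hn⟩ := exists_nat_ge R
  refine ⟨n, fun x hx => ?_⟩
  have hxK : x ∈ Kᶜ := fun h => by linarith [hR x h]
  have : 1 / ε ≤ V x := hKr hxK
  rwa [div_le_iff₀' hε] at this

/-- Existence of a stationary measure for a locally bounded Borel drift with a Lyapunov
function. -/
theorem exists_linear_stationary (hA : IsElliptic A K₁ K₂) (hV : ContDiff ℝ 2 V)
    (hV1 : ∀ x, 1 ≤ V x) (hVinf : Tendsto V (cocompact (Ed d)) atTop) (hB : Measurable B)
    (hN : ∀ R > 0, ∀ x, ‖x‖ ≤ R → ‖B x‖ ≤ N R) {Λ c α : ℝ} (hΛ : 0 < Λ)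
    (hL : ∀ x, Lop A B V x ≤ c - Λ * V x) (hV0 : Λ * V 0 ≤ c) (hα : c + Λ ≤ Λ * α)
    {D : ℕ → ℝ}
    (hD : ∀ n, ∀ B : Ed d → Ed d, Measurable B →
      (∀ x ∈ tsupport (cutoff n : Ed d → ℝ), ‖B x‖ ≤ N (n + 3)) →
      ∀ σ : Measure (Ed d), IsProbabilityMeasure σ → ∀ κ : ℝ, |κ| ≤ Λ →
      (∀ φ : Ed d → ℝ, ContDiff ℝ 2 φ → tsupport φ ⊆ tsupport (cutoff n : Ed d → ℝ) →
        ∫ x, Lop A B φ x ∂σ = κ * φ 0) →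
      ParametrixBound A (cutoff n) (cutoff (n + 1)) (D n) σ) :
    ∃ σ : Measure (Ed d), memPV V σ ∧ ∫ x, V x ∂σ ≤ α ∧ LocalBounds A D σ ∧
      ∀ φ : Ed d → ℝ, ContDiff ℝ 2 φ → HasCompactSupport φ → ∫ x, Lop A B φ x ∂σ = 0 := by
  have hBl := locallyIntegrable_of_norm_le hB hN
  have hK := hA.pos
  have hlow := isLowerOrder_one hVinf
  have hα0 : 0 < α := by
    have : 0 < Λ * α := by nlinarith [hV1 0]
    exact (pos_iff_pos_of_mul_pos this).1 hΛ
  have hN0 : ∀ R > 0, 0 ≤ N R := fun R hR =>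
    (norm_nonneg _).trans (hN R hR 0 (by rw [norm_zero]; exact hR.le))
  have hmoll : ∀ R > 0, ∀ k x, ‖x‖ ≤ R → ‖mollify B k x‖ ≤ N (R + 1) := fun R hR k x hx =>
    norm_mollify_le hBl (hN0 _ (by linarith)) fun z hz => hN _ (by linarith) z (by
      have : ‖z‖ ≤ ‖z - x‖ + ‖x‖ := by simpa using norm_add_le (z - x) x
      linarith)
  choose k hk hkL using exists_Lop_mollify_le hA hV hB hN hΛ hL
  choose σs hσs hVs hst using fun m => exists_jump_stationary hA (continuous_mollify hBl (k m)) hV m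
    hΛ (hkL m) (by linarith)
  have hαs : ∀ m, ∫ x, V x ∂σs m ≤ α := fun m =>
    le_of_mul_le_mul_left ((hVs m).trans hα) hΛ
  have hone : ∀ m, Integrable (fun x => 1 - cutoff m x) (σs m) := fun m => by
    have := (hσs m).1
    exact (integrable_const 1).sub
      ((continuous_cutoff m).integrable_of_hasCompactSupport (hasCompactSupport_cutoff m))
  have hcut0 : ∀ m, 0 ≤ ∫ x, (1 - cutoff m x) ∂σs m := fun m =>
    integral_nonneg fun x => sub_nonneg.2 (cutoff_le_one m x)
  have hcut1 : ∀ m, ∫ x, (1 - cutoff m x) ∂σs m ≤ 1 := fun m => by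
    have := (hσs m).1
    calc ∫ x, (1 - cutoff m x) ∂σs m ≤ ∫ _, (1 : ℝ) ∂σs m :=
          integral_mono (hone m) (integrable_const 1) fun x => by
            simpa using cutoff_nonneg m x
      _ = 1 := by simp
  have hcut : Tendsto (fun m => ∫ x, (1 - cutoff m x) ∂σs m) atTop (𝓝 0) := by
    rw [Metric.tendsto_atTop]
    intro ε hε
    obtain ⟨n, hn⟩ := hlow (ε / (2 * α)) (by positivity)
    refine ⟨n, fun m hm => ?_⟩
    rw [Real.dist_eq, sub_zero, abs_of_nonneg (hcut0 m)]
    calc ∫ x, (1 - cutoff m x) ∂σs m ≤ ∫ x, ε / (2 * α) * V x ∂σs m := by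
          refine integral_mono (hone m) ((hσs m).2.const_mul _) fun x => ?_
          have hVx := hV1 x
          rcases le_total ‖x‖ (m + 1) with hx | hx
          · simp only [cutoff_eq_one hx, sub_self]; positivity
          · have : (n : ℝ) ≤ m := by exact_mod_cast hm
            have h1 := hn x (by linarith)
            have h2 := cutoff_nonneg m x
            simp only at h1 ⊢
            linarith
      _ = ε / (2 * α) * ∫ x, V x ∂σs m := integral_const_mul _ _
      _ ≤ ε / (2 * α) * α := mul_le_mul_of_nonneg_left (hαs m) (by positivity)
      _ < ε := by field_simp; linarith
  have hDs : ∀ n, ∀ᶠ m in atTop, ParametrixBound A (cutoff n) (cutoff (n + 1)) (D n) (σs m) := by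
    intro n
    filter_upwards [eventually_ge_atTop (n + 1)] with m hm
    have hm' : (n : ℝ) + 1 ≤ m := by exact_mod_cast hm
    refine hD n (mollify B (k m)) (continuous_mollify hBl (k m)).measurable (fun x hx => ?_) (σs m)
      (hσs m).1 (-(Λ * ∫ x, (1 - cutoff m x) ∂σs m)) ?_ fun φ hφ hsupp => hst m φ hφ ?_
    · rw [tsupport_cutoff, mem_closedBall_zero_iff] at hx
      have := hmoll (n + 2) (by positivity) (k m) x hx
      rwa [show (n : ℝ) + 2 + 1 = n + 3 by ring] at this
    · rw [abs_neg, abs_of_nonneg (mul_nonneg hΛ.le (hcut0 m))]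
      exact mul_le_of_le_one_right hΛ.le (hcut1 m)
    · rw [tsupport_cutoff] at hsupp
      exact hsupp.trans (closedBall_subset_closedBall (by linarith))
  obtain ⟨σ, hσ, hασ, hσD, s, hs, hlim⟩ := exists_subseq_weighted_limit hA hV.continuous hV1 hVinf
    (W := fun _ => 1) continuous_const (by simp) hV1 hlow hσs hαs hDs
  refine ⟨σ, hσ, hασ, hσD, fun φ hφ hφc => ?_⟩
  have := hσ.1
  obtain ⟨R, hR0, hR⟩ := hφc.isCompact.isBounded.exists_pos_norm_le
  obtain ⟨M₁, hM₁⟩ :=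
    (hφ.continuous_iteratedFDeriv (m := 2) le_rfl).bounded_above_of_compact_support
      (hφc.iteratedFDeriv 2)
  obtain ⟨M₂, hM₂⟩ := hφ.continuous_gradient.bounded_above_of_compact_support (by
    refine HasCompactSupport.of_support_subset_isCompact hφc.isCompact ?_
    intro x hx
    by_contra hxs
    have h0 := notMem_tsupport_iff_eventuallyEq.1 hxs
    refine hx ?_
    rw [gradient, h0.fderiv_eq]; simp)
  set M := d ^ 2 * (2 * K₁) * M₁ + N (R + 1) * M₂ + 1 with hM
  have hM₁0 : 0 ≤ M₁ := (norm_nonneg _).trans (hM₁ 0)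
  have hM₂0 : 0 ≤ M₂ := (norm_nonneg _).trans (hM₂ 0)
  have hNR := hN0 (R + 1) (by linarith)
  have hM0 : 0 < M := by positivity
  have hLM : ∀ k x, |Lop A (mollify B k) φ x| ≤ M := fun k x => by
    by_cases hx : x ∈ tsupport φ
    · have h1 := abs_Lop_le (B := mollify B k) (hA.abs_apply_le x) φ
      have h2 : (d : ℝ) ^ 2 * (2 * K₁) * ‖iteratedFDeriv ℝ 2 φ x‖ ≤ d ^ 2 * (2 * K₁) * M₁ :=
        mul_le_mul_of_nonneg_left (hM₁ x) (by positivity)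
      have h3 : ‖mollify B k x‖ * ‖gradient φ x‖ ≤ N (R + 1) * M₂ :=
        mul_le_mul (hmoll R hR0 k x (hR x hx)) (hM₂ x) (norm_nonneg _) hNR
      rw [hM]; linarith
    · rw [Lop_eq_zero_of_notMem_tsupport A _ hx, abs_zero]; exact hM0.le
  have hLm : ∀ k, Measurable (Lop A (mollify B k) φ) := fun k =>
    measurable_Lop hA.continuous_apply (continuous_mollify hBl k).measurable hφ
  have hks : Tendsto (fun m => k (s m)) atTop atTop :=
    (tendsto_atTop_mono hk tendsto_id).comp hs.tendsto_atTop
  have hlim₁ : Tendsto (fun m => ∫ x, Lop A (mollify B (k (s m))) φ x ∂σ) atTop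
      (𝓝 (∫ x, Lop A B φ x ∂σ)) := by
    refine tendsto_integral_of_dominated_convergence (fun _ => M)
      (fun m => (hLm _).aestronglyMeasurable) (integrable_const M)
      (fun m => Eventually.of_forall (hLM _)) ?_
    filter_upwards [(hσD.absolutelyContinuous hA).ae_le (ae_tendsto_mollify hBl)] with x hx
    simp only [Lop_eq_add_inner A (mollify B _), Lop_eq_add_inner A B]
    exact ((hx.comp hks).inner tendsto_const_nhds).const_add _
  have hlim₂ : Tendsto (fun m => ∫ x, Lop A (mollify B (k (s m))) φ x ∂σs (s m)) atTop (𝓝 0) := by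
    have h1 : Tendsto (fun m => -(Λ * ∫ x, (1 - cutoff (s m) x) ∂σs (s m)) * φ 0) atTop
        (𝓝 (-(Λ * 0) * φ 0)) :=
      (((hcut.comp hs.tendsto_atTop).const_mul Λ).neg).mul_const _
    simp only [mul_zero, neg_zero, zero_mul] at h1
    refine h1.congr' ?_
    obtain ⟨n, hn⟩ := exists_nat_ge R
    filter_upwards [hs.tendsto_atTop.eventually_ge_atTop n] with m hm
    refine (hst (s m) φ hφ fun x hx => ?_).symm
    have : (n : ℝ) ≤ s m := by exact_mod_cast hm
    exact mem_closedBall_zero_iff.2 (by linarith [hR x hx])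
  have hlim₃ : Tendsto (fun m => ∫ x, Lop A (mollify B (k (s m))) φ x ∂σs (s m)
      - ∫ x, Lop A (mollify B (k (s m))) φ x ∂σ) atTop (𝓝 0) := by
    rw [Metric.tendsto_nhds]
    intro ε hε
    filter_upwards [hlim (ε / (2 * M)) (by positivity)] with m hm
    have h1 := hm (fun x => Lop A (mollify B (k (s m))) φ x / M) ((hLm _).div_const M) fun x => by
      rw [abs_div, abs_of_pos hM0, div_le_one hM0]; exact hLM _ x
    rw [integral_div, integral_div, ← sub_div, abs_div, abs_of_pos hM0, div_le_iff₀ hM0] at h1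
    rw [Real.dist_eq, sub_zero]
    refine h1.trans_lt ?_
    field_simp; linarith
  have h4 := hlim₂.sub hlim₃
  simp only [sub_sub_cancel, sub_zero] at h4
  exact tendsto_nhds_unique hlim₁ h4

end LinearExistence

section Growth

variable {A : Ed d → Matrix (Fin d) (Fin d) ℝ} {K₁ K₂ : ℝ} {V W : Ed d → ℝ} {B : Ed d → Ed d}
  {b : Ed d → Measure (Ed d) → Ed d} {σ : Measure (Ed d)} {ψ : Ed d → ℝ} {γ : ℝ}

theorem rpow_exponent_le_self {γ v : ℝ} (hγ : γ ≤ 1) (hv : 1 ≤ v) : v ^ γ ≤ v := by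
  simpa using rpow_le_rpow_of_exponent_le hv hγ

theorem Lop_congr {φ : Ed d → ℝ} {x : Ed d} (h : φ =ᶠ[𝓝 x] ψ) : Lop A B φ x = Lop A B ψ x := by
  simp only [Lop, hess2, gradient, (h.iteratedFDeriv ℝ 2).eq_of_nhds, h.fderiv_eq]

/-- A cutoff equal to `1` on the ball of radius `n + 1` whose derivatives are bounded uniformly
in `n`. -/
def dilatedCutoff (n : ℕ) (x : Ed d) : ℝ := cutoff 0 ((n + 1 : ℝ)⁻¹ • x)

theorem contDiff_dilatedCutoff (n : ℕ) : ContDiff ℝ 2 (dilatedCutoff n : Ed d → ℝ) :=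
  (contDiff_cutoff 0 (k := 2)).comp (contDiff_const_smul _)

theorem hasCompactSupport_dilatedCutoff (n : ℕ) :
    HasCompactSupport (dilatedCutoff n : Ed d → ℝ) :=
  (hasCompactSupport_cutoff 0).comp_smul (by positivity)

theorem dilatedCutoff_eq_one {n : ℕ} {x : Ed d} (hx : ‖x‖ ≤ n + 1) : dilatedCutoff n x = 1 := by
  refine cutoff_eq_one ?_
  rw [norm_smul, norm_inv, Real.norm_of_nonneg (by positivity), inv_mul_le_iff₀ (by positivity)]
  simpa using hx

theorem exists_norm_iteratedFDeriv_dilatedCutoff_le :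
    ∃ M : ℝ, 0 ≤ M ∧ ∀ i ≤ 2, ∀ n, ∀ x : Ed d, ‖iteratedFDeriv ℝ i (dilatedCutoff n) x‖ ≤ M := by
  have h : ∀ i : ℕ, ∃ M, ∀ x : Ed d, ‖iteratedFDeriv ℝ i (cutoff 0) x‖ ≤ M := fun i =>
    ((contDiff_cutoff 0 (k := i)).continuous_iteratedFDeriv le_rfl).bounded_above_of_compact_support
      ((hasCompactSupport_cutoff 0).iteratedFDeriv i)
  choose M hM using h
  have hM0 : ∀ i, 0 ≤ M i := fun i => (norm_nonneg _).trans (hM i 0)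
  refine ⟨∑ i ∈ Finset.range 3, M i, Finset.sum_nonneg fun i _ => hM0 i, fun i hi n x => ?_⟩
  have ha : (n + 1 : ℝ)⁻¹ ≤ 1 := inv_le_one_of_one_le₀ (by linarith [n.cast_nonneg (α := ℝ)])
  have h1 := congrFun (iteratedFDeriv_comp_const_smul (n + 1 : ℝ)⁻¹
    (contDiff_cutoff (d := d) 0 (k := i))) x
  change iteratedFDeriv ℝ i (dilatedCutoff n) x = _ at h1
  rw [h1, norm_smul, norm_pow, Real.norm_of_nonneg (by positivity)]
  calc (n + 1 : ℝ)⁻¹ ^ i * ‖iteratedFDeriv ℝ i (cutoff 0) ((n + 1 : ℝ)⁻¹ • x)‖ ≤ 1 * M i :=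
        mul_le_mul (pow_le_one₀ (by positivity) ha) (hM i _) (norm_nonneg _) zero_le_one
    _ ≤ _ := by
      rw [one_mul]
      exact Finset.single_le_sum (fun i _ => hM0 i) (Finset.mem_range.2 (by omega))

theorem norm_gradient_mul_le_and_norm_iteratedFDeriv_mul_le {ζ : Ed d → ℝ} {M : ℝ} {x : Ed d}
    (hζ : ContDiff ℝ 2 ζ) (hψ : ContDiff ℝ 2 ψ) (hM : ∀ i ≤ 2, ‖iteratedFDeriv ℝ i ζ x‖ ≤ M) :
    ‖gradient (fun y => ζ y * ψ y) x‖ ≤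
        M * (|ψ x| + ‖gradient ψ x‖ + ‖iteratedFDeriv ℝ 2 ψ x‖) ∧
      ‖iteratedFDeriv ℝ 2 (fun y => ζ y * ψ y) x‖ ≤
        2 * M * (|ψ x| + ‖gradient ψ x‖ + ‖iteratedFDeriv ℝ 2 ψ x‖) := by
  have h1 := norm_iteratedFDeriv_mul_le hζ hψ x (n := 1) (by norm_num)
  have h2 := norm_iteratedFDeriv_mul_le hζ hψ x (n := 2) (by norm_num)
  have e0 : ‖iteratedFDeriv ℝ 0 ψ x‖ = |ψ x| := norm_iteratedFDeriv_zero
  have e1 : ‖iteratedFDeriv ℝ 1 ψ x‖ = ‖fderiv ℝ ψ x‖ := norm_iteratedFDeriv_one _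
  norm_num [Finset.sum_range_succ, norm_iteratedFDeriv_one, show ‖iteratedFDeriv ℝ (1 - 1) ψ x‖ = _
    from e0, show ‖iteratedFDeriv ℝ (2 - 1) ψ x‖ = _ from e1,
    show ‖iteratedFDeriv ℝ (2 - 2) ψ x‖ = _ from e0] at h1 h2
  have m0 := hM 0 (by norm_num)
  have m1 := hM 1 (by norm_num)
  have m2 := hM 2 le_rfl
  rw [norm_iteratedFDeriv_zero, Real.norm_eq_abs] at m0
  rw [norm_iteratedFDeriv_one] at m1
  simp only [norm_gradient_eq]
  have hM0 : 0 ≤ M := (abs_nonneg _).trans m0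
  have p0 := abs_nonneg (ψ x)
  have p1 := norm_nonneg (fderiv ℝ ψ x)
  have p2 := norm_nonneg (iteratedFDeriv ℝ 2 ψ x)
  have a1 := mul_le_mul_of_nonneg_right m0 p1
  have a2 := mul_le_mul_of_nonneg_right m1 p0
  have a3 := mul_le_mul_of_nonneg_right m0 p2
  have a4 := mul_le_mul_of_nonneg_right m1 p1
  have a5 := mul_le_mul_of_nonneg_right m2 p0
  have q0 := mul_nonneg hM0 p0
  have q1 := mul_nonneg hM0 p1
  have q2 := mul_nonneg hM0 p2
  constructor <;> nlinarith

/-- The stationary equation extends from compactly supported functions to functions of controlled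
growth. -/
theorem integral_Lop_eq_zero_of_growth (hA : IsElliptic A K₁ K₂) (hV1 : ∀ x, 1 ≤ V x)
    (hγ : γ ∈ Ioc (0 : ℝ) (1 / 2)) (hσ : memPV V σ) (hB : Measurable B) {Cb : ℝ}
    (hCb : ∀ x, ‖B x‖ ≤ Cb * V x ^ (1 - γ))
    (hst : ∀ φ, ContDiff ℝ 2 φ → HasCompactSupport φ → ∫ x, Lop A B φ x ∂σ = 0)
    (hψ : ContDiff ℝ 2 ψ) (hg : GrowthW (fun x => V x ^ γ) ψ) : ∫ x, Lop A B ψ x ∂σ = 0 := by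
  obtain ⟨M, hM0, hM⟩ := exists_norm_iteratedFDeriv_dilatedCutoff_le (d := d)
  obtain ⟨M', hM'⟩ := hg
  have hlim : Tendsto (fun n => ∫ x, Lop A B (fun y => dilatedCutoff n y * ψ y) x ∂σ) atTop
      (𝓝 (∫ x, Lop A B ψ x ∂σ)) := by
    refine tendsto_integral_of_dominated_convergence
      (fun x => (d ^ 2 * (2 * K₁) * (2 * M * |M'|) + |Cb| * (M * |M'|)) * V x)
      (fun n => (measurable_Lop hA.continuous_apply hB
        ((contDiff_dilatedCutoff n).mul hψ)).aestronglyMeasurable)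
      (hσ.2.const_mul _) (fun n => Eventually.of_forall fun x => ?_)
      (Eventually.of_forall fun x => ?_)
    · have hVx := hV1 x
      have hV0 : 0 < V x := by linarith
      obtain ⟨h1, h2⟩ := norm_gradient_mul_le_and_norm_iteratedFDeriv_mul_le
        (contDiff_dilatedCutoff n) hψ (fun i hi => hM i hi n x)
      have hG : |ψ x| + ‖gradient ψ x‖ + ‖iteratedFDeriv ℝ 2 ψ x‖ ≤ |M'| * V x ^ γ :=
        (hM' x).trans (mul_le_mul_of_nonneg_right (le_abs_self _) (by positivity))
      have hγV : V x ^ γ ≤ V x := rpow_exponent_le_self (by linarith [hγ.2]) hVx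
      have h3 : ‖gradient (fun y => dilatedCutoff n y * ψ y) x‖ ≤ M * |M'| * V x ^ γ := by
        rw [mul_assoc]; exact h1.trans (mul_le_mul_of_nonneg_left hG hM0)
      have h4 : ‖iteratedFDeriv ℝ 2 (fun y => dilatedCutoff n y * ψ y) x‖ ≤ 2 * M * |M'| * V x := by
        rw [mul_assoc (2 * M)]
        exact h2.trans (mul_le_mul_of_nonneg_left
          (hG.trans (mul_le_mul_of_nonneg_left hγV (abs_nonneg _))) (by positivity))
      have h5 : ‖B x‖ ≤ |Cb| * V x ^ (1 - γ) :=
        (hCb x).trans (mul_le_mul_of_nonneg_right (le_abs_self _) (by positivity))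
      have h6 : V x ^ (1 - γ) * V x ^ γ = V x := by
        rw [← rpow_add hV0]; simp
      rw [Real.norm_eq_abs]
      refine (abs_Lop_le (hA.abs_apply_le x) _).trans ?_
      have hK := hA.pos
      calc _ ≤ d ^ 2 * (2 * K₁) * (2 * M * |M'| * V x)
            + |Cb| * V x ^ (1 - γ) * (M * |M'| * V x ^ γ) :=
            add_le_add (mul_le_mul_of_nonneg_left h4 (by positivity))
              (mul_le_mul h5 h3 (norm_nonneg _) (by positivity))
        _ = d ^ 2 * (2 * K₁) * (2 * M * |M'| * V x)
            + |Cb| * (M * |M'|) * (V x ^ (1 - γ) * V x ^ γ) := by ring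
        _ = _ := by rw [h6]; ring
    · refine tendsto_const_nhds.congr' ?_
      obtain ⟨n₀, hn₀⟩ := exists_nat_ge ‖x‖
      filter_upwards [eventually_ge_atTop n₀] with n hn
      refine (Lop_congr ?_).symm
      have hn' : (n₀ : ℝ) ≤ n := by exact_mod_cast hn
      filter_upwards [ball_mem_nhds x one_pos] with y hy
      rw [dilatedCutoff_eq_one, one_mul]
      have h1 : ‖y‖ ≤ ‖x‖ + ‖y - x‖ := norm_le_norm_add_norm_sub' y x
      rw [mem_ball_iff_norm] at hy
      linarith
  have h0 : ∀ n, ∫ x, Lop A B (fun y => dilatedCutoff n y * ψ y) x ∂σ = 0 := fun n =>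
    hst _ ((contDiff_dilatedCutoff n).mul hψ) (hasCompactSupport_dilatedCutoff n).mul_right
  simp only [h0] at hlim
  exact tendsto_nhds_unique hlim tendsto_const_nhds

theorem memH.integrable {h : Ed d → ℝ} (hh : memH A b V W h) (hWV : ∀ x, W x ≤ V x)
    (hW0 : ∀ x, 0 ≤ W x) (hσ : memPV V σ) : Integrable h σ := by
  obtain ⟨hc, ⟨M, hM⟩, -⟩ := hh
  refine (hσ.2.const_mul |M|).mono' hc.aestronglyMeasurable (Eventually.of_forall fun x => ?_)
  exact (hM x).trans ((mul_le_mul_of_nonneg_right (le_abs_self _) (hW0 x)).trans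
    (mul_le_mul_of_nonneg_left (hWV x) (abs_nonneg _)))

/-- A stationary measure of the equation linearised at `μ` has the same `ℋ`-data as `μ`. -/
theorem agreeH_of_linear_stationary (hA : IsElliptic A K₁ K₂) (hV1 : ∀ x, 1 ≤ V x)
    (hγ : γ ∈ Ioc (0 : ℝ) (1 / 2)) {μ : Measure (Ed d)} (hμ : memPV V μ) (hσ : memPV V σ)
    (hB : Measurable fun x => b x μ) {Cb : ℝ} (hCb : ∀ x, ‖b x μ‖ ≤ Cb * V x ^ (1 - γ))
    (hst : ∀ φ, ContDiff ℝ 2 φ → HasCompactSupport φ → ∫ x, Lop A (fun y => b y μ) φ x ∂σ = 0) :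
    AgreeH A b V (fun x => V x ^ γ) σ μ := by
  intro h hh
  have := hσ.1
  have := hμ.1
  have hi : ∀ τ, memPV V τ → Integrable h τ := fun τ hτ => hh.integrable
    (fun x => rpow_exponent_le_self (by linarith [hγ.2]) (hV1 x))
    (fun x => rpow_nonneg (by linarith [hV1 x]) _) hτ
  obtain ⟨-, -, ψ, ⟨hψ, hg, h0⟩, hL⟩ := hh
  obtain ⟨C₁, C₂, hC₁, hC⟩ := hL μ hμ
  have h1 := h0 μ hμ
  have h2 := integral_Lop_eq_zero_of_growth hA hV1 hγ hσ hB hCb hst hψ hg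
  simp only [hC] at h1 h2
  rw [integral_add ((hi μ hμ).const_mul C₁) (integrable_const _), integral_const_mul] at h1
  rw [integral_add ((hi σ hσ).const_mul C₁) (integrable_const _), integral_const_mul] at h2
  simp only [integral_const, probReal_univ, one_smul] at h1 h2
  exact mul_left_cancel₀ hC₁ (by linarith)

end Growth

section FixedPoint

variable {A : Ed d → Matrix (Fin d) (Fin d) ℝ} {K₁ K₂ : ℝ} {V W : Ed d → ℝ}
  {b : Ed d → Measure (Ed d) → Ed d} {σ τ : Measure (Ed d)}

/-- The measure `p σ + q τ`. -/
def convexComb (p q : ℝ) (σ τ : Measure (Ed d)) : Measure (Ed d) :=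
  ENNReal.ofReal p • σ + ENNReal.ofReal q • τ

theorem isProbabilityMeasure_convexComb [IsProbabilityMeasure σ] [IsProbabilityMeasure τ]
    {p q : ℝ} (hp : 0 ≤ p) (hq : 0 ≤ q) (hpq : p + q = 1) :
    IsProbabilityMeasure (convexComb p q σ τ) :=
  ⟨by simp [convexComb, ← ENNReal.ofReal_add hp hq, hpq]⟩

theorem integrable_convexComb {f : Ed d → ℝ} (p q : ℝ) (hσ : Integrable f σ) (hτ : Integrable f τ) :
    Integrable f (convexComb p q σ τ) :=
  (hσ.smul_measure ENNReal.ofReal_ne_top).add_measure (hτ.smul_measure ENNReal.ofReal_ne_top)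

theorem integral_convexComb {f : Ed d → ℝ} {p q : ℝ} (hp : 0 ≤ p) (hq : 0 ≤ q)
    (hσ : Integrable f σ) (hτ : Integrable f τ) :
    ∫ x, f x ∂convexComb p q σ τ = p * (∫ x, f x ∂σ) + q * ∫ x, f x ∂τ := by
  rw [convexComb, integral_add_measure (hσ.smul_measure ENNReal.ofReal_ne_top)
    (hτ.smul_measure ENNReal.ofReal_ne_top), integral_smul_measure, integral_smul_measure,
    ENNReal.toReal_ofReal hp, ENNReal.toReal_ofReal hq, smul_eq_mul, smul_eq_mul]

theorem ParametrixBound.convexComb (hA : IsElliptic A K₁ K₂) {η θ : Ed d → ℝ} (hη : Continuous η)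
    (hηc : HasCompactSupport η) (hη1 : ∀ x, |η x| ≤ 1) (hθ : Continuous θ)
    (hθc : HasCompactSupport θ) [IsProbabilityMeasure σ] [IsProbabilityMeasure τ] {D : ℝ}
    (hσ : ParametrixBound A η θ D σ) (hτ : ParametrixBound A η θ D τ) {p q : ℝ} (hp : 0 ≤ p)
    (hq : 0 ≤ q) (hpq : p + q = 1) : ParametrixBound A η θ D (convexComb p q σ τ) := by
  intro f hf hf1 t ht
  have i : ∀ g : Ed d → ℝ, Continuous g → ∀ ρ : Measure (Ed d), IsProbabilityMeasure ρ →
      Integrable (fun x => η x * g x) ρ := fun g hg ρ _ =>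
    (hη.mul hg).integrable_of_hasCompactSupport hηc.mul_right
  have hs : ∀ y, smoothing A η (_root_.convexComb p q σ τ) t y =
      p * smoothing A η σ t y + q * smoothing A η τ t y := fun y =>
    integral_convexComb hp hq (i _ (continuous_parametrix_left A t y) _ inferInstance)
      (i _ (continuous_parametrix_left A t y) _ inferInstance)
  have h1 : ∫ x, η x * gaussMass A x * f x ∂_root_.convexComb p q σ τ =
      p * (∫ x, η x * gaussMass A x * f x ∂σ) + q * ∫ x, η x * gaussMass A x * f x ∂τ := by
    simp only [mul_assoc]
    exact integral_convexComb hp hq (i _ ((continuous_gaussMass hA).mul hf) _ inferInstance)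
      (i _ ((continuous_gaussMass hA).mul hf) _ inferInstance)
  have j : ∀ ρ : Measure (Ed d), IsProbabilityMeasure ρ →
      Integrable fun y => θ y * f y * smoothing A η ρ t y := fun ρ _ =>
    integrable_cutoff_mul_smoothing hA hη hη1 hθ hθc ρ ht.1 hf.measurable hf1
  have h2 : ∫ y, θ y * f y * smoothing A η (_root_.convexComb p q σ τ) t y =
      p * (∫ y, θ y * f y * smoothing A η σ t y) + q * ∫ y, θ y * f y * smoothing A η τ t y := by
    rw [← integral_const_mul, ← integral_const_mul,
      ← integral_add ((j σ inferInstance).const_mul p) ((j τ inferInstance).const_mul q)]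
    refine integral_congr_ae (Eventually.of_forall fun y => ?_)
    simp only [hs]; ring
  rw [h1, h2]
  have a := abs_le.1 (hσ f hf hf1 t ht)
  have c := abs_le.1 (hτ f hf hf1 t ht)
  have hD : D * √t = p * (D * √t) + q * (D * √t) := by rw [← add_mul, hpq, one_mul]
  rw [hD, abs_le]
  constructor
  · linarith [mul_le_mul_of_nonneg_left a.1 hp, mul_le_mul_of_nonneg_left c.1 hq]
  · linarith [mul_le_mul_of_nonneg_left a.2 hp, mul_le_mul_of_nonneg_left c.2 hq]

/-- Measurable functions bounded by the weight. -/
abbrev WeightBall (W : Ed d → ℝ) : Type := {f : Ed d → ℝ // Measurable f ∧ ∀ x, |f x| ≤ W x}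

theorem WeightBall.integrable (hWV : ∀ x, W x ≤ V x) (hσ : memPV V σ) (f : WeightBall W) :
    Integrable f.1 σ :=
  hσ.2.mono' f.2.1.aestronglyMeasurable
    (Eventually.of_forall fun x => (f.2.2 x).trans (hWV x))

theorem exists_lp_eq_integral (hWV : ∀ x, W x ≤ V x) (hσ : memPV V σ) :
    ∃ x : lp (fun _ : WeightBall W => ℝ) ∞, ∀ f, x f = ∫ y, f.1 y ∂σ := by
  refine ⟨⟨fun f => ∫ y, f.1 y ∂σ, memℓp_infty ⟨∫ y, V y ∂σ, ?_⟩⟩, fun f => rfl⟩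
  rintro _ ⟨f, rfl⟩
  exact norm_integral_le_of_norm_le hσ.2
    (Eventually.of_forall fun x => (f.2.2 x).trans (hWV x))

/-- A Kakutani type fixed point principle for possibly discontinuous self-maps of a set of
probability measures which is convex and compact for the weighted total variation distance. -/
theorem exists_approximate_fixedPoint (hWV : ∀ x, W x ≤ V x) {P : Measure (Ed d) → Prop}
    (hP : ∀ σ, P σ → memPV V σ)
    (hconv : ∀ σ τ, P σ → P τ → ∀ p q : ℝ, 0 ≤ p → 0 ≤ q → p + q = 1 → P (convexComb p q σ τ))
    (hcomp : ∀ σs : ℕ → Measure (Ed d), (∀ n, P (σs n)) → ∃ σ, P σ ∧ ∃ s : ℕ → ℕ, StrictMono s ∧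
      ∀ ε > 0, ∀ᶠ m in atTop, ∀ f : WeightBall W, |∫ x, f.1 x ∂σs (s m) - ∫ x, f.1 x ∂σ| ≤ ε)
    (hne : ∃ σ, P σ) {Φ : Measure (Ed d) → Measure (Ed d)} (hΦ : ∀ σ, P σ → P (Φ σ)) :
    ∃ μ, P μ ∧ ∀ (g : WeightBall W) (r : ℝ), (∃ ρ > 0, ∀ σ, P σ →
        (∀ f : WeightBall W, |∫ x, f.1 x ∂σ - ∫ x, f.1 x ∂μ| ≤ ρ) → |∫ x, g.1 x ∂Φ σ| ≤ r) →
      |∫ x, g.1 x ∂μ| ≤ r := by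
  classical
  let K : Set (lp (fun _ : WeightBall W => ℝ) ∞) := {x | ∃ σ, P σ ∧ ∀ f, x f = ∫ y, f.1 y ∂σ}
  have hK : ∀ x ∈ K, ∃ σ, P σ ∧ ∀ f, x f = ∫ y, f.1 y ∂σ := fun x hx => hx
  choose! m hmP hm using hK
  have hex : ∀ σ, P σ → ∃ x : lp (fun _ : WeightBall W => ℝ) ∞, ∀ f, x f = ∫ y, f.1 y ∂σ :=
    fun σ hσ => exists_lp_eq_integral hWV (hP σ hσ)
  choose! e he using hex
  have heK : ∀ σ, P σ → e σ ∈ K := fun σ hσ => ⟨σ, hσ, he σ hσ⟩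
  have hKc : IsCompact K := by
    refine IsSeqCompact.isCompact fun xs hxs => ?_
    obtain ⟨σ, hσ, s, hs, hlim⟩ := hcomp (fun n => m (xs n)) fun n => hmP _ (hxs n)
    refine ⟨e σ, heK σ hσ, s, hs, ?_⟩
    rw [Metric.tendsto_nhds]
    intro ε hε
    filter_upwards [hlim (ε / 2) (by positivity)] with n hn
    rw [dist_eq_norm]
    refine (lp.norm_le_of_forall_le (C := ε / 2) (by positivity) fun f => ?_).trans_lt (by linarith)
    simpa [hm _ (hxs (s n)), he σ hσ] using hn f
  have hKconv : Convex ℝ K := by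
    rintro x ⟨σ, hσ, hx⟩ y ⟨τ, hτ, hy⟩ p q hp hq hpq
    refine ⟨convexComb p q σ τ, hconv σ τ hσ hτ p q hp hq hpq, fun f => ?_⟩
    rw [integral_convexComb hp hq (f.integrable hWV (hP σ hσ)) (f.integrable hWV (hP τ hτ)),
      ← hx, ← hy]
    rfl
  have hKne : K.Nonempty := hne.elim fun σ hσ => ⟨e σ, heK σ hσ⟩
  have hmaps : MapsTo (fun x => e (Φ (m x))) K K := fun x hx => heK _ (hΦ _ (hmP x hx))
  choose xs hxs hxh using fun n : ℕ =>
    exists_mem_convexHull_image_ball hKc hKconv hKne hmaps (ε := 1 / ((n : ℝ) + 1)) (by positivity)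
  obtain ⟨x, hx, s, hs, hlim⟩ := hKc.tendsto_subseq hxs
  refine ⟨m x, hmP x hx, fun g r ⟨ρ, hρ, h⟩ => ?_⟩
  rw [← hm x hx g]
  have happ : ∀ z : lp (fun _ : WeightBall W => ℝ) ∞, |z g| ≤ ‖z‖ := fun z =>
    lp.norm_apply_le_norm ENNReal.top_ne_zero z g
  have hg : Tendsto (fun n => xs (s n) g) atTop (𝓝 (x g)) := by
    rw [tendsto_iff_norm_sub_tendsto_zero] at hlim ⊢
    refine squeeze_zero (fun n => norm_nonneg _) (fun n => ?_) hlim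
    simpa using happ (xs (s n) - x)
  refine le_of_tendsto hg.abs ?_
  have h1 : Tendsto (fun n => 1 / ((s n : ℝ) + 1)) atTop (𝓝 0) :=
    tendsto_one_div_add_atTop_nhds_zero_nat.comp hs.tendsto_atTop
  filter_upwards [h1.eventually_lt_const (half_pos hρ),
    (Metric.tendsto_nhds.1 hlim) _ (half_pos hρ)] with n hn1 hn2
  have hcv : Convex ℝ {z : lp (fun _ : WeightBall W => ℝ) ∞ | |z g| ≤ r} := by
    intro y hy z hz p q hp hq hpq
    simp only [Set.mem_ofPred_eq, abs_le] at hy hz ⊢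
    simp only [lp.coeFn_add, lp.coeFn_smul, Pi.add_apply, Pi.smul_apply, smul_eq_mul]
    constructor <;> nlinarith
  refine convexHull_min ?_ hcv (hxh (s n))
  rintro _ ⟨y, ⟨hyK, hyb⟩, rfl⟩
  change |e (Φ (m y)) g| ≤ r
  rw [he _ (hΦ _ (hmP y hyK))]
  refine h (m y) (hmP y hyK) fun f => ?_
  rw [← hm y hyK, ← hm x hx]
  have h2 : ‖y - x‖ ≤ ρ := by
    rw [← dist_eq_norm]
    have := dist_triangle y (xs (s n)) x
    rw [mem_ball] at hyb
    simp only [Function.comp] at hn2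
    linarith
  refine le_trans ?_ h2
  simpa using lp.norm_apply_le_norm ENNReal.top_ne_zero (y - x) f

theorem tendsto_wDist_of_forall_abs_le {σs : ℕ → Measure (Ed d)} {μ : Measure (Ed d)}
    {ε : ℕ → ℝ} (hW0 : ∀ x, 0 ≤ W x) (hε : Tendsto ε atTop (𝓝 0))
    (h : ∀ n, ∀ f : WeightBall W, |∫ x, f.1 x ∂σs n - ∫ x, f.1 x ∂μ| ≤ ε n) :
    Tendsto (fun n => wDist W (σs n) μ) atTop (𝓝 0) := by
  let f₀ : WeightBall W := ⟨fun _ => 0, measurable_const, fun x => by simpa using hW0 x⟩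
  have : Nonempty (WeightBall W) := ⟨f₀⟩
  refine squeeze_zero (fun n => ?_) (fun n => ciSup_le fun f => (le_abs_self _).trans (h n f)) hε
  have hb : BddAbove (range fun f : WeightBall W => ∫ x, f.1 x ∂σs n - ∫ x, f.1 x ∂μ) :=
    ⟨ε n, by rintro _ ⟨f, rfl⟩; exact (le_abs_self _).trans (h n f)⟩
  refine le_trans ?_ (le_ciSup hb f₀)
  simp [f₀]

theorem isLowerOrder_rpow {γ : ℝ} (hγ : γ < 1) (hV1 : ∀ x, 1 ≤ V x)
    (hVinf : Tendsto V (cocompact (Ed d)) atTop) : IsLowerOrder (fun x => V x ^ γ) V := by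
  intro ε hε
  have hlim : Tendsto (fun x => V x ^ (1 - γ)) (cocompact (Ed d)) atTop :=
    (tendsto_rpow_atTop (by linarith)).comp hVinf
  obtain ⟨n, hn⟩ := isLowerOrder_one hlim ε hε
  refine ⟨n, fun x hx => ?_⟩
  have hV0 : 0 < V x := by linarith [hV1 x]
  have h := mul_le_mul_of_nonneg_right (hn x hx) (rpow_nonneg hV0.le γ)
  rwa [one_mul, mul_assoc, ← rpow_add hV0, sub_add_cancel, rpow_one] at h

theorem tendsto_integral_of_weightBall {σs : ℕ → Measure (Ed d)} {h : Ed d → ℝ} {M : ℝ}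
    (hh : Measurable h) (hM : ∀ x, |h x| ≤ M * W x) (hW0 : ∀ x, 0 ≤ W x)
    (hlim : ∀ ε > 0, ∀ᶠ m in atTop, ∀ f : WeightBall W,
      |∫ x, f.1 x ∂σs m - ∫ x, f.1 x ∂σ| ≤ ε) :
    Tendsto (fun m => ∫ x, h x ∂σs m) atTop (𝓝 (∫ x, h x ∂σ)) := by
  have hM1 : 0 < |M| + 1 := by positivity
  rw [Metric.tendsto_nhds]
  intro ε hε
  filter_upwards [hlim (ε / (2 * (|M| + 1))) (by positivity)] with m hm
  have h1 := hm ⟨fun x => h x / (|M| + 1), hh.div_const _, fun x => by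
    rw [abs_div, abs_of_pos hM1, div_le_iff₀ hM1]
    nlinarith [hM x, hW0 x, le_abs_self M]⟩
  simp only [integral_div] at h1
  rw [← sub_div, abs_div, abs_of_pos hM1, div_le_iff₀ hM1] at h1
  rw [Real.dist_eq]
  refine h1.trans_lt ?_
  field_simp; linarith

/-- `L φ` is bounded for compactly supported `φ` and locally bounded drift. -/
theorem exists_abs_Lop_le (hA : IsElliptic A K₁ K₂) {B : Ed d → Ed d} {φ : Ed d → ℝ}
    (hφ : ContDiff ℝ 2 φ) (hφc : HasCompactSupport φ) {N : ℝ → ℝ}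
    (hN : ∀ R > 0, ∀ x, ‖x‖ ≤ R → ‖B x‖ ≤ N R) : ∃ M > 0, ∀ x, |Lop A B φ x| ≤ M := by
  obtain ⟨R, hR0, hR⟩ := hφc.isCompact.isBounded.exists_pos_norm_le
  have hc : Continuous fun x => d ^ 2 * (2 * K₁) * ‖iteratedFDeriv ℝ 2 φ x‖
      + N R * ‖gradient φ x‖ := by
    have h1 := hφ.continuous_iteratedFDeriv (m := 2) le_rfl
    have h2 := hφ.continuous_gradient
    fun_prop
  obtain ⟨M, hM⟩ := (hφc.isCompact.image hc).isBounded.exists_norm_le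
  refine ⟨max M 1, by positivity, fun x => ?_⟩
  by_cases hx : x ∈ tsupport φ
  · have h1 := abs_Lop_le (B := B) (hA.abs_apply_le x) φ
    have h2 := mul_le_mul_of_nonneg_right (hN R hR0 x (hR x hx)) (norm_nonneg (gradient φ x))
    have h3 := (le_abs_self _).trans (hM _ (mem_image_of_mem _ hx))
    exact (h1.trans ((add_le_add_right h2 _).trans h3)).trans (le_max_left _ _)
  · rw [Lop_eq_zero_of_notMem_tsupport A _ hx, abs_zero]; positivity

/-- Closeness of `σ` to `μ` makes the integrals of `L_μ φ` small against measures stationary for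
the equation linearised at `σ`. -/
theorem exists_abs_integral_Lop_le (hA : IsElliptic A K₁ K₂) (hW0 : ∀ x, 0 ≤ W x)
    (hbBorel : ∀ μ, Measurable fun x => b x μ) {μ : Measure (Ed d)}
    {P : Measure (Ed d) → Prop} {Φ : Measure (Ed d) → Measure (Ed d)}
    (hΦ1 : ∀ σ, P σ → IsProbabilityMeasure (Φ σ))
    (hΦ : ∀ σ, P σ → ∀ φ, ContDiff ℝ 2 φ → HasCompactSupport φ →
      ∫ x, Lop A (fun y => b y σ) φ x ∂Φ σ = 0)
    {N : ℝ → ℝ} (hN : ∀ R > 0, ∀ x, ‖x‖ ≤ R → ‖b x μ‖ ≤ N R)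
    (hNP : ∀ σ, P σ → ∀ R > 0, ∀ x, ‖x‖ ≤ R → ‖b x σ‖ ≤ N R)
    (hCont : ∀ σs : ℕ → Measure (Ed d), (∀ n, P (σs n)) →
      Tendsto (fun n => wDist W (σs n) μ) atTop (𝓝 0) → ∀ R > 0,
        TendstoUniformlyOn (fun n x => b x (σs n)) (fun x => b x μ) atTop (closedBall 0 R))
    {φ : Ed d → ℝ} (hφ : ContDiff ℝ 2 φ) (hφc : HasCompactSupport φ) {r : ℝ} (hr : 0 < r) :
    ∃ ρ > 0, ∀ σ, P σ → (∀ f : WeightBall W, |∫ x, f.1 x ∂σ - ∫ x, f.1 x ∂μ| ≤ ρ) →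
      |∫ x, Lop A (fun y => b y μ) φ x ∂Φ σ| ≤ r := by
  by_contra! hcon
  choose σs hσP hσ hlt using fun n : ℕ => hcon (1 / ((n : ℝ) + 1)) (by positivity)
  obtain ⟨R, hR0, hR⟩ := hφc.isCompact.isBounded.exists_pos_norm_le
  obtain ⟨G, hG⟩ := hφ.continuous_gradient.bounded_above_of_compact_support (by
    refine HasCompactSupport.of_support_subset_isCompact hφc.isCompact fun x hx => ?_
    by_contra hxs
    refine hx ?_
    rw [gradient, (notMem_tsupport_iff_eventuallyEq.1 hxs).fderiv_eq]; simp)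
  have hG0 : 0 ≤ G := (norm_nonneg _).trans (hG 0)
  have hu := hCont σs hσP
    (tendsto_wDist_of_forall_abs_le hW0 tendsto_one_div_add_atTop_nhds_zero_nat hσ) R hR0
  obtain ⟨n, hn⟩ := (Metric.tendstoUniformlyOn_iff.1 hu (r / (G + 1)) (by positivity)).exists
  have := hΦ1 _ (hσP n)
  have i1 := integrable_Lop hA (hbBorel μ) hφ hφc (fun x hx => hN R hR0 x (hR x hx)) (Φ (σs n))
  have i2 := integrable_Lop hA (hbBorel (σs n)) hφ hφc
    (fun x hx => hNP _ (hσP n) R hR0 x (hR x hx)) (Φ (σs n))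
  refine (hlt n).not_ge ?_
  have h0 := hΦ _ (hσP n) φ hφ hφc
  rw [← sub_zero (∫ x, Lop A (fun y => b y μ) φ x ∂Φ (σs n)), ← h0, ← integral_sub i1 i2,
    ← Real.norm_eq_abs]
  refine (norm_integral_le_of_norm_le_const (C := r) (Eventually.of_forall fun x => ?_)).trans
    (by simp)
  by_cases hx : x ∈ tsupport φ
  · rw [Lop_eq_add_inner A (fun y => b y μ), Lop_eq_add_inner A (fun y => b y (σs n)),
      add_sub_add_left_eq_sub, ← inner_sub_left]
    have h1 := hn x (mem_closedBall_zero_iff.2 (hR x hx))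
    rw [dist_eq_norm] at h1
    refine (norm_inner_le_norm _ _).trans ?_
    calc _ ≤ r / (G + 1) * G := mul_le_mul h1.le (hG x) (norm_nonneg _) (by positivity)
      _ ≤ r := by rw [div_mul_eq_mul_div, div_le_iff₀ (by positivity)]; nlinarith
  · rw [Lop_eq_zero_of_notMem_tsupport A _ hx, Lop_eq_zero_of_notMem_tsupport A _ hx]
    simpa using hr.le

end FixedPoint

/-- **Proposition 6** (existence of stationary solutions with prescribed
`ℋ`-data). -/
theorem stmt9_existence_stationary
    (A : Ed d → Matrix (Fin d) (Fin d) ℝ) (K₁ K₂ : ℝ)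
    (hK₁ : 0 < K₁) (hK₂ : 0 < K₂)
    (hAsymm : ∀ x, (A x).IsSymm)
    (hAlow : ∀ x (v : Ed d), K₁⁻¹ * ‖v‖ ^ 2 ≤ ∑ i, ∑ j, A x i j * v i * v j)
    (hAup : ∀ x (v : Ed d), ∑ i, ∑ j, A x i j * v i * v j ≤ K₁ * ‖v‖ ^ 2)
    (hALip : ∀ x y i j, |A x i j - A y i j| ≤ K₂ * ‖x - y‖)
    (V : Ed d → ℝ) (hV : ContDiff ℝ 2 V) (hV1 : ∀ x, 1 ≤ V x)
    (hVinf : Tendsto V (cocompact (Ed d)) atTop)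
    (γ : ℝ) (hγ : γ ∈ Set.Ioc (0:ℝ) (1/2))
    (W : Ed d → ℝ) (hW : W = fun x => V x ^ γ)
    (b : Ed d → Measure (Ed d) → Ed d)
    (hbBorel : ∀ μ, Measurable (fun x => b x μ))
    (hbGrow : ∀ μ : Measure (Ed d), memPV V μ →
      ∃ Cb : ℝ, ∀ x, ‖b x μ‖ ≤ Cb * V x ^ (1 - γ))
    -- the Lyapunov-type and local boundedness hypothesis
    (hMain : ∀ ν : Measure (Ed d), memPV V ν →
      ∃ δ ∈ Set.Ioo (0:ℝ) 1, ∃ C > (0:ℝ), ∃ Λ > (0:ℝ), ∃ N : ℝ → ℝ → ℝ,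
        (∀ α R, 0 < N α R) ∧
        ∀ α : ℝ, 0 < α → ∀ μ : Measure (Ed d),
          memPV V μ → (∫ x, V x ∂μ) ≤ α → AgreeH A b V W μ ν →
          (∀ x, Lop A (fun y => b y μ) V x ≤ (1 - δ) * C + Λ * (δ * α - V x)) ∧
          (∀ R : ℝ, 0 < R → ∀ x : Ed d, ‖x‖ ≤ R → ‖b x μ‖ ≤ N α R))
    -- continuity of the drift along `‖·‖_W`-convergent sequences
    (hCont : ∀ α : ℝ, 0 < α → ∀ μs : ℕ → Measure (Ed d), ∀ μ : Measure (Ed d),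
      (∀ n, memPV V (μs n) ∧ (∫ x, V x ∂(μs n)) ≤ α) →
      memPV V μ → (∫ x, V x ∂μ) ≤ α →
      Tendsto (fun n => wDist W (μs n) μ) atTop (nhds 0) →
      ∀ R : ℝ, 0 < R →
        TendstoUniformlyOn (fun n x => b x (μs n)) (fun x => b x μ) atTop
          (Metric.closedBall (0 : Ed d) R)) :
    ∀ ν : Measure (Ed d), memPV V ν →
      ∃ μ : Measure (Ed d), memPV V μ ∧
        IsStationarySol A (fun y => b y μ) μ ∧
        AgreeH A b V W μ ν := by
  intro ν hν
  subst hW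
  have hA : IsElliptic A K₁ K₂ := ⟨hK₁, hK₂, hAsymm, hAlow, hAup, hALip⟩
  obtain ⟨δ, hδ, C, hC, Λ, hΛ, N, hN0, hLyap⟩ := hMain ν hν
  have hγ1 : γ < 1 := by linarith [hγ.2]
  set W : Ed d → ℝ := fun x => V x ^ γ with hWdef
  have hV0 : ∀ x, 0 < V x := fun x => by linarith [hV1 x]
  have hW1 : ∀ x, 1 ≤ W x := fun x => one_le_rpow (hV1 x) hγ.1.le
  have hW0 : ∀ x, 0 ≤ W x := fun x => by linarith [hW1 x]
  have hWV : ∀ x, W x ≤ V x := fun x => rpow_exponent_le_self hγ1.le (hV1 x)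
  have hWc : Continuous W := hV.continuous.rpow_const fun x => Or.inl (hV0 x).ne'
  have hδ1 : 0 < 1 - δ := by linarith [hδ.2]
  obtain ⟨α, hαν, hαδ, hαC⟩ : ∃ α : ℝ, ∫ x, V x ∂ν ≤ α ∧ V 0 / δ ≤ α ∧ C / Λ + 1 / (1 - δ) ≤ α :=
    ⟨max (∫ x, V x ∂ν) (max (V 0 / δ) (C / Λ + 1 / (1 - δ))), le_max_left _ _,
      (le_max_left _ _).trans (le_max_right _ _), (le_max_right _ _).trans (le_max_right _ _)⟩
  have hα0 : 0 < α := (div_pos (hV0 0) hδ.1).trans_le hαδ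
  have hcV : Λ * V 0 ≤ (1 - δ) * C + Λ * (δ * α) := by
    rw [div_le_iff₀' hδ.1] at hαδ
    nlinarith [mul_le_mul_of_nonneg_left hαδ hΛ.le]
  have hcα : (1 - δ) * C + Λ * (δ * α) + Λ ≤ Λ * α := by
    have h1 := mul_le_mul_of_nonneg_left hαC (mul_pos hΛ hδ1).le
    have h2 : Λ * (1 - δ) * (C / Λ + 1 / (1 - δ)) = (1 - δ) * C + Λ := by
      field_simp
    linarith
  choose D _ hD using fun n : ℕ => exists_parametrixBound (d := d) hA (contDiff_cutoff n (k := 2))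
    (hasCompactSupport_cutoff n) (abs_cutoff_le_one n) (continuous_cutoff (n + 1))
    (hasCompactSupport_cutoff (n + 1)) (abs_cutoff_le_one (n + 1)) (fun x => cutoff_succ_eq_one)
    (hN0 α (n + 3)).le hΛ.le
  let P : Measure (Ed d) → Prop := fun σ =>
    memPV V σ ∧ ∫ x, V x ∂σ ≤ α ∧ LocalBounds A D σ ∧ AgreeH A b V W σ ν
  have hlin : ∀ μ, memPV V μ → ∫ x, V x ∂μ ≤ α → AgreeH A b V W μ ν → ∃ σ, P σ ∧
      ∀ φ, ContDiff ℝ 2 φ → HasCompactSupport φ → ∫ x, Lop A (fun y => b y μ) φ x ∂σ = 0 := by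
    intro μ hμ hμα hμH
    obtain ⟨hL, hloc⟩ := hLyap α hα0 μ hμ hμα hμH
    obtain ⟨σ, hσ, hσα, hσD, hst⟩ := exists_linear_stationary hA hV hV1 hVinf (hbBorel μ) hloc hΛ
      (fun x => (hL x).trans_eq (by ring)) hcV hcα hD
    obtain ⟨Cb, hCb⟩ := hbGrow μ hμ
    have hH := agreeH_of_linear_stationary hA hV1 hγ hμ hσ (hbBorel μ) hCb hst
    exact ⟨σ, ⟨hσ, hσα, hσD, fun h hh => (hH h hh).trans (hμH h hh)⟩, hst⟩
  have hΦ : ∀ μ, P μ → ∃ σ, P σ ∧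
      ∀ φ, ContDiff ℝ 2 φ → HasCompactSupport φ → ∫ x, Lop A (fun y => b y μ) φ x ∂σ = 0 :=
    fun μ hμ => hlin μ hμ.1 hμ.2.1 hμ.2.2.2
  choose! Φ hΦP hΦst using hΦ
  have hconv : ∀ σ τ, P σ → P τ → ∀ p q : ℝ, 0 ≤ p → 0 ≤ q → p + q = 1 →
      P (convexComb p q σ τ) := by
    rintro σ τ ⟨hσ, hσα, hσD, hσH⟩ ⟨hτ, hτα, hτD, hτH⟩ p q hp hq hpq
    have := hσ.1
    have := hτ.1
    refine ⟨⟨isProbabilityMeasure_convexComb hp hq hpq, integrable_convexComb p q hσ.2 hτ.2⟩, ?_,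
      fun n => (hσD n).convexComb hA (continuous_cutoff n) (hasCompactSupport_cutoff n)
        (abs_cutoff_le_one n) (continuous_cutoff (n + 1)) (hasCompactSupport_cutoff (n + 1))
        (hτD n) hp hq hpq, fun h hh => ?_⟩
    · rw [integral_convexComb hp hq hσ.2 hτ.2]
      calc _ ≤ p * α + q * α := add_le_add (mul_le_mul_of_nonneg_left hσα hp)
            (mul_le_mul_of_nonneg_left hτα hq)
        _ = α := by rw [← add_mul, hpq, one_mul]
    · rw [integral_convexComb hp hq (hh.integrable hWV hW0 hσ) (hh.integrable hWV hW0 hτ),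
        hσH h hh, hτH h hh, ← add_mul, hpq, one_mul]
  have hcomp : ∀ σs : ℕ → Measure (Ed d), (∀ n, P (σs n)) → ∃ σ, P σ ∧ ∃ s : ℕ → ℕ,
      StrictMono s ∧ ∀ ε > 0, ∀ᶠ m in atTop, ∀ f : WeightBall W,
        |∫ x, f.1 x ∂σs (s m) - ∫ x, f.1 x ∂σ| ≤ ε := by
    intro σs hσs
    obtain ⟨σ, hσ, hσα, hσD, s, hs, hlim⟩ := exists_subseq_weighted_limit hA hV.continuous hV1 hVinf
      hWc hW0 hWV (isLowerOrder_rpow hγ1 hV1 hVinf) (fun m => (hσs m).1) (fun m => (hσs m).2.1)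
      (fun n => Eventually.of_forall fun m => (hσs m).2.2.1 n)
    have hlim' : ∀ ε > 0, ∀ᶠ m in atTop, ∀ f : WeightBall W,
        |∫ x, f.1 x ∂σs (s m) - ∫ x, f.1 x ∂σ| ≤ ε := fun ε hε =>
      (hlim ε hε).mono fun m hm f => hm f.1 f.2.1 f.2.2
    refine ⟨σ, ⟨hσ, hσα, hσD, fun h hh => ?_⟩, s, hs, hlim'⟩
    obtain ⟨M, hM⟩ := hh.2.1
    have h1 := tendsto_integral_of_weightBall hh.1.measurable hM hW0 hlim'
    simp only [fun m => (hσs (s m)).2.2.2 h hh] at h1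
    exact tendsto_nhds_unique h1 tendsto_const_nhds
  have hne : ∃ σ, P σ := by
    obtain ⟨σ, hσ, -⟩ := hlin ν hν hαν fun _ _ => rfl
    exact ⟨σ, hσ⟩
  obtain ⟨μ, hμ, hfix⟩ := exists_approximate_fixedPoint hWV (fun σ hσ => hσ.1) hconv hcomp hne hΦP
  refine ⟨μ, hμ.1, fun φ hφ => ?_, hμ.2.2.2⟩
  have hφ2 : ContDiff ℝ 2 φ := by exact_mod_cast contDiff_infty.1 hφ.1 2
  have hloc : ∀ σ, P σ → ∀ R > 0, ∀ x, ‖x‖ ≤ R → ‖b x σ‖ ≤ N α R := fun σ hσ =>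
    (hLyap α hα0 σ hσ.1 hσ.2.1 hσ.2.2.2).2
  obtain ⟨M, hM0, hM⟩ := exists_abs_Lop_le (A := A) hA hφ2 hφ.2 (hloc μ hμ)
  let g : WeightBall W := ⟨fun x => Lop A (fun y => b y μ) φ x / M,
    (measurable_Lop hA.continuous_apply (hbBorel μ) hφ2).div_const M, fun x => by
      rw [abs_div, abs_of_pos hM0]
      exact ((div_le_one hM0).2 (hM x)).trans (hW1 x)⟩
  have key : ∀ r > 0, |∫ x, g.1 x ∂μ| ≤ r := fun r hr => hfix g r <| by
    obtain ⟨ρ, hρ, h⟩ := exists_abs_integral_Lop_le hA hW0 hbBorel (fun σ hσ => (hΦP σ hσ).1.1)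
      hΦst (hloc μ hμ) hloc (fun σs hσs hlim => hCont α hα0 σs μ
        (fun n => ⟨(hσs n).1, (hσs n).2.1⟩) hμ.1 hμ.2.1 hlim) hφ2 hφ.2 (mul_pos hr hM0)
    refine ⟨ρ, hρ, fun σ hσ hσμ => ?_⟩
    simp only [g, integral_div]
    rw [abs_div, abs_of_pos hM0, div_le_iff₀ hM0]
    exact h σ hσ hσμ
  have h0 : ∫ x, g.1 x ∂μ = 0 := abs_nonpos_iff.1 (le_of_forall_pos_le_add fun r hr => by
    simpa using key r hr)
  simp only [g, integral_div, div_eq_zero_iff, hM0.ne', or_false] at h0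
  exact h0
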